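/- Let c>0, and let H be a graph with congestion at most c/(9+15c). Then there exists ε>0 such that every ε-sparse, (ε|G|^{1-c}, ε|G|^{1-c})-coherent graph G with |G|>1 contains H. -/

import Mathlib

noncomputable section

namespace PurePairs

open SimpleGraph

variable {V W : Type*}

/-- A pure pair in `G`: a pair of disjoint vertex sets that are complete
or anticomplete to each other. -/
def PurePair (G : SimpleGraph V) (A B : Set V) : Prop :=
  Disjoint A B ∧
    ((∀ a ∈ A, ∀ b ∈ B, G.Adj a b) ∨ (∀ a ∈ A, ∀ b ∈ B, ¬ G.Adj a b))

/-- `G` contains `H`: some induced subgraph of `G` is isomorphic to `H`. -/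
def Contains (G : SimpleGraph V) (H : SimpleGraph W) : Prop :=
  Nonempty (H ↪g G)

/-- The congestion of a graph `H`: the maximum (here: supremum, together with `0`)
of `1 - (|J|-1)/|E(J)|` over all subgraphs `J` of `H` with at least one edge.
If `H` has no edges this is `0`. -/
def congestion (H : SimpleGraph V) : ℝ :=
  sSup ({0} ∪ {x : ℝ | ∃ J : H.Subgraph, J.edgeSet.Nonempty ∧
    x = 1 - ((J.verts.ncard : ℝ) - 1) / (J.edgeSet.ncard : ℝ)})

/-- `A` is anticomplete to `B`: no edges between them. -/
def Anticomplete (G : SimpleGraph V) (A B : Set V) : Prop :=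
  ∀ a ∈ A, ∀ b ∈ B, ¬ G.Adj a b

/-- `A` covers `B`: every vertex of `B` has a neighbour in `A`. -/
def Covers (G : SimpleGraph V) (A B : Set V) : Prop :=
  ∀ b ∈ B, ∃ a ∈ A, G.Adj a b

/-- `G` is `ε`-sparse: every vertex has degree less than `ε|G|`. -/
def EpsSparse (G : SimpleGraph V) [Fintype V] (ε : ℝ) : Prop :=
  ∀ v : V, ((G.neighborSet v).ncard : ℝ) < ε * (Fintype.card V : ℝ)

/-- `G` is `(γ,δ)`-coherent: there is no pair of disjoint anticomplete sets `A`, `B`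
with `|A| ≥ γ` and `|B| ≥ δ`. -/
def Coherent (G : SimpleGraph V) (γ δ : ℝ) : Prop :=
  ¬ ∃ A B : Set V, Disjoint A B ∧ Anticomplete G A B ∧
      γ ≤ (A.ncard : ℝ) ∧ δ ≤ (B.ncard : ℝ)

/-- `N(X)`: the set of vertices with a neighbour in `X`. -/
def nbhd (G : SimpleGraph V) (X : Set V) : Set V :=
  {v | ∃ x ∈ X, G.Adj x v}

/-- A blockade: a family of nonempty pairwise disjoint vertex sets indexed by a
finite set of integers. -/
def IsBlockade (I : Finset ℤ) (A : ℤ → Set V) : Prop :=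
  (∀ i ∈ I, (A i).Nonempty) ∧
    ∀ i ∈ I, ∀ j ∈ I, i ≠ j → Disjoint (A i) (A j)

/-- The blockade `(A i : i ∈ I)` is `(γ,δ)`-divergent. -/
def Divergent (G : SimpleGraph V) (I : Finset ℤ) (A : ℤ → Set V) (γ δ : ℝ) : Prop :=
  ∃ i ∈ I, ∃ j ∈ I, i ≠ j ∧ ∃ X ⊆ A i, ∃ Y ⊆ A j,
    γ * ((A i).ncard : ℝ) ≤ (X.ncard : ℝ) ∧ δ * ((A j).ncard : ℝ) ≤ (Y.ncard : ℝ) ∧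
    Anticomplete G X Y

/-- The blockade `(A i : i ∈ I)` is `τ`-expanding. -/
def Expanding (G : SimpleGraph V) (I : Finset ℤ) (A : ℤ → Set V) (τ : ℝ) : Prop :=
  ∀ i ∈ I, ∀ j ∈ I, i ≠ j → ∀ X ⊆ A i,
    min (τ * (X.ncard : ℝ) / ((A i).ncard : ℝ)) (1/4)
      ≤ (((nbhd G X) ∩ A j).ncard : ℝ) / ((A j).ncard : ℝ)

/-- The linkage of the blockade `(A i : i ∈ I)` is at most `lam`. -/
def LinkageLE (G : SimpleGraph V) (I : Finset ℤ) (A : ℤ → Set V) (lam : ℝ) : Prop :=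
  ∀ i ∈ I, ∀ j ∈ I, i ≠ j → ∀ v ∈ A i,
    ((G.neighborSet v ∩ A j).ncard : ℝ) ≤ lam * ((A j).ncard : ℝ)

/-- The shrinkage of the blockade `(A i : i ∈ I)` is at most `σ`, i.e. its width is at
least `|G|^{1-σ}`. -/
def ShrinkageLE [Fintype V] (I : Finset ℤ) (A : ℤ → Set V) (σ : ℝ) : Prop :=
  ∀ i ∈ I, (Fintype.card V : ℝ) ^ (1 - σ) ≤ ((A i).ncard : ℝ)

/-- `(L 0, …, L k)` is a levelling in `G`. -/
def IsLevelling (G : SimpleGraph V) (L : ℕ → Set V) (k : ℕ) : Prop :=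
  1 ≤ k ∧ (L 0).ncard = 1 ∧
  (∀ i ≤ k, ∀ j ≤ k, i ≠ j → Disjoint (L i) (L j)) ∧
  (∀ i, 1 ≤ i → i ≤ k → Covers G (L (i-1)) (L i)) ∧
  (∀ i, 2 ≤ i → i ≤ k → ∀ h, h + 2 ≤ i → Anticomplete G (L h) (L i))

/-- The levelling `(L 0, …, L k)` reaches `C`, i.e. `(L 0, …, L k, C)` is a levelling. -/
def Reaches (G : SimpleGraph V) (L : ℕ → Set V) (k : ℕ) (C : Set V) : Prop :=
  IsLevelling G (fun i => if i = k + 1 then C else L i) (k + 1)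

/-- The levelling `(L 0, …, L k)` is `(B i : i ∈ I)`-rainbow. -/
def RainbowLevelling (I : Finset ℤ) (B : ℤ → Set V) (L : ℕ → Set V) (k : ℕ) : Prop :=
  ∃ q : ℕ → ℤ, (∀ i ≤ k, q i ∈ I ∧ L i ⊆ B (q i)) ∧
    ∀ i ≤ k, ∀ j ≤ k, q i = q j → i = j

/-- The levelling `(L 0, …, L k)` grades the blockade `(C j : j ∈ J)` (in some order). -/
def Grades (G : SimpleGraph V) (L : ℕ → Set V) (k : ℕ) (J : Finset ℤ) (C : ℤ → Set V) :
    Prop :=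
  Reaches G L k (⋃ j ∈ J, C j) ∧
  ∃ e : ℕ → ℤ, (∀ g < J.card, e g ∈ J) ∧
    (∀ g < J.card, ∀ h < J.card, e g = e h → g = h) ∧
    ∀ g < J.card, ∃ Y ⊆ L k,
      (∀ h, g ≤ h → h < J.card → Covers G Y (C (e h))) ∧
      (∀ h, h < g → Anticomplete G Y (C (e h)))

/-- The levelling `(L 0, …, L k)` grades the blockade `(C j : j ∈ J)` forwards. -/
def GradesFwd (G : SimpleGraph V) (L : ℕ → Set V) (k : ℕ) (J : Finset ℤ) (C : ℤ → Set V) :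
    Prop :=
  Reaches G L k (⋃ j ∈ J, C j) ∧
  ∀ j ∈ J, ∃ Y ⊆ L k,
    (∀ i ∈ J, j ≤ i → Covers G Y (C i)) ∧
    (∀ i ∈ J, i < j → Anticomplete G Y (C i))

/-- The levelling `(L 0, …, L k)` grades the blockade `(C j : j ∈ J)` backwards. -/
def GradesBwd (G : SimpleGraph V) (L : ℕ → Set V) (k : ℕ) (J : Finset ℤ) (C : ℤ → Set V) :
    Prop :=
  Reaches G L k (⋃ j ∈ J, C j) ∧
  ∀ j ∈ J, ∃ Y ⊆ L k,
    (∀ i ∈ J, i ≤ j → Covers G Y (C i)) ∧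
    (∀ i ∈ J, j < i → Anticomplete G Y (C i))

/-- Two levellings are parallel. -/
def Parallel (G : SimpleGraph V) (L : ℕ → Set V) (k : ℕ) (M : ℕ → Set V) (m : ℕ) : Prop :=
  L 0 = M 0 ∧
  Disjoint (⋃ j ∈ Finset.Icc 1 m, M j) (⋃ i ∈ Finset.Icc 1 k, L i) ∧
  Anticomplete G (⋃ j ∈ Finset.Icc 1 m, M j) (⋃ i ∈ Finset.Icc 1 k, L i)

/-- `(L, M, C)` is a bi-levelling, where `L` has height `k` and `M` has height `m`:
`C` is a blockade, `L, M` are parallel levellings both reaching the union of the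
blocks of `C`, and `L` grades `C` forwards. Its height is `k + m` and its length is
the length of `C`. -/
def IsBiLevelling (G : SimpleGraph V) (L : ℕ → Set V) (k : ℕ) (M : ℕ → Set V) (m : ℕ)
    (J : Finset ℤ) (C : ℤ → Set V) : Prop :=
  IsBlockade J C ∧ IsLevelling G L k ∧ IsLevelling G M m ∧ Parallel G L k M m ∧
    Reaches G M m (⋃ j ∈ J, C j) ∧ GradesFwd G L k J C

/-- A bi-grading: a bi-levelling in which `M` also grades `C` backwards. -/
def IsBiGrading (G : SimpleGraph V) (L : ℕ → Set V) (k : ℕ) (M : ℕ → Set V) (m : ℕ)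
    (J : Finset ℤ) (C : ℤ → Set V) : Prop :=
  IsBiLevelling G L k M m J C ∧ GradesBwd G M m J C

/-- The bi-levelling `(L, M, C)` is `(A i : i ∈ I)`-rainbow: each block of `C`, each
level of `L`, and each level of `M` other than `M 0 = L 0` is included in a block of
`A`, and distinct such sets lie in distinct blocks. -/
def RainbowBiLevelling (I : Finset ℤ) (A : ℤ → Set V)
    (L : ℕ → Set V) (k : ℕ) (M : ℕ → Set V) (m : ℕ)
    (J : Finset ℤ) (C : ℤ → Set V) : Prop :=
  ∃ (qc : ℤ → ℤ) (ql qm : ℕ → ℤ),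
    (∀ j ∈ J, qc j ∈ I ∧ C j ⊆ A (qc j)) ∧
    (∀ i ≤ k, ql i ∈ I ∧ L i ⊆ A (ql i)) ∧
    (∀ i, 1 ≤ i → i ≤ m → qm i ∈ I ∧ M i ⊆ A (qm i)) ∧
    (∀ j ∈ J, ∀ j' ∈ J, qc j = qc j' → j = j') ∧
    (∀ i ≤ k, ∀ i' ≤ k, ql i = ql i' → i = i') ∧
    (∀ i, 1 ≤ i → i ≤ m → ∀ i', 1 ≤ i' → i' ≤ m → qm i = qm i' → i = i') ∧
    (∀ j ∈ J, ∀ i ≤ k, qc j ≠ ql i) ∧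
    (∀ j ∈ J, ∀ i, 1 ≤ i → i ≤ m → qc j ≠ qm i) ∧
    (∀ i ≤ k, ∀ i', 1 ≤ i' → i' ≤ m → ql i ≠ qm i')

/-- Each block of `(C j : j ∈ J)` lies in a block of `(A i : i ∈ I)`; the `A`-size of
`C` is at least `η` when every block of `C` has size at least `η` times the size of the
block of `A` containing it. -/
def SizeGE (I : Finset ℤ) (A : ℤ → Set V) (J : Finset ℤ) (C : ℤ → Set V) (η : ℝ) : Prop :=
  ∀ j ∈ J, ∀ i ∈ I, C j ⊆ A i → η * ((A i).ncard : ℝ) ≤ ((C j).ncard : ℝ)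

/-- A `(B i : i ∈ I)`-rainbow induced path `p 0 - p 1 - ⋯ - p n` in `G`. -/
def RainbowPath (G : SimpleGraph V) (I : Finset ℤ) (B : ℤ → Set V)
    (n : ℕ) (p : ℕ → V) : Prop :=
  (∀ i ≤ n, ∀ j ≤ n, p i = p j → i = j) ∧
  (∀ i < n, G.Adj (p i) (p (i+1))) ∧
  (∀ i j, i + 1 < j → j ≤ n → ¬ G.Adj (p i) (p j)) ∧
  ∃ q : ℕ → ℤ, (∀ i ≤ n, q i ∈ I ∧ p i ∈ B (q i)) ∧
    ∀ i ≤ n, ∀ j ≤ n, q i = q j → i = j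

/-- A `(B i : i ∈ I)`-rainbow copy of `H` in `G`: an induced copy of `H` with each
vertex in a different block. -/
def RainbowCopy (G : SimpleGraph V) (I : Finset ℤ) (B : ℤ → Set V)
    (H : SimpleGraph W) : Prop :=
  ∃ (f : H ↪g G) (q : W → ℤ), Function.Injective q ∧ ∀ w : W, q w ∈ I ∧ f w ∈ B (q w)

/-- `(N,K,σ,lam,c)` forces `H`. -/
def Forces (H : SimpleGraph W) (N K : ℕ) (σ lam c : ℝ) : Prop :=
  ∀ {V : Type} [Fintype V] (G : SimpleGraph V),
    Coherent G ((Fintype.card V : ℝ) ^ (1 - c)) ((Fintype.card V : ℝ) ^ (1 - c)) →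
    N ≤ Fintype.card V →
    ∀ (I : Finset ℤ) (A : ℤ → Set V), IsBlockade I A → I.card = K →
      ShrinkageLE I A σ → LinkageLE G I A lam →
      RainbowCopy G I A H

/-- `p 0 - ⋯ - p n` is a handle of length `n` that can be added to (the graph induced
on) `S` inside the ambient graph `H`: an induced path of `H[S ∪ p]` of length at least
two whose ends lie in `S`, whose internal vertices avoid `S` and have degree two in
`H[S ∪ p]`. -/
def IsHandle (H : SimpleGraph V) (S : Set V) (n : ℕ) (p : ℕ → V) : Prop :=
  2 ≤ n ∧
  (∀ i ≤ n, ∀ j ≤ n, p i = p j → i = j) ∧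
  p 0 ∈ S ∧ p n ∈ S ∧
  (∀ i, 0 < i → i < n → p i ∉ S) ∧
  (∀ i < n, H.Adj (p i) (p (i+1))) ∧
  (∀ i j, i + 1 < j → j ≤ n → ¬ H.Adj (p i) (p j)) ∧
  (∀ i, 0 < i → i < n → ∀ w, (w ∈ S ∨ ∃ j ≤ n, w = p j) → H.Adj (p i) w →
    w = p (i-1) ∨ w = p (i+1))

/-- The vertex sets `S` such that the induced subgraph `H[S]` can be built, starting
from the two-vertex graph with no edges, by repeatedly adding handles of length at
least `β`. -/
inductive BuildableOn (H : SimpleGraph V) (β : ℕ) : Set V → Prop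
  | base (u v : V) (huv : u ≠ v) (hadj : ¬ H.Adj u v) : BuildableOn H β {u, v}
  | handle (S : Set V) (n : ℕ) (p : ℕ → V) (hS : BuildableOn H β S)
      (hh : IsHandle H S n p) (hn : β ≤ n) :
      BuildableOn H β (S ∪ {w | ∃ j ≤ n, w = p j})

/-- `H` is `β`-buildable. -/
def Buildable [Fintype V] (H : SimpleGraph V) (β : ℕ) : Prop :=
  BuildableOn H β Set.univ

/-- The vertex sets `S` such that the induced subgraph `H[S]` can be built, starting
from the null graph, by repeatedly adding a subleaf or a handle of length at least
`β`. -/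
inductive WeaklyBuildableOn (H : SimpleGraph V) (β : ℕ) : Set V → Prop
  | empty : WeaklyBuildableOn H β ∅
  | subleaf (S : Set V) (v : V) (hv : v ∉ S) (hdeg : (S ∩ H.neighborSet v).ncard ≤ 1)
      (hS : WeaklyBuildableOn H β S) : WeaklyBuildableOn H β (insert v S)
  | handle (S : Set V) (n : ℕ) (p : ℕ → V) (hS : WeaklyBuildableOn H β S)
      (hh : IsHandle H S n p) (hn : β ≤ n) :
      WeaklyBuildableOn H β (S ∪ {w | ∃ j ≤ n, w = p j})

/-- `H` is weakly `β`-buildable. -/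
def WeaklyBuildable [Fintype V] (H : SimpleGraph V) (β : ℕ) : Prop :=
  WeaklyBuildableOn H β Set.univ

section Aux1
open scoped Classical

variable {V : Type*} {G : SimpleGraph V}

def dg (G : SimpleGraph V) (x : V) (Z : Finset V) : ℕ := (Z.filter (fun z => G.Adj x z)).card

def nb (G : SimpleGraph V) (X Z : Finset V) : Finset V := Z.filter (fun z => ∃ x ∈ X, G.Adj x z)

lemma dg_eq_sum (x : V) (Z : Finset V) :
    (dg G x Z : ℝ) = ∑ z ∈ Z, if G.Adj x z then (1:ℝ) else 0 := by
  simp [dg]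

lemma dg_sum_comm (X Z : Finset V) :
    ∑ x ∈ X, (dg G x Z : ℝ) = ∑ z ∈ Z, (dg G z X : ℝ) := by
  simp only [dg_eq_sum]
  rw [Finset.sum_comm]
  simp only [G.adj_comm]

lemma dg_mono {x : V} {Y Z : Finset V} (h : Y ⊆ Z) : dg G x Y ≤ dg G x Z :=
  Finset.card_le_card (Finset.filter_subset_filter _ h)

lemma nb_subset (X Z : Finset V) : nb G X Z ⊆ Z := Finset.filter_subset _ _

lemma mem_nb {X Z : Finset V} {z : V} : z ∈ nb G X Z ↔ z ∈ Z ∧ ∃ x ∈ X, G.Adj x z := by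
  simp [nb]

lemma nb_card_le_sum (X Z : Finset V) : ((nb G X Z).card : ℝ) ≤ ∑ x ∈ X, (dg G x Z : ℝ) := by
  have : nb G X Z ⊆ X.biUnion (fun x => Z.filter (fun z => G.Adj x z)) := by
    intro z hz
    simp only [mem_nb, Finset.mem_biUnion, Finset.mem_filter] at *
    obtain ⟨h1, x, hx, h2⟩ := hz
    exact ⟨x, hx, h1, h2⟩
  have h2 := (Finset.card_le_card this).trans Finset.card_biUnion_le
  have : ((nb G X Z).card : ℝ) ≤ ((∑ x ∈ X, dg G x Z : ℕ) : ℝ) := by exact_mod_cast h2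
  simpa using this

lemma markov {ι : Type*} (T : Finset ι) (f : ι → ℝ) (hf : ∀ t ∈ T, 0 ≤ f t) (a b : ℝ)
    (ha : 0 < a) (h : ∑ t ∈ T, f t ≤ b * a) : ((T.filter (fun t => a < f t)).card : ℝ) ≤ b := by
  have h1 : ((T.filter (fun t => a < f t)).card : ℝ) * a ≤ ∑ t ∈ T, f t := by
    calc ((T.filter (fun t => a < f t)).card : ℝ) * a
        = ∑ t ∈ T.filter (fun t => a < f t), a := by simp
      _ ≤ ∑ t ∈ T.filter (fun t => a < f t), f t :=
          Finset.sum_le_sum (fun t ht => (Finset.mem_filter.1 ht).2.le)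
      _ ≤ ∑ t ∈ T, f t := Finset.sum_le_sum_of_subset_of_nonneg (Finset.filter_subset _ _)
          (fun t ht _ => hf t ht)
  exact le_of_mul_le_mul_right (h1.trans h) ha

set_option maxHeartbeats 800000 in
lemma greedy (T0 X : Finset V) (J : Finset ℕ) (T : ℕ → Finset V) (D0 U lam K : ℝ)
    (hD : 0 < D0) (hK : (J.card : ℝ) ≤ K) (hK1 : 1 ≤ K) (hU : 0 < U)
    (hT0 : ∀ t ∈ T0, D0 ≤ dg G t X) (hT : ∀ i ∈ J, ∀ t ∈ T i, (dg G t X : ℝ) ≤ U)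
    (hx : ∀ x ∈ X, ∀ i ∈ J, (dg G x (T i) : ℝ) ≤ lam * (T i).card) (hlam0 : 0 ≤ lam)
    (hlam : K * lam ≤ 1/4)
    (hne : T0.Nonempty) (hneT : ∀ i ∈ J, (T i).Nonempty) :
    ∃ Z ⊆ X, min (1/2) (D0/(16*K*U)) * T0.card ≤ (nb G Z T0).card ∧
      ∀ i ∈ J, ((nb G Z (T i)).card : ℝ) ≤ (T i).card / 2 := by
  have hTpos : ∀ i ∈ J, (0:ℝ) < (T i).card := fun i hi => by
    exact_mod_cast Finset.card_pos.2 (hneT i hi)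
  have hT0pos : (0:ℝ) < T0.card := by exact_mod_cast Finset.card_pos.2 hne
  set s : V → ℝ := fun x => ∑ i ∈ J, (dg G x (T i) : ℝ) / (T i).card with hs
  set al : ℝ := D0/(4*K*U) with hal
  have hal0 : 0 < al := by positivity
  have hs0 : ∀ x, 0 ≤ s x := fun x => Finset.sum_nonneg (fun i _ => by positivity)
  have hs1 : ∀ x ∈ X, s x ≤ 1/4 := by
    intro x hxX
    have : s x ≤ ∑ i ∈ J, lam := by
      apply Finset.sum_le_sum
      intro i hi
      rw [div_le_iff₀ (hTpos i hi)]
      exact hx x hxX i hi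
    rw [Finset.sum_const, nsmul_eq_mul] at this
    nlinarith
  -- family of admissible sets
  set F : Finset (Finset V) := X.powerset.filter (fun Z => ∑ x ∈ Z, s x ≤ 1/2 ∧
    al * (∑ x ∈ Z, s x) * T0.card ≤ (nb G Z T0).card) with hF
  have hFne : F.Nonempty := ⟨∅, by simp [hF]⟩
  obtain ⟨Z, hZF, hZmax⟩ := F.exists_max_image (fun Z => Z.card) hFne
  simp only [hF, Finset.mem_filter, Finset.mem_powerset] at hZF
  obtain ⟨hZX, hZ1, hZ2⟩ := hZF
  refine ⟨Z, hZX, ?_, ?_⟩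
  · by_cases hc : (1/2) * (T0.card : ℝ) ≤ (nb G Z T0).card
    · exact le_trans (mul_le_mul_of_nonneg_right (min_le_left _ _) hT0pos.le) hc
    by_cases hc2 : 1/4 ≤ ∑ x ∈ Z, s x
    · refine le_trans (mul_le_mul_of_nonneg_right (min_le_right _ _) hT0pos.le) (le_trans ?_ hZ2)
      have : D0/(16*K*U) = al * (1/4) := by rw [hal]; field_simp; norm_num
      rw [this]
      gcongr
    exfalso
    push Not at hc hc2
    set Tr := T0 \ nb G Z T0 with hTr
    have hTrc : (T0.card : ℝ)/2 ≤ Tr.card := by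
      have := Finset.card_sdiff_add_card_eq_card (nb_subset (G := G) Z T0)
      have : (Tr.card : ℝ) + (nb G Z T0).card = T0.card := by exact_mod_cast this
      linarith
    have hsum1 : D0 * (T0.card/2) ≤ ∑ x ∈ X, (dg G x Tr : ℝ) := by
      rw [dg_sum_comm]
      calc D0 * (T0.card/2) ≤ D0 * Tr.card := by gcongr
        _ = ∑ z ∈ Tr, D0 := by simp [mul_comm]
        _ ≤ _ := Finset.sum_le_sum (fun z hz => hT0 z (Finset.mem_sdiff.1 hz).1)
    have hsum2 : ∑ x ∈ X, s x ≤ K * U := by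
      have e1 : ∑ x ∈ X, s x = ∑ i ∈ J, ∑ x ∈ X, (dg G x (T i) : ℝ) / (T i).card :=
        Finset.sum_comm
      have e2 : ∑ i ∈ J, ∑ x ∈ X, (dg G x (T i) : ℝ) / (T i).card ≤ ∑ i ∈ J, U := by
        apply Finset.sum_le_sum
        intro i hi
        rw [← Finset.sum_div, div_le_iff₀ (hTpos i hi), dg_sum_comm]
        have : ∑ z ∈ T i, (dg G z X : ℝ) ≤ ∑ z ∈ T i, U :=
          Finset.sum_le_sum (fun z hz => hT i hi z hz)
        rw [Finset.sum_const, nsmul_eq_mul] at this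
        linarith
      rw [Finset.sum_const, nsmul_eq_mul] at e2
      rw [e1]
      exact e2.trans (mul_le_mul_of_nonneg_right hK hU.le)
    have hex : ∃ x ∈ X, al * s x * T0.card < dg G x Tr := by
      by_contra hno
      push Not at hno
      have h3 : ∑ x ∈ X, (dg G x Tr : ℝ) ≤ al * (K*U) * T0.card := by
        calc _ ≤ ∑ x ∈ X, al * s x * T0.card := Finset.sum_le_sum hno
          _ = al * (∑ x ∈ X, s x) * T0.card := by rw [Finset.mul_sum, Finset.sum_mul]
          _ ≤ _ := by gcongr
      have h4 : al * (K*U) = D0/4 := by rw [hal]; field_simp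
      rw [h4] at h3
      nlinarith
    obtain ⟨x, hxX, hxd⟩ := hex
    have hxpos : (0:ℝ) < dg G x Tr := lt_of_le_of_lt (mul_nonneg (mul_nonneg hal0.le (hs0 x)) (Nat.cast_nonneg _)) hxd
    have hxZ : x ∉ Z := by
      intro hxZ
      have : dg G x Tr = 0 := by
        unfold dg
        rw [Finset.card_eq_zero, Finset.filter_eq_empty_iff]
        intro z hz hadj
        have := Finset.mem_sdiff.1 hz
        exact this.2 (mem_nb.2 ⟨this.1, x, hxZ, hadj⟩)
      rw [this] at hxpos
      simp at hxpos
    have hmem : insert x Z ∈ F := by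
      simp only [hF, Finset.mem_filter, Finset.mem_powerset]
      refine ⟨Finset.insert_subset hxX hZX, ?_, ?_⟩
      · rw [Finset.sum_insert hxZ]; have := hs1 x hxX; linarith
      · rw [Finset.sum_insert hxZ]
        have hsub : nb G Z T0 ∪ Tr.filter (fun z => G.Adj x z) ⊆ nb G (insert x Z) T0 := by
          intro z hz
          rw [Finset.mem_union] at hz
          rcases hz with hz | hz
          · obtain ⟨h1, y, hy, h2⟩ := mem_nb.1 hz
            exact mem_nb.2 ⟨h1, y, Finset.mem_insert_of_mem hy, h2⟩
          · rw [Finset.mem_filter] at hz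
            exact mem_nb.2 ⟨(Finset.mem_sdiff.1 hz.1).1, x, Finset.mem_insert_self _ _, hz.2⟩
        have hdis : Disjoint (nb G Z T0) (Tr.filter (fun z => G.Adj x z)) := by
          rw [Finset.disjoint_left]
          intro z hz hz2
          exact (Finset.mem_sdiff.1 (Finset.mem_filter.1 hz2).1).2 hz
        have := Finset.card_le_card hsub
        rw [Finset.card_union_of_disjoint hdis] at this
        have : ((nb G Z T0).card : ℝ) + dg G x Tr ≤ (nb G (insert x Z) T0).card := by
          exact_mod_cast this
        nlinarith
    have := hZmax _ hmem
    simp only [Finset.card_insert_of_notMem hxZ] at this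
    omega
  · intro i hi
    have h1 := nb_card_le_sum (G := G) Z (T i)
    have h2 : (∑ x ∈ Z, (dg G x (T i) : ℝ)) / (T i).card ≤ ∑ x ∈ Z, s x := by
      rw [Finset.sum_div]
      apply Finset.sum_le_sum
      intro x _
      exact Finset.single_le_sum (f := fun i => (dg G x (T i) : ℝ) / (T i).card)
        (fun i _ => by positivity) hi
    have h3 := h2.trans hZ1
    rw [div_le_iff₀ (hTpos i hi)] at h3
    linarith

end Aux1

section Aux2
open scoped Classical

variable {V : Type*} {G : SimpleGraph V}

lemma ra1 {a c K lam : ℝ} (hK : 0 < K) :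
    c * (2 * K * lam * a) = a / (16 * K) * (32 * K^2 * lam * c) := by
  field_simp
  ring

/-- weights -/
def wt (G : SimpleGraph V) (X T : Finset V) (x : V) : ℝ :=
  ∑ t ∈ T, if G.Adj x t then 1 / (dg G t X : ℝ) else 0

lemma wt_nonneg (X T : Finset V) (x : V) : 0 ≤ wt G X T x :=
  Finset.sum_nonneg (fun t _ => by split_ifs <;> positivity)

lemma wt_sum (X T B : Finset V) :
    ∑ x ∈ B, wt G X T x = ∑ t ∈ T, (dg G t B : ℝ) / dg G t X := by
  unfold wt
  rw [Finset.sum_comm]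
  refine Finset.sum_congr rfl (fun t _ => ?_)
  rw [dg_eq_sum t B, Finset.sum_div]
  refine Finset.sum_congr rfl (fun x _ => ?_)
  rw [G.adj_comm]
  split_ifs <;> simp

lemma wt_sum_le (X T : Finset V) : ∑ x ∈ X, wt G X T x ≤ T.card := by
  rw [wt_sum]
  calc _ ≤ ∑ t ∈ T, (1:ℝ) := Finset.sum_le_sum (fun t _ => div_self_le_one _)
    _ = _ := by simp

lemma wt_bad (X T B : Finset V) (hB : B ⊆ X) :
    ((T.filter (fun t => dg G t X < 2 * dg G t B)).card : ℝ) ≤ 2 * ∑ x ∈ B, wt G X T x := by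
  rw [wt_sum]
  have h1 : ∑ t ∈ T.filter (fun t => dg G t X < 2 * dg G t B), (1/2 : ℝ)
      ≤ ∑ t ∈ T.filter (fun t => dg G t X < 2 * dg G t B), (dg G t B : ℝ) / dg G t X := by
    apply Finset.sum_le_sum
    intro t ht
    have h2 := (Finset.mem_filter.1 ht).2
    have h3 : dg G t B ≤ dg G t X := dg_mono hB
    have h4 : 0 < dg G t X := by omega
    rw [le_div_iff₀ (by exact_mod_cast h4)]
    have : (dg G t X : ℝ) < 2 * dg G t B := by exact_mod_cast h2
    linarith
  have h5 := Finset.sum_le_sum_of_subset_of_nonneg (f := fun t => (dg G t B : ℝ) / dg G t X)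
    (Finset.filter_subset (fun t => dg G t X < 2 * dg G t B) T) (fun _ _ _ => by positivity)
  rw [Finset.sum_const, nsmul_eq_mul] at h1
  linarith

lemma dg_split (t : V) (X B : Finset V) (hB : B ⊆ X) : dg G t (X \ B) + dg G t B = dg G t X := by
  unfold dg
  rw [← Finset.card_union_of_disjoint]
  · rw [← Finset.filter_union, Finset.sdiff_union_of_subset hB]
  · exact Finset.disjoint_filter_filter Finset.sdiff_disjoint

lemma card_filter_union_bound {ι δ : Type*} (T : Finset ι) (E : Finset δ) (p : δ → ι → Prop) (b K : ℝ)
    (hb : 0 ≤ b) (hE : (E.card : ℝ) ≤ K)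
    (h : ∀ e ∈ E, ((T.filter (fun t => p e t)).card : ℝ) ≤ b) :
    ((T.filter (fun t => ∃ e ∈ E, p e t)).card : ℝ) ≤ K * b := by
  have h1 : T.filter (fun t => ∃ e ∈ E, p e t) ⊆ E.biUnion (fun e => T.filter (fun t => p e t)) := by
    intro t ht
    simp only [Finset.mem_filter, Finset.mem_biUnion] at *
    obtain ⟨h1, e, he, h2⟩ := ht
    exact ⟨e, he, h1, h2⟩
  have h2 : ((T.filter (fun t => ∃ e ∈ E, p e t)).card : ℝ)
      ≤ ((∑ e ∈ E, (T.filter (fun t => p e t)).card : ℕ) : ℝ) := by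
    exact_mod_cast (Finset.card_le_card h1).trans Finset.card_biUnion_le
  push_cast at h2
  calc _ ≤ _ := h2
    _ ≤ ∑ e ∈ E, b := Finset.sum_le_sum h
    _ = E.card * b := by rw [Finset.sum_const, nsmul_eq_mul]
    _ ≤ _ := mul_le_mul_of_nonneg_right hE hb

structure PS {δ : Type*} (G : SimpleGraph V) (J : Finset ℕ) (T : ℕ → Finset V) (E : Finset δ)
    (tg : δ → ℕ) (X : δ → Finset V) (D U : δ → ℝ) (lam : ℝ) : Prop where
  ne : ∀ j ∈ J, (T j).Nonempty
  link : ∀ i ∈ J, ∀ j ∈ J, i ≠ j → ∀ t ∈ T i, (dg G t (T j) : ℝ) ≤ lam * (T j).card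
  tgJ : ∀ e ∈ E, tg e ∈ J
  xl : ∀ e ∈ E, ∀ x ∈ X e, ∀ i ∈ J, i ≠ tg e → (dg G x (T i) : ℝ) ≤ lam * (T i).card
  dlow : ∀ e ∈ E, ∀ t ∈ T (tg e), D e ≤ dg G t (X e)
  dup : ∀ e ∈ E, ∀ i ∈ J, i ≠ tg e → ∀ t ∈ T i, (dg G t (X e) : ℝ) ≤ U e

set_option maxHeartbeats 1600000 in
lemma pl_step {δ : Type*} {J : Finset ℕ} {T : ℕ → Finset V} {E : Finset δ}
    {tg : δ → ℕ} {X : δ → Finset V} {D U : δ → ℝ} {lam K ρ : ℝ}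
    (h : PS G J T E tg X D U lam) (hlam : 0 < lam) (hK : 1 ≤ K) (hJK : (J.card : ℝ) ≤ K)
    (hEK : (E.card : ℝ) ≤ K) (hKl : K * lam ≤ 1/4) (hρ : 0 < ρ) (hρ1 : ρ ≤ 1)
    (hD : ∀ e ∈ E, 0 < D e) (hU : ∀ e ∈ E, 0 < U e)
    (hDU : ∀ e ∈ E, ρ * U e ≤ D e) (e0 : δ) (he0 : e0 ∈ E) :
    ∃ Z ⊆ X e0, ∃ (T' : ℕ → Finset V) (X' : δ → Finset V), (∀ j ∈ J, T' j ⊆ T j) ∧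
      (∀ e ∈ E, X' e ⊆ X e) ∧
      PS G J T' (E.erase e0) tg X' (fun e => D e / 2) U (32 * K^2 * lam) ∧
      (∀ t ∈ T' (tg e0), ∃ z ∈ Z, G.Adj z t) ∧
      (∀ i ∈ J, i ≠ tg e0 → ∀ t ∈ T' i, ∀ z ∈ Z, ¬ G.Adj z t) ∧
      ∀ j ∈ J, ρ / (32 * K) * (T j).card ≤ (T' j).card := by
  have hTpos : ∀ j ∈ J, (0:ℝ) < (T j).card := fun i hi => by
    exact_mod_cast Finset.card_pos.2 (h.ne i hi)
  have hKpos : 0 < K := by linarith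
  obtain ⟨j0, hj0⟩ : ∃ j, j = tg e0 := ⟨_, rfl⟩
  have hj0J : j0 ∈ J := hj0 ▸ h.tgJ e0 he0
  -- pre-trim
  let g : δ → V → ℝ := fun e y => ∑ x ∈ X e, wt G (X e) (T (tg e)) x * (if G.Adj x y then 1 else 0)
  have hg0 : ∀ e y, 0 ≤ g e y := fun e y => Finset.sum_nonneg (fun x _ =>
    mul_nonneg (wt_nonneg _ _ _) (by split_ifs <;> norm_num))
  have hgsum : ∀ e (C : Finset V), ∑ y ∈ C, g e y
      = ∑ x ∈ X e, wt G (X e) (T (tg e)) x * dg G x C := by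
    intro e C
    show ∑ y ∈ C, ∑ x ∈ X e, _ = _
    rw [Finset.sum_comm]
    refine Finset.sum_congr rfl (fun x _ => ?_)
    rw [dg_eq_sum, Finset.mul_sum]
  obtain ⟨E1, hE1⟩ : ∃ E1, E1 = E.filter (fun e => tg e ≠ j0) := ⟨_, rfl⟩
  have hE1K : (E1.card : ℝ) ≤ K := le_trans (by
    rw [hE1]; exact_mod_cast Finset.card_le_card (Finset.filter_subset _ _)) hEK
  obtain ⟨T0, hT0⟩ : ∃ T0, T0 = (T j0).filter
      (fun y => ¬ ∃ e ∈ E1, 2 * K * lam * (T (tg e)).card < g e y) := ⟨_, rfl⟩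
  have hT0sub : T0 ⊆ T j0 := hT0 ▸ Finset.filter_subset _ _
  have hT0c : ((T j0).card : ℝ) / 2 ≤ T0.card := by
    have h1 := card_filter_union_bound (T j0) E1
      (fun e y => 2 * K * lam * (T (tg e)).card < g e y) ((T j0).card / (2 * K)) K
      (by positivity) hE1K (by
        intro e he
        rw [hE1, Finset.mem_filter] at he
        have hti := hTpos _ (h.tgJ e he.1)
        apply markov _ _ (fun t _ => hg0 e t)
        · positivity
        · rw [hgsum]
          calc _ ≤ ∑ x ∈ X e, wt G (X e) (T (tg e)) x * (lam * (T j0).card) := by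
                apply Finset.sum_le_sum
                intro x hx
                exact mul_le_mul_of_nonneg_left (h.xl e he.1 x hx j0 hj0J (Ne.symm he.2))
                  (wt_nonneg _ _ _)
            _ = (∑ x ∈ X e, wt G (X e) (T (tg e)) x) * (lam * (T j0).card) := by
                rw [Finset.sum_mul]
            _ ≤ (T (tg e)).card * (lam * (T j0).card) :=
                mul_le_mul_of_nonneg_right (wt_sum_le _ _) (by positivity)
            _ = _ := by field_simp)
    have h2 := Finset.card_filter_add_card_filter_not (s := T j0)
      (fun y => ∃ e ∈ E1, 2 * K * lam * (T (tg e)).card < g e y)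
    rw [← hT0] at h2
    have h3 : (((T j0).filter (fun y => ∃ e ∈ E1, 2 * K * lam * (T (tg e)).card < g e y)).card : ℝ)
      + T0.card = (T j0).card := by exact_mod_cast h2
    have h4 : K * ((T j0).card / (2 * K)) = ((T j0).card : ℝ) / 2 := by field_simp
    linarith
  have hT0pos : (0:ℝ) < T0.card := by have := hTpos j0 hj0J; linarith
  have hT0ne : T0.Nonempty := Finset.card_pos.1 (by exact_mod_cast hT0pos)
  obtain ⟨Z, hZX, hZ1, hZ2⟩ := greedy (G := G) T0 (X e0) (J.erase j0) T (D e0) (U e0) lam K (hD e0 he0)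
    (le_trans (by exact_mod_cast Finset.card_le_card (Finset.erase_subset _ _)) hJK) hK (hU e0 he0)
    (fun t ht => h.dlow e0 he0 t (hj0 ▸ hT0sub ht))
    (fun i hi t ht => h.dup e0 he0 i (Finset.mem_of_mem_erase hi)
      (hj0 ▸ Finset.ne_of_mem_erase hi) t ht)
    (fun x hx i hi => h.xl e0 he0 x hx i (Finset.mem_of_mem_erase hi)
      (hj0 ▸ Finset.ne_of_mem_erase hi)) hlam.le hKl hT0ne
    (fun i hi => h.ne i (Finset.mem_of_mem_erase hi))
  obtain ⟨C, hC⟩ : ∃ C, C = nb G Z T0 := ⟨_, rfl⟩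
  rw [← hC] at hZ1
  have hCc : ρ / (32 * K) * (T j0).card ≤ C.card := by
    have h1 : ρ / (16 * K) ≤ min (1/2) (D e0 / (16 * K * U e0)) := by
      apply le_min
      · rw [div_le_div_iff₀ (by positivity) (by norm_num)]; linarith
      · have := hU e0 he0
        rw [div_le_div_iff₀ (by positivity) (by positivity)]
        have := hDU e0 he0
        nlinarith
    calc ρ / (32 * K) * (T j0).card = ρ / (16*K) * ((T j0).card / 2) := by ring
      _ ≤ ρ / (16*K) * T0.card := mul_le_mul_of_nonneg_left hT0c (by positivity)
      _ ≤ _ := mul_le_mul_of_nonneg_right h1 hT0pos.le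
      _ ≤ _ := hZ1
  have hCpos : (0:ℝ) < C.card := lt_of_lt_of_le (by have := hTpos j0 hj0J; positivity) hCc
  have hCT0 : C ⊆ T0 := hC ▸ nb_subset _ _
  obtain ⟨lam', hlam'⟩ : ∃ l, l = 32 * K^2 * lam := ⟨_, rfl⟩
  have hlam'pos : 0 < lam' := by rw [hlam']; positivity
  let X' : δ → Finset V := fun e => if tg e = j0 then X e else
    (X e).filter (fun x => (dg G x C : ℝ) ≤ lam' * C.card)
  have hX'sub : ∀ e, X' e ⊆ X e := fun e => by
    simp only [X']
    split_ifs
    · exact subset_rfl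
    · exact Finset.filter_subset _ _
  let T' : ℕ → Finset V := fun i => if i = j0 then C else
    ((T i) \ nb G Z (T i)).filter (fun t => (∀ e ∈ E1, tg e = i → D e / 2 ≤ dg G t (X' e)) ∧
      (dg G t C : ℝ) ≤ lam' * C.card)
  have hT'0 : T' j0 = C := if_pos rfl
  have hT'i : ∀ i, i ≠ j0 → T' i = ((T i) \ nb G Z (T i)).filter
      (fun t => (∀ e ∈ E1, tg e = i → D e / 2 ≤ dg G t (X' e)) ∧
      (dg G t C : ℝ) ≤ lam' * C.card) := fun i hi => if_neg hi
  have hT'sub : ∀ j ∈ J, T' j ⊆ T j := by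
    intro j hj
    by_cases hjj : j = j0
    · rw [hjj, hT'0]; exact hCT0.trans hT0sub
    · rw [hT'i j hjj]
      exact (Finset.filter_subset _ _).trans Finset.sdiff_subset
  have hquarter : ∀ i ∈ J, i ≠ j0 → ((T i).card : ℝ) / 4 ≤ (T' i).card := by
    intro i hi hij
    rw [hT'i i hij]
    have hz := hZ2 i (Finset.mem_erase.2 ⟨hij, hi⟩)
    have hTi := hTpos i hi
    have hb1 : (((T i).filter (fun t => lam' * C.card < dg G t C)).card : ℝ) ≤ (T i).card / 32 := by
      apply markov _ _ (fun t _ => Nat.cast_nonneg _)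
      · positivity
      · rw [dg_sum_comm]
        calc _ ≤ ∑ y ∈ C, lam * (T i).card := Finset.sum_le_sum (fun y hy =>
              h.link j0 hj0J i hi (Ne.symm hij) y (hT0sub (hCT0 hy)))
          _ = C.card * (lam * (T i).card) := by rw [Finset.sum_const, nsmul_eq_mul]
          _ ≤ K^2 * (C.card * (lam * (T i).card)) := by
              apply le_mul_of_one_le_left (by positivity)
              nlinarith
          _ = _ := by rw [hlam']; ring
    have hb2 := card_filter_union_bound (T i) (E1.filter (fun e => tg e = i))
      (fun e t => dg G t (X' e) < D e / 2) ((T i).card / (8 * K)) K (by positivity)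
      (le_trans (by exact_mod_cast Finset.card_le_card (Finset.filter_subset _ _)) hE1K) (by
        intro e he
        rw [Finset.mem_filter, hE1, Finset.mem_filter] at he
        obtain ⟨⟨heE, htj⟩, hti⟩ := he
        have hX'e : X' e = (X e).filter (fun x => (dg G x C : ℝ) ≤ lam' * C.card) := if_neg htj
        obtain ⟨B, hB⟩ : ∃ B, B = (X e).filter (fun x => lam' * C.card < (dg G x C : ℝ)) := ⟨_, rfl⟩
        have hBX : B ⊆ X e := hB ▸ Finset.filter_subset _ _
        have hXB : X' e = X e \ B := by
          rw [hX'e, hB]; ext x; simp only [Finset.mem_filter, Finset.mem_sdiff, not_and, not_lt]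
          tauto
        have h1 := wt_bad (G := G) (X e) (T i) B hBX
        have h2 : (T i).filter (fun t => (dg G t (X' e) : ℝ) < D e / 2)
            ⊆ (T i).filter (fun t => dg G t (X e) < 2 * dg G t B) := by
          intro t ht
          rw [Finset.mem_filter] at ht ⊢
          refine ⟨ht.1, ?_⟩
          have h3 := h.dlow e heE t (hti ▸ ht.1)
          have h4 := dg_split (G := G) t (X e) B hBX
          rw [← hXB] at h4
          have h5 : (dg G t (X' e) : ℝ) + dg G t B = dg G t (X e) := by exact_mod_cast h4
          have h6 : (dg G t (X e) : ℝ) < 2 * dg G t B := by linarith [ht.2]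
          exact_mod_cast h6
        have h3 : (∑ x ∈ B, wt G (X e) (T i) x) * (lam' * C.card) ≤ C.card * (2 * K * lam * (T i).card) := by
          calc _ = ∑ x ∈ B, wt G (X e) (T i) x * (lam' * C.card) := by rw [Finset.sum_mul]
            _ ≤ ∑ x ∈ B, wt G (X e) (T i) x * dg G x C := by
                apply Finset.sum_le_sum
                intro x hx
                rw [hB, Finset.mem_filter] at hx
                exact mul_le_mul_of_nonneg_left hx.2.le (wt_nonneg _ _ _)
            _ ≤ ∑ x ∈ X e, wt G (X e) (T i) x * dg G x C :=
                Finset.sum_le_sum_of_subset_of_nonneg hBX (fun x _ _ =>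
                  mul_nonneg (wt_nonneg _ _ _) (Nat.cast_nonneg _))
            _ = ∑ y ∈ C, g e y := by rw [hgsum, hti]
            _ ≤ ∑ y ∈ C, 2 * K * lam * (T i).card := by
                apply Finset.sum_le_sum
                intro y hy
                have := hCT0 hy
                rw [hT0, Finset.mem_filter] at this
                have h7 := this.2
                push Not at h7
                have := h7 e (by rw [hE1, Finset.mem_filter]; exact ⟨heE, htj⟩)
                rwa [hti] at this
            _ = _ := by rw [Finset.sum_const, nsmul_eq_mul]
        have h4 : ∑ x ∈ B, wt G (X e) (T i) x ≤ (T i).card / (16 * K) := by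
          rw [← mul_le_mul_iff_left₀ (mul_pos hlam'pos hCpos)]
          refine h3.trans (le_of_eq ?_)
          rw [hlam']; exact ra1 hKpos
        have h5 : (((T i).filter (fun t => (dg G t (X' e) : ℝ) < D e / 2)).card : ℝ)
          ≤ ((T i).filter (fun t => dg G t (X e) < 2 * dg G t B)).card := by
            exact_mod_cast Finset.card_le_card h2
        have h6 : ((T i).card : ℝ) / (8 * K) = 2 * ((T i).card / (16 * K)) := by ring
        rw [h6]
        linarith)
    have hcov : T i ⊆ nb G Z (T i) ∪ ((T i).filter (fun t => lam' * C.card < dg G t C)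
        ∪ ((T i).filter (fun t => ∃ e ∈ E1.filter (fun e => tg e = i), (dg G t (X' e) : ℝ) < D e / 2)
        ∪ ((T i) \ nb G Z (T i)).filter
      (fun t => (∀ e ∈ E1, tg e = i → D e / 2 ≤ dg G t (X' e)) ∧
      (dg G t C : ℝ) ≤ lam' * C.card))) := by
      intro t ht
      simp only [Finset.mem_union]
      by_cases h1 : t ∈ nb G Z (T i)
      · exact Or.inl h1
      by_cases h2 : lam' * C.card < dg G t C
      · exact Or.inr (Or.inl (Finset.mem_filter.2 ⟨ht, h2⟩))
      by_cases h3 : ∃ e ∈ E1.filter (fun e => tg e = i), (dg G t (X' e) : ℝ) < D e / 2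
      · exact Or.inr (Or.inr (Or.inl (Finset.mem_filter.2 ⟨ht, h3⟩)))
      · refine Or.inr (Or.inr (Or.inr (Finset.mem_filter.2 ⟨Finset.mem_sdiff.2 ⟨ht, h1⟩, ?_, not_lt.1 h2⟩)))
        intro e he hei
        by_contra hlt
        exact h3 ⟨e, Finset.mem_filter.2 ⟨he, hei⟩, not_le.1 hlt⟩
    have hle := (Finset.card_le_card hcov).trans ((Finset.card_union_le _ _).trans
      (Nat.add_le_add_left ((Finset.card_union_le _ _).trans
      (Nat.add_le_add_left (Finset.card_union_le _ _) _)) _))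
    have hle2 : ((T i).card : ℝ) ≤ (nb G Z (T i)).card + (((T i).filter (fun t => lam' * C.card < dg G t C)).card
      + (((T i).filter (fun t => ∃ e ∈ E1.filter (fun e => tg e = i), (dg G t (X' e) : ℝ) < D e / 2)).card
      + (((T i) \ nb G Z (T i)).filter
      (fun t => (∀ e ∈ E1, tg e = i → D e / 2 ≤ dg G t (X' e)) ∧
      (dg G t C : ℝ) ≤ lam' * C.card)).card)) := by exact_mod_cast hle
    have h8 : K * ((T i).card / (8 * K)) = ((T i).card : ℝ) / 8 := by field_simp
    rw [h8] at hb2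
    linarith
  have hcard : ∀ j ∈ J, ρ / (32 * K) * (T j).card ≤ (T' j).card := by
    intro j hj
    by_cases hjj : j = j0
    · rw [hjj, hT'0]; exact hCc
    · have h1 := hquarter j hj hjj
      have h2 : ρ / (32 * K) ≤ 1/4 := by
        rw [div_le_div_iff₀ (by positivity) (by norm_num)]; nlinarith
      have := mul_le_mul_of_nonneg_right h2 (hTpos j hj).le
      linarith
  have hlink4 : ∀ x i, i ∈ J → i ≠ j0 → (dg G x (T i) : ℝ) ≤ lam * (T i).card →
      (dg G x (T' i) : ℝ) ≤ lam' * (T' i).card := by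
    intro x i hi hij hx
    have h1 : (dg G x (T' i) : ℝ) ≤ dg G x (T i) := by exact_mod_cast dg_mono (hT'sub i hi)
    have h2 := hquarter i hi hij
    have h3 : 4 * lam ≤ lam' := by
      rw [hlam']; exact mul_le_mul_of_nonneg_right (by nlinarith) hlam.le
    have h4 : (0:ℝ) ≤ (T' i).card := Nat.cast_nonneg _
    nlinarith
  refine ⟨Z, hZX, T', X', hT'sub, fun e _ => hX'sub e, ?_, ?_, ?_, hcard⟩
  · rw [← hlam']
    refine ⟨?_, ?_, ?_, ?_, ?_, ?_⟩
    · intro j hj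
      apply Finset.card_pos.1
      have : (0:ℝ) < (T' j).card := lt_of_lt_of_le (by have := hTpos j hj; positivity) (hcard j hj)
      exact_mod_cast this
    · intro i hi j hj hij t ht
      by_cases hjj : j = j0
      · rw [hjj, hT'0]
        rw [hT'i i (by rintro rfl; exact hij hjj.symm), Finset.mem_filter] at ht
        exact ht.2.2
      · exact hlink4 t j hj hjj (h.link i hi j hj hij t (hT'sub i hi ht))
    · exact fun e he => h.tgJ e (Finset.mem_of_mem_erase he)
    · intro e he x hx i hi hie
      by_cases hii : i = j0
      · rw [hii, hT'0]
        have htj : tg e ≠ j0 := by rw [← hii]; exact hie.symm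
        have hX'e : X' e = (X e).filter (fun x => (dg G x C : ℝ) ≤ lam' * C.card) := if_neg htj
        rw [hX'e, Finset.mem_filter] at hx
        exact hx.2
      · exact hlink4 x i hi hii (h.xl e (Finset.mem_of_mem_erase he) x (hX'sub e hx) i hi hie)
    · intro e he t ht
      have heE := Finset.mem_of_mem_erase he
      by_cases htj : tg e = j0
      · have hX'e : X' e = X e := if_pos htj
        rw [hX'e]
        have := h.dlow e heE t (hT'sub _ (h.tgJ e heE) ht)
        have := hD e heE
        linarith
      · rw [hT'i _ htj, Finset.mem_filter] at ht
        exact ht.2.1 e (by rw [hE1, Finset.mem_filter]; exact ⟨heE, htj⟩) rfl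
    · intro e he i hi hie t ht
      have heE := Finset.mem_of_mem_erase he
      have h1 : (dg G t (X' e) : ℝ) ≤ dg G t (X e) := by exact_mod_cast dg_mono (hX'sub e)
      exact h1.trans (h.dup e heE i hi hie t (hT'sub i hi ht))
  · intro t ht
    rw [← hj0, hT'0, hC] at ht
    exact (mem_nb.1 ht).2
  · intro i hi hie t ht z hz hadj
    rw [← hj0] at hie
    rw [hT'i i hie, Finset.mem_filter, Finset.mem_sdiff] at ht
    exact ht.1.2 (mem_nb.2 ⟨ht.1.1, z, hz, hadj⟩)

end Aux2

section Aux3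
open scoped Classical

variable {V : Type*} {G : SimpleGraph V}

lemma pl_iter {δ : Type*} {J : Finset ℕ} {tg : δ → ℕ} {U : δ → ℝ} {K : ℝ} (hK : 1 ≤ K)
    (hJK : (J.card : ℝ) ≤ K) (N : ℕ) :
    ∀ (T : ℕ → Finset V) (E : Finset δ) (X : δ → Finset V) (D : δ → ℝ) (lam ρ : ℝ),
    E.card = N → (N : ℝ) ≤ K → PS G J T E tg X D U lam → 0 < lam →
    K * (lam * (32 * K^2)^N) ≤ 1/4 → 0 < ρ → ρ ≤ 1 →
    (∀ e ∈ E, 0 < D e) → (∀ e ∈ E, 0 < U e) → (∀ e ∈ E, ρ * U e ≤ D e) →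
    ∃ (T' : ℕ → Finset V) (Y : δ → Finset V), (∀ j ∈ J, T' j ⊆ T j) ∧ (∀ e ∈ E, Y e ⊆ X e) ∧
      (∀ e ∈ E, ∀ t ∈ T' (tg e), ∃ z ∈ Y e, G.Adj z t) ∧
      (∀ e ∈ E, ∀ i ∈ J, i ≠ tg e → ∀ t ∈ T' i, ∀ z ∈ Y e, ¬ G.Adj z t) ∧
      (∀ i ∈ J, ∀ j ∈ J, i ≠ j → ∀ t ∈ T' i,
        (dg G t (T' j) : ℝ) ≤ lam * (32 * K^2)^N * (T' j).card) ∧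
      ∀ j ∈ J, (ρ / (32 * K * 2^N))^N * (T j).card ≤ (T' j).card := by
  have hK0 : 0 < K := by linarith
  induction N with
  | zero =>
    intro T E X D lam ρ hE _ h hlam hl hρ hρ1 hD hU hDU
    rw [Finset.card_eq_zero] at hE
    subst hE
    refine ⟨T, X, fun _ _ => subset_rfl, fun _ _ => subset_rfl, by simp, by simp, ?_, by simp⟩
    simpa using h.link
  | succ N ih =>
    intro T E X D lam ρ hE hN h hlam hl hρ hρ1 hD hU hDU
    obtain ⟨e0, he0⟩ : E.Nonempty := Finset.card_pos.1 (by omega)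
    have h32 : (1:ℝ) ≤ 32 * K^2 := by nlinarith
    have hpow : (1:ℝ) ≤ (32 * K^2)^(N+1) := one_le_pow₀ h32
    have hKl : K * lam ≤ 1/4 := by
      refine le_trans ?_ hl
      exact mul_le_mul_of_nonneg_left (le_mul_of_one_le_right hlam.le hpow) hK0.le
    obtain ⟨Z, hZX, T1, X1, hT1, hX1, hPS, hc, ha, hcard⟩ := pl_step h hlam hK hJK
      (by rw [hE]; exact hN) hKl hρ hρ1 hD hU hDU e0 he0
    have hlamN : 32 * K^2 * lam * (32 * K^2)^N = lam * (32 * K^2)^(N+1) := by ring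
    obtain ⟨T', Y, hT', hY, hYc, hYa, hlink, hcard'⟩ := ih T1 (E.erase e0) X1 (fun e => D e / 2)
      (32 * K^2 * lam) (ρ/2) (by rw [Finset.card_erase_of_mem he0, hE]; rfl)
      (by push_cast at hN; linarith) hPS (by positivity)
      (by rw [hlamN]; exact hl) (by linarith) (by linarith)
      (fun e he => by have := hD e (Finset.mem_of_mem_erase he); linarith)
      (fun e he => hU e (Finset.mem_of_mem_erase he))
      (fun e he => by have := hDU e (Finset.mem_of_mem_erase he); linarith)
    refine ⟨T', fun e => if e = e0 then Z else Y e, fun j hj => (hT' j hj).trans (hT1 j hj), ?_, ?_, ?_,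
      by rw [← hlamN]; exact hlink, ?_⟩
    · intro e he
      by_cases hee : e = e0
      · simp only [hee, if_true]; exact hZX
      · simp only [hee, if_false]; exact (hY e (Finset.mem_erase.2 ⟨hee, he⟩)).trans (hX1 e he)
    · intro e he t ht
      by_cases hee : e = e0
      · subst hee
        simp only [if_true]; exact hc t (hT' _ (h.tgJ e he) ht)
      · simp only [hee, if_false]; exact hYc e (Finset.mem_erase.2 ⟨hee, he⟩) t ht
    · intro e he i hi hie t ht z hz
      by_cases hee : e = e0
      · subst hee
        simp only [if_true] at hz
        exact ha i hi hie t (hT' i hi ht) z hz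
      · simp only [hee, if_false] at hz
        exact hYa e (Finset.mem_erase.2 ⟨hee, he⟩) i hi hie t ht z hz
    · intro j hj
      have h1 := hcard j hj
      have h2 := hcard' j hj
      have e1 : ρ / 2 / (32 * K * 2^N) = ρ / (32 * K * 2^(N+1)) := by
        rw [div_div]; congr 1; ring
      rw [e1] at h2
      have h3 : ρ / (32 * K * 2^(N+1)) ≤ ρ / (32 * K) := by
        apply div_le_div_of_nonneg_left hρ.le (by positivity)
        exact le_mul_of_one_le_right (by positivity) (one_le_pow₀ (by norm_num))
      have hq : (0:ℝ) ≤ (ρ / (32 * K * 2^(N+1)))^N := by positivity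
      calc _ = (ρ / (32 * K * 2^(N+1)))^N * (ρ / (32 * K * 2^(N+1)) * (T j).card) := by ring
        _ ≤ (ρ / (32 * K * 2^(N+1)))^N * (ρ / (32 * K) * (T j).card) := by gcongr
        _ ≤ (ρ / (32 * K * 2^(N+1)))^N * (T1 j).card := by gcongr
        _ ≤ _ := h2

lemma pigeon {ι γ : Type*} [Fintype γ] [Nonempty γ] (T : Finset ι) (f : ι → γ) :
    ∃ g : γ, T.card ≤ Fintype.card γ * (T.filter (fun t => f t = g)).card := by
  obtain ⟨g, -, hg⟩ := (Finset.univ : Finset γ).exists_max_image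
    (fun g => (T.filter (fun t => f t = g)).card) Finset.univ_nonempty
  refine ⟨g, ?_⟩
  rw [Finset.card_eq_sum_card_fiberwise (f := f) (t := Finset.univ) (s := T)
    (fun _ _ => Finset.mem_coe.2 (Finset.mem_univ _))]
  exact (Finset.sum_le_card_nsmul _ _ _ (fun x hx => hg x hx)).trans (by simp)

/-- majority lemma -/
lemma majority {γ : Type*} [Fintype γ] [Nonempty γ] (J : Finset ℕ) (T : ℕ → Finset V)
    (f : ℕ → V → γ) :
    ∃ g : γ, ∃ J' ⊆ J, J.card ≤ Fintype.card γ * J'.card ∧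
      ∀ j ∈ J', (T j).card ≤ Fintype.card γ * ((T j).filter (fun t => f j t = g)).card := by
  choose c hc using fun j => pigeon (T j) (f j)
  obtain ⟨g, hg⟩ := pigeon J c
  refine ⟨g, J.filter (fun j => c j = g), Finset.filter_subset _ _, hg, ?_⟩
  intro j hj
  rw [Finset.mem_filter] at hj
  rw [← hj.2]
  exact hc j

end Aux3

section Aux4
open scoped Classical
open Filter

structure BK {V : Type} (G : SimpleGraph V) (n c : ℝ) (I : Finset ℕ) (A : ℕ → Finset V)
    (σ lam : ℝ) : Prop where
  disj : ∀ i ∈ I, ∀ j ∈ I, i ≠ j → Disjoint (A i) (A j)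
  low : ∀ i ∈ I, n ^ (1 - σ) ≤ (A i).card
  up : ∀ i ∈ I, ((A i).card : ℝ) ≤ n
  link : ∀ i ∈ I, ∀ j ∈ I, i ≠ j → ∀ t ∈ A i, (dg G t (A j) : ℝ) ≤ lam * (A j).card
  coh : ∀ i ∈ I, ∀ j ∈ I, i ≠ j → ∀ X ⊆ A i, ∀ Z ⊆ A j, n ^ (1 - c) ≤ (X.card : ℝ) →
    n ^ (1 - c) ≤ (Z.card : ℝ) → ∃ x ∈ X, ∃ z ∈ Z, G.Adj x z

variable {V : Type} {G : SimpleGraph V} {n c σ lam : ℝ} {I : Finset ℕ} {A : ℕ → Finset V}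

lemma BK.sub (h : BK G n c I A σ lam) {I' : Finset ℕ} {A' : ℕ → Finset V} {σ' lam' : ℝ}
    (hI : I' ⊆ I) (hA : ∀ i ∈ I', A' i ⊆ A i) (hlow : ∀ i ∈ I', n ^ (1 - σ') ≤ (A' i).card)
    (hlink : ∀ i ∈ I', ∀ j ∈ I', i ≠ j → ∀ t ∈ A' i, (dg G t (A' j) : ℝ) ≤ lam' * (A' j).card) :
    BK G n c I' A' σ' lam' where
  disj i hi j hj hij := Finset.disjoint_of_subset_left (hA i hi)
    (Finset.disjoint_of_subset_right (hA j hj) (h.disj i (hI hi) j (hI hj) hij))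
  low := hlow
  up i hi := le_trans (by exact_mod_cast Finset.card_le_card (hA i hi)) (h.up i (hI hi))
  link := hlink
  coh i hi j hj hij X hX Z hZ := h.coh i (hI hi) j (hI hj) hij X (hX.trans (hA i hi)) Z
    (hZ.trans (hA j hj))

lemma dg_shrink {x : V} {B C : Finset V} {lam θ : ℝ} (hθ : 0 < θ) (hl : 0 ≤ lam) (hBC : C ⊆ B)
    (hc : θ * B.card ≤ C.card) (hx : (dg G x B : ℝ) ≤ lam * B.card) :
    (dg G x C : ℝ) ≤ lam / θ * C.card := by
  have h1 : (dg G x C : ℝ) ≤ dg G x B := by exact_mod_cast dg_mono hBC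
  calc (dg G x C : ℝ) ≤ lam * B.card := h1.trans hx
    _ = lam / θ * (θ * B.card) := by field_simp
    _ ≤ _ := mul_le_mul_of_nonneg_left hc (by positivity)

lemma BK.shrink (h : BK G n c I A σ lam) {I' : Finset ℕ} {A' : ℕ → Finset V} {Δ θ : ℝ}
    (hn : 0 < n) (hθ : 0 < θ) (hl : 0 ≤ lam) (hΔ : n ^ (-Δ) ≤ θ)
    (hI : I' ⊆ I) (hA : ∀ i ∈ I', A' i ⊆ A i) (hc : ∀ i ∈ I', θ * (A i).card ≤ (A' i).card) :
    BK G n c I' A' (σ + Δ) (lam / θ) := by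
  refine h.sub hI hA ?_ ?_
  · intro i hi
    refine le_trans ?_ (hc i hi)
    have e : (1 - (σ + Δ)) = -Δ + (1 - σ) := by ring
    rw [e, Real.rpow_add hn]
    exact mul_le_mul hΔ (h.low i (hI hi)) (by positivity) hθ.le
  · intro i hi j hj hij t ht
    exact dg_shrink hθ hl (hA j hj) (hc j hj) (h.link i (hI hi) j (hI hj) hij t (hA i hi ht))

lemma BK.mono (h : BK G n c I A σ lam) {I' : Finset ℕ} (hI : I' ⊆ I) {σ' lam' : ℝ} (hn : 1 ≤ n)
    (hσ : σ ≤ σ') (hl : lam ≤ lam') : BK G n c I' A σ' lam' :=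
  h.sub hI (fun _ _ => subset_rfl)
    (fun i hi => le_trans (Real.rpow_le_rpow_of_exponent_le hn (by linarith)) (h.low i (hI hi)))
    (fun i hi j hj hij t ht => (h.link i (hI hi) j (hI hj) hij t ht).trans
      (mul_le_mul_of_nonneg_right hl (Nat.cast_nonneg _)))

lemma BK.pos (h : BK G n c I A σ lam) (hn : 0 < n) {i : ℕ} (hi : i ∈ I) : 0 < (A i).card := by
  have h1 := h.low i hi
  have h2 : 0 < n ^ (1 - σ) := Real.rpow_pos_of_pos hn _
  exact_mod_cast lt_of_lt_of_le h2 h1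

lemma ev_small {θ Δ : ℝ} (hθ : 0 < θ) (hΔ : 0 < Δ) : ∀ᶠ n : ℝ in atTop, n ^ (-Δ) ≤ θ := by
  have := (tendsto_rpow_neg_atTop hΔ).eventually (gt_mem_nhds hθ)
  filter_upwards [this] with n hn using le_of_lt hn

lemma ev_large {θ Δ : ℝ} (hΔ : 0 < Δ) : ∀ᶠ n : ℝ in atTop, θ ≤ n ^ Δ :=
  (tendsto_rpow_atTop hΔ).eventually_ge_atTop θ

set_option maxHeartbeats 800000 in
lemma land (s K' : ℕ) (Δ lam' : ℝ) (hΔ : 0 < Δ) (hlam' : 0 < lam') :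
    ∃ (K : ℕ) (lam : ℝ), 0 < lam ∧ ∀ᶠ n : ℝ in atTop,
    ∀ ⦃V : Type⦄ (G : SimpleGraph V) (c σ : ℝ) (J : Finset ℕ) (T : ℕ → Finset V)
      (X : Fin s → Finset V), BK G n c J T σ lam → K ≤ J.card →
      (∀ a, ((X a).card : ℝ) ≤ n) →
      (∀ a, ∀ x ∈ X a, ∀ j ∈ J, (dg G x (T j) : ℝ) ≤ lam * (T j).card) →
      (∀ a, ∀ j ∈ J, ∀ t ∈ T j, ∃ x ∈ X a, G.Adj x t) →
      ∃ J' ⊆ J, K' ≤ J'.card ∧ ∃ T' : ℕ → Finset V, (∀ j ∈ J', T' j ⊆ T j) ∧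
        BK G n c J' T' (σ + Δ) lam' ∧ ∃ Y : Fin s → ℕ → Finset V,
          (∀ a j, j ∈ J' → Y a j ⊆ X a) ∧
          (∀ a, ∀ j ∈ J', ∀ t ∈ T' j, ∃ y ∈ Y a j, G.Adj y t) ∧
          (∀ a, ∀ j ∈ J', ∀ i ∈ J', i ≠ j → ∀ t ∈ T' i, ∀ y ∈ Y a j, ¬ G.Adj y t) := by
  obtain ⟨M, hM⟩ : ∃ M : ℕ, M = s * K' := ⟨_, rfl⟩
  obtain ⟨Ke, hKe⟩ : ∃ Ke : ℝ, Ke = M + K' + 1 := ⟨_, rfl⟩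
  have hKe1 : 1 ≤ Ke := by rw [hKe]; have : (0:ℝ) ≤ M := Nat.cast_nonneg _
                           have : (0:ℝ) ≤ K' := Nat.cast_nonneg _
                           linarith
  have hKe0 : 0 < Ke := by linarith
  obtain ⟨η, hη⟩ : ∃ η : ℝ, η = Δ / (2 * (M + 1)) := ⟨_, rfl⟩
  have hη0 : 0 < η := by rw [hη]; positivity
  have hηM : η * M ≤ Δ / 2 := by
    rw [hη, div_mul_eq_mul_div, div_le_div_iff₀ (by positivity) (by norm_num)]
    nlinarith
  obtain ⟨B, hB⟩ : ∃ B : ℕ, B = ⌊1/η⌋₊ + 1 := ⟨_, rfl⟩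
  obtain ⟨Q, hQ⟩ : ∃ Q : ℝ, Q = ((B ^ s : ℕ) : ℝ) := ⟨_, rfl⟩
  have hB0 : 0 < B := by omega
  have hQ0 : 0 < Q := by rw [hQ]; exact_mod_cast pow_pos hB0 s
  obtain ⟨P, hP⟩ : ∃ P : ℝ, P = (32 * Ke^2)^M := ⟨_, rfl⟩
  have hP0 : 0 < P := by rw [hP]; positivity
  obtain ⟨θ, hθ⟩ : ∃ θ : ℝ, θ = (1 / (32 * Ke * 2^M))^M * (1 / Q) := ⟨_, rfl⟩
  have hθ0 : 0 < θ := by rw [hθ]; positivity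
  refine ⟨B^s * K', min lam' (1/(4*Ke)) / (Q * P), by positivity, ?_⟩
  filter_upwards [ev_small hθ0 (half_pos hΔ), eventually_gt_atTop 1] with n hn1 hn2 V G c σ J T X hBK hJ hX hxl hcov
  have hn0 : 0 < n := by linarith
  have hlog : 0 < Real.log n := Real.log_pos hn2
  obtain ⟨lam, hlam⟩ : ∃ lam : ℝ, lam = min lam' (1/(4*Ke)) / (Q * P) := ⟨_, rfl⟩
  have hlam0 : 0 < lam := by rw [hlam]; positivity
  rw [← hlam] at hBK hxl
  -- bucket function
  let bk : Fin s → V → ℕ := fun a t => ⌊Real.log (dg G t (X a)) / (η * Real.log n)⌋₊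
  let f : ℕ → V → (Fin s → Fin B) := fun _ t a => if h : bk a t < B then ⟨bk a t, h⟩ else ⟨0, hB0⟩
  haveI : Nonempty (Fin s → Fin B) := ⟨fun _ => ⟨0, hB0⟩⟩
  obtain ⟨g, J1, hJ1, hJ1c, hT1⟩ := majority J T f
  have hcardg : Fintype.card (Fin s → Fin B) = B ^ s := by simp
  rw [hcardg] at hJ1c hT1
  obtain ⟨J', hJ'1, hJ'c⟩ := Finset.exists_subset_card_eq (s := J1) (n := K')
    (Nat.le_of_mul_le_mul_left (hJ.trans hJ1c) (pow_pos hB0 s))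
  have hJ'J := hJ'1.trans hJ1
  obtain ⟨T1, hT1d⟩ : ∃ T1 : ℕ → Finset V, T1 = fun j => (T j).filter (fun t => f j t = g) := ⟨_, rfl⟩
  have hT1s : ∀ j, T1 j ⊆ T j := fun j => by rw [hT1d]; exact Finset.filter_subset _ _
  have hT1c : ∀ j ∈ J', 1 / Q * (T j).card ≤ (T1 j).card := by
    intro j hj
    have := hT1 j (hJ'1 hj)
    have h2 : ((T j).card : ℝ) ≤ Q * (T1 j).card := by
      have h3 : (T j).card ≤ B ^ s * (T1 j).card := by rw [hT1d]; convert this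
      rw [hQ]; exact_mod_cast h3
    rw [one_div, inv_mul_le_iff₀ hQ0]; exact h2
  have hdeg : ∀ a, ∀ j ∈ J, ∀ t ∈ T1 j, n ^ (η * (g a : ℕ)) ≤ dg G t (X a) ∧
      (dg G t (X a) : ℝ) ≤ n ^ (η * (g a : ℕ)) * n ^ η := by
    intro a j hj t ht
    rw [hT1d, Finset.mem_filter] at ht
    have hd1 : 1 ≤ dg G t (X a) := by
      obtain ⟨x, hx, hxt⟩ := hcov a j hj t ht.1
      exact Finset.card_pos.2 ⟨x, Finset.mem_filter.2 ⟨hx, hxt.symm⟩⟩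
    have hd1' : (1:ℝ) ≤ dg G t (X a) := by exact_mod_cast hd1
    have hdpos : (0:ℝ) < dg G t (X a) := by linarith
    have hdn : (dg G t (X a) : ℝ) ≤ n := le_trans
      (by exact_mod_cast Finset.card_le_card (Finset.filter_subset _ _)) (hX a)
    have hln0 : 0 ≤ Real.log (dg G t (X a)) := Real.log_nonneg hd1'
    have hln1 : Real.log (dg G t (X a)) ≤ Real.log n := Real.log_le_log hdpos hdn
    have hηl : 0 < η * Real.log n := by positivity
    have hbB : bk a t < B := by
      rw [hB]
      apply Nat.lt_succ_of_le
      apply Nat.floor_le_floor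
      rw [div_le_div_iff₀ hηl hη0]
      nlinarith
    have hga : (g a : ℕ) = bk a t := by
      rw [← ht.2]
      simp only [f]
      rw [dif_pos hbB]
    have hfl1 := Nat.floor_le (a := Real.log (dg G t (X a)) / (η * Real.log n)) (by positivity)
    have hfl2 := Nat.lt_floor_add_one (Real.log (dg G t (X a)) / (η * Real.log n))
    rw [le_div_iff₀ hηl] at hfl1
    rw [div_lt_iff₀ hηl] at hfl2
    rw [← Real.rpow_add hn0, Real.rpow_def_of_pos hn0, Real.rpow_def_of_pos hn0,
      ← Real.le_log_iff_exp_le hdpos, ← Real.log_le_iff_le_exp hdpos, hga]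
    constructor
    · refine le_trans (le_of_eq ?_) hfl1; simp only [bk]; ring
    · refine le_trans hfl2.le (le_of_eq ?_); simp only [bk]; ring
  have hTpos : ∀ j ∈ J', (0:ℝ) < (T j).card := fun j hj => by
    exact_mod_cast hBK.pos hn0 (hJ'J hj)
  have hPS : PS G J' T1 ((Finset.univ : Finset (Fin s)) ×ˢ J') (fun e => e.2) (fun e => X e.1)
      (fun e => n ^ (η * (g e.1 : ℕ))) (fun e => n ^ (η * (g e.1 : ℕ)) * n ^ η) (lam * Q) := by
    refine ⟨?_, ?_, ?_, ?_, ?_, ?_⟩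
    · intro j hj
      apply Finset.card_pos.1
      have : (0:ℝ) < (T1 j).card := lt_of_lt_of_le (by have := hTpos j hj; positivity) (hT1c j hj)
      exact_mod_cast this
    · intro i hi j hj hij t ht
      have := dg_shrink (G := G) (one_div_pos.2 hQ0) hlam0.le (hT1s j) (hT1c j hj)
        (hBK.link i (hJ'J hi) j (hJ'J hj) hij t (hT1s i ht))
      rwa [div_div_eq_mul_div, div_one] at this
    · intro e he; exact (Finset.mem_product.1 he).2
    · intro e he x hx i hi hie
      have := dg_shrink (G := G) (one_div_pos.2 hQ0) hlam0.le (hT1s i) (hT1c i hi)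
        (hxl e.1 x hx i (hJ'J hi))
      rwa [div_div_eq_mul_div, div_one] at this
    · intro e he t ht
      exact (hdeg e.1 e.2 (hJ'J (Finset.mem_product.1 he).2) t ht).1
    · intro e he i hi _ t ht
      exact (hdeg e.1 i (hJ'J hi) t ht).2
  have hMe : ((Finset.univ : Finset (Fin s)) ×ˢ J').card = M := by
    rw [Finset.card_product, Finset.card_univ, Fintype.card_fin, hJ'c, hM]
  have hlQP : lam * Q * P = min lam' (1/(4*Ke)) := by rw [hlam]; field_simp
  obtain ⟨T', Y, hT's, hYs, hYc, hYa, hl', hc'⟩ := pl_iter (G := G) (tg := fun e : Fin s × ℕ => e.2)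
    (U := fun e => n ^ (η * (g e.1 : ℕ)) * n ^ η) hKe1 (J := J')
    (by rw [hJ'c, hKe]; have : (0:ℝ) ≤ M := Nat.cast_nonneg _
        linarith) M T1 ((Finset.univ : Finset (Fin s)) ×ˢ J')
    (fun e => X e.1) (fun e => n ^ (η * (g e.1 : ℕ))) (lam * Q) (n ^ (-η)) hMe
    (by rw [hKe]; have : (0:ℝ) ≤ K' := Nat.cast_nonneg _
        linarith) hPS (by positivity)
    (by rw [← hP, hlQP]
        calc Ke * min lam' (1/(4*Ke)) ≤ Ke * (1/(4*Ke)) :=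
              mul_le_mul_of_nonneg_left (min_le_right _ _) hKe0.le
          _ = 1/4 := by field_simp)
    (by positivity) (Real.rpow_le_one_of_one_le_of_nonpos hn2.le (by linarith))
    (fun e _ => by positivity) (fun e _ => by positivity)
    (fun e _ => by
      rw [Real.rpow_neg hn0.le]
      have : n ^ η ≠ 0 := (Real.rpow_pos_of_pos hn0 _).ne'
      apply le_of_eq; field_simp)
  rw [← hP, hlQP] at hl'
  refine ⟨J', hJ'J, hJ'c.ge, T', fun j hj => (hT's j hj).trans (hT1s j), ?_,
    fun a j => Y (a, j), ?_, ?_, ?_⟩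
  · refine hBK.sub hJ'J (fun j hj => (hT's j hj).trans (hT1s j)) ?_ ?_
    · intro j hj
      refine le_trans ?_ (hc' j hj)
      have e1 : (n ^ (-η) / (32 * Ke * 2^M))^M = n ^ (-(η * M)) * (1 / (32 * Ke * 2^M))^M := by
        rw [div_eq_mul_one_div, mul_pow, ← Real.rpow_mul_natCast hn0.le]
        congr 2; ring
      rw [e1]
      have e2 : (1 - (σ + Δ)) = -(Δ/2) + (-(Δ/2) + (1 - σ)) := by ring
      rw [e2, Real.rpow_add hn0, Real.rpow_add hn0]
      have h3 : n ^ (-(Δ/2)) ≤ n ^ (-(η * M)) := Real.rpow_le_rpow_of_exponent_le hn2.le (by linarith)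
      have h4 : 1 / Q * n ^ (1 - σ) ≤ (T1 j).card :=
        le_trans (mul_le_mul_of_nonneg_left (hBK.low j (hJ'J hj)) (by positivity)) (hT1c j hj)
      have h5 : 0 < n ^ (1 - σ) := Real.rpow_pos_of_pos hn0 _
      calc _ ≤ n ^ (-(Δ/2)) * (θ * n ^ (1 - σ)) := by gcongr
        _ = n ^ (-(Δ/2)) * (1 / (32 * Ke * 2^M))^M * (1 / Q * n ^ (1 - σ)) := by rw [hθ]; ring
        _ ≤ n ^ (-(η * M)) * (1 / (32 * Ke * 2^M))^M * (T1 j).card := by gcongr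
    · intro i hi j hj hij t ht
      refine (hl' i hi j hj hij t ht).trans (mul_le_mul_of_nonneg_right (min_le_left _ _) (Nat.cast_nonneg _))
  · intro a j hj
    exact hYs (a, j) (Finset.mem_product.2 ⟨Finset.mem_univ _, hj⟩)
  · intro a j hj t ht
    exact hYc (a, j) (Finset.mem_product.2 ⟨Finset.mem_univ _, hj⟩) t ht
  · intro a j hj i hi hij t ht y hy
    exact hYa (a, j) (Finset.mem_product.2 ⟨Finset.mem_univ _, hj⟩) i hi hij t ht y hy

end Aux4

section Aux5
open scoped Classical
open Filter

variable {V : Type} {G : SimpleGraph V}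

lemma nb_mono {X Y Z Z' : Finset V} (h : X ⊆ Y) (h' : Z ⊆ Z') : nb G X Z ⊆ nb G Y Z' := by
  intro z hz
  obtain ⟨h1, x, hx, hxz⟩ := mem_nb.1 hz
  exact mem_nb.2 ⟨h' h1, x, h hx, hxz⟩

lemma nb_union (X Y Z : Finset V) : nb G (X ∪ Y) Z = nb G X Z ∪ nb G Y Z := by
  ext z
  simp only [mem_nb, Finset.mem_union]
  constructor
  · rintro ⟨h, x, hx | hx, hxz⟩
    · exact Or.inl ⟨h, x, hx, hxz⟩
    · exact Or.inr ⟨h, x, hx, hxz⟩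
  · rintro (⟨h, x, hx, hxz⟩ | ⟨h, x, hx, hxz⟩)
    · exact ⟨h, x, Or.inl hx, hxz⟩
    · exact ⟨h, x, Or.inr hx, hxz⟩

/-- expanding core -/
lemma core (I : Finset ℕ) (A : ℕ → Finset V) (w m τ : ℝ) (hm : 0 ≤ m) (hτ : 0 ≤ τ)
    (hw : ∀ i ∈ I, w ≤ (A i).card)
    (hcoh : ∀ i ∈ I, ∀ j ∈ I, i ≠ j → ∀ X ⊆ A i, ∀ Z ⊆ A j, m ≤ (X.card : ℝ) →
      m ≤ (Z.card : ℝ) → ∃ x ∈ X, ∃ z ∈ Z, G.Adj x z)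
    (h1 : I.card * m ≤ w / 2) (h2 : 2 * τ * m ≤ w / 4) (h3 : m ≤ w / 4) :
    ∃ B : ℕ → Finset V, (∀ i ∈ I, B i ⊆ A i) ∧ (∀ i ∈ I, ((A i).card : ℝ) - I.card * m ≤ (B i).card) ∧
      ∀ i ∈ I, ∀ j ∈ I, i ≠ j → ∀ X ⊆ B i, (X.card : ℝ) ≤ m → τ * X.card ≤ (nb G X (B j)).card := by
  let Bf : (ℕ → ℕ → Finset V) → ℕ → Finset V := fun U i => A i \ I.biUnion (fun j => U i j)
  let Val : (ℕ → ℕ → Finset V) → Prop := fun U =>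
    (∀ i ∈ I, ∀ j ∈ I, U i j ⊆ A i) ∧ (∀ i ∈ I, ∀ j ∈ I, ((U i j).card : ℝ) ≤ m) ∧
    (∀ i ∈ I, ∀ j ∈ I, i ≠ j → ((nb G (U i j) (Bf U j)).card : ℝ) ≤ τ * (U i j).card)
  let tot : (ℕ → ℕ → Finset V) → ℕ := fun U => ∑ p ∈ I ×ˢ I, (U p.1 p.2).card
  have hne : {k | ∃ U, Val U ∧ tot U = k}.Nonempty := by
    refine ⟨_, fun _ _ => ∅, ⟨?_, ?_, ?_⟩, rfl⟩
    · intros; exact Finset.empty_subset _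
    · intros; simpa using hm
    · intros; simp [nb]
  have hbd : BddAbove {k | ∃ U, Val U ∧ tot U = k} := by
    refine ⟨∑ p ∈ I ×ˢ I, (A p.1).card, ?_⟩
    rintro k ⟨U, hU, rfl⟩
    apply Finset.sum_le_sum
    intro p hp
    rw [Finset.mem_product] at hp
    exact Finset.card_le_card (hU.1 p.1 hp.1 p.2 hp.2)
  obtain ⟨U, hU, hUtot⟩ := Nat.sSup_mem hne hbd
  have hmax : ∀ U', Val U' → tot U' ≤ tot U := fun U' hU' => by
    rw [hUtot]; exact le_csSup hbd ⟨U', hU', rfl⟩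
  have hBA : ∀ i, Bf U i ⊆ A i := fun i => Finset.sdiff_subset
  have hBc : ∀ i ∈ I, ((A i).card : ℝ) - I.card * m ≤ (Bf U i).card := by
    intro i hi
    have e1 : (A i).card ≤ (Bf U i).card + (I.biUnion (fun j => U i j)).card := by
      have := Finset.le_card_sdiff (I.biUnion (fun j => U i j)) (A i)
      simp only [Bf]; omega
    have e2 : ((I.biUnion (fun j => U i j)).card : ℝ) ≤ I.card * m := by
      calc ((I.biUnion (fun j => U i j)).card : ℝ) ≤ ((∑ j ∈ I, (U i j).card : ℕ) : ℝ) := by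
            exact_mod_cast Finset.card_biUnion_le
        _ = ∑ j ∈ I, ((U i j).card : ℝ) := by push_cast; rfl
        _ ≤ ∑ j ∈ I, m := Finset.sum_le_sum (fun j hj => hU.2.1 i hi j hj)
        _ = _ := by rw [Finset.sum_const, nsmul_eq_mul]
    have e3 : ((A i).card : ℝ) ≤ (Bf U i).card + (I.biUnion (fun j => U i j)).card := by
      exact_mod_cast e1
    linarith
  refine ⟨Bf U, fun i _ => hBA i, hBc, ?_⟩
  intro i hi j hj hij X hX hXm
  by_contra hlt
  push Not at hlt
  have hXne : 0 < X.card := by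
    by_contra h0
    have : X.card = 0 := by omega
    rw [this] at hlt
    simp at hlt
    exact absurd hlt (not_lt.2 (Nat.cast_nonneg _))
  have hdis : Disjoint (U i j) X := by
    rw [Finset.disjoint_right]
    intro x hx hxU
    have := hX hx
    simp only [Bf, Finset.mem_sdiff, Finset.mem_biUnion, not_exists, not_and] at this
    exact this.2 j hj hxU
  have hUX : ((U i j ∪ X).card : ℝ) = (U i j).card + X.card := by
    rw [Finset.card_union_of_disjoint hdis]; push_cast; rfl
  have hnbU : ((nb G (U i j ∪ X) (Bf U j)).card : ℝ) ≤ τ * (U i j ∪ X).card := by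
    rw [nb_union]
    have := Finset.card_union_le (nb G (U i j) (Bf U j)) (nb G X (Bf U j))
    have : ((nb G (U i j) (Bf U j) ∪ nb G X (Bf U j)).card : ℝ) ≤
      (nb G (U i j) (Bf U j)).card + (nb G X (Bf U j)).card := by exact_mod_cast this
    have h5 := hU.2.2 i hi j hj hij
    rw [hUX]
    linarith
  by_cases hbig : m < ((U i j ∪ X).card : ℝ)
  · -- coherence contradiction
    have hZ : m ≤ ((Bf U j \ nb G (U i j ∪ X) (Bf U j)).card : ℝ) := by
      have e1 := Finset.le_card_sdiff (nb G (U i j ∪ X) (Bf U j)) (Bf U j)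
      have e2 : ((Bf U j).card : ℝ) ≤ (Bf U j \ nb G (U i j ∪ X) (Bf U j)).card +
          (nb G (U i j ∪ X) (Bf U j)).card := by
        exact_mod_cast (by omega : (Bf U j).card ≤ (Bf U j \ nb G (U i j ∪ X) (Bf U j)).card +
          (nb G (U i j ∪ X) (Bf U j)).card)
      have e3 := hBc j hj
      have e4 := hw j hj
      have e5 := hU.2.1 i hi j hj
      have e6 : τ * ((U i j ∪ X).card : ℝ) ≤ 2 * τ * m := by rw [hUX]; nlinarith
      linarith
    obtain ⟨x, hx, z, hz, hxz⟩ := hcoh i hi j hj hij (U i j ∪ X)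
      (Finset.union_subset (hU.1 i hi j hj) (hX.trans (hBA i))) _
      (Finset.sdiff_subset.trans (hBA j)) hbig.le hZ
    rw [Finset.mem_sdiff] at hz
    exact hz.2 (mem_nb.2 ⟨hz.1, x, hx, hxz⟩)
  · push Not at hbig
    obtain ⟨U', hU'⟩ : ∃ U' : ℕ → ℕ → Finset V, U' = fun a b => if a = i ∧ b = j then U i j ∪ X else U a b :=
      ⟨_, rfl⟩
    have hU'1 : U' i j = U i j ∪ X := by rw [hU']; simp
    have hU'2 : ∀ a b, ¬ (a = i ∧ b = j) → U' a b = U a b := fun a b h => by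
      rw [hU']; exact if_neg h
    have hsub : ∀ a b, U a b ⊆ U' a b := by
      intro a b
      by_cases h : a = i ∧ b = j
      · rw [h.1, h.2, hU'1]; exact Finset.subset_union_left
      · rw [hU'2 a b h]
    have hBsub : ∀ a, Bf U' a ⊆ Bf U a := fun a =>
      Finset.sdiff_subset_sdiff subset_rfl (Finset.biUnion_mono (fun b _ => hsub a b))
    have hval : Val U' := by
      refine ⟨?_, ?_, ?_⟩
      · intro a ha b hb
        by_cases h : a = i ∧ b = j
        · rw [h.1, h.2, hU'1]
          exact Finset.union_subset (hU.1 i hi j hj) (hX.trans (hBA i))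
        · rw [hU'2 a b h]; exact hU.1 a ha b hb
      · intro a ha b hb
        by_cases h : a = i ∧ b = j
        · rw [h.1, h.2, hU'1]; exact hbig
        · rw [hU'2 a b h]; exact hU.2.1 a ha b hb
      · intro a ha b hb hab
        by_cases h : a = i ∧ b = j
        · rw [h.1, h.2, hU'1]
          refine le_trans ?_ hnbU
          exact_mod_cast Finset.card_le_card (nb_mono subset_rfl (hBsub j))
        · rw [hU'2 a b h]
          refine le_trans ?_ (hU.2.2 a ha b hb hab)
          exact_mod_cast Finset.card_le_card (nb_mono subset_rfl (hBsub b))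
    have hlt2 : tot U < tot U' := by
      apply Finset.sum_lt_sum
      · intro p _; exact Finset.card_le_card (hsub p.1 p.2)
      · refine ⟨(i, j), Finset.mem_product.2 ⟨hi, hj⟩, ?_⟩
        simp only [hU'1, Finset.card_union_of_disjoint hdis]
        omega
    exact absurd (hmax U' hval) (not_le.2 hlt2)

structure Chain (G : SimpleGraph V) (B : ℕ → Finset V) (v : V) (I1 : Finset ℕ)
    (L : ℕ → Finset V) (q : ℕ → ℕ) (k : ℕ) : Prop where
  L0 : L 0 = {v}
  mem : ∀ a, 1 ≤ a → a ≤ k → q a ∈ I1 ∧ L a ⊆ B (q a)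
  inj : ∀ a b, 1 ≤ a → a ≤ k → 1 ≤ b → b ≤ k → q a = q b → a = b
  cov : ∀ a, a < k → ∀ y ∈ L (a+1), ∃ x ∈ L a, G.Adj x y
  anti : ∀ a b, a + 2 ≤ b → b ≤ k → ∀ x ∈ L a, ∀ y ∈ L b, ¬ G.Adj x y

lemma chain {B : ℕ → Finset V} {i0 : ℕ} {I1 : Finset ℕ} {v : V} {m τ : ℝ} {R : ℕ}
    (hv : v ∈ B i0) (hi0 : i0 ∉ I1) (hR : R ≤ I1.card) (hR1 : 1 ≤ R) (hm1 : 1 < m) (hτ : 4 ≤ τ)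
    (hτm : m ≤ (τ/2)^R)
    (hexp : ∀ i ∈ insert i0 I1, ∀ j ∈ I1, i ≠ j → ∀ X ⊆ B i, (X.card : ℝ) ≤ m →
      τ * X.card ≤ (nb G X (B j)).card) :
    ∃ k L q, 1 ≤ k ∧ k ≤ R ∧ Chain G B v I1 L q k ∧ m ≤ ((L k).card : ℝ) := by
  by_contra hno
  have key : ∀ i ≤ R, ∃ L q, Chain G B v I1 L q i ∧ (τ/2)^i ≤ ((L i).card : ℝ) ∧
      ∀ p ∈ I1, (∀ a, 1 ≤ a → a ≤ i → q a ≠ p) →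
        ((nb G ((Finset.range i).biUnion L) (B p)).card : ℝ) ≤ 2 * (L i).card := by
    intro i
    induction i with
    | zero =>
      intro _
      refine ⟨fun _ => {v}, fun _ => 0, ⟨rfl, ?_, ?_, ?_, ?_⟩, by simp, ?_⟩
      · intro a h1 h2; omega
      · intro a b h1 h2; omega
      · intro a h1; omega
      · intro a b h1 h2; omega
      · intro p _ _; simp [nb]
    | succ i ih =>
      intro hiR
      obtain ⟨L, q, hC, hsz, hinv⟩ := ih (by omega)
      have hlt : ((L i).card : ℝ) < m := by
        by_contra hge
        push Not at hge
        rcases Nat.eq_zero_or_pos i with h0 | h0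
        · subst h0
          rw [hC.L0] at hge
          simp at hge
          linarith
        · exact hno ⟨i, L, q, h0, by omega, hC, hge⟩
      obtain ⟨UN, hUN⟩ : ∃ UN, UN = I1 \ (Finset.Icc 1 i).image q := ⟨_, rfl⟩
      have hUNne : UN.Nonempty := by
        rw [← Finset.card_pos, hUN]
        have h1 := Finset.le_card_sdiff ((Finset.Icc 1 i).image q) I1
        have h2 : ((Finset.Icc 1 i).image q).card ≤ i := Finset.card_image_le.trans (by simp)
        omega
      have hUNmem : ∀ p ∈ UN, p ∈ I1 ∧ ∀ a, 1 ≤ a → a ≤ i → q a ≠ p := by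
        intro p hp
        rw [hUN, Finset.mem_sdiff, Finset.mem_image] at hp
        refine ⟨hp.1, fun a h1 h2 h3 => hp.2 ⟨a, Finset.mem_Icc.2 ⟨h1, h2⟩, h3⟩⟩
      let nw : ℕ → Finset V := fun p => nb G (L i) (B p) \ nb G ((Finset.range i).biUnion L) (B p)
      obtain ⟨p, hpUN, hpmax⟩ := UN.exists_max_image (fun p => (nw p).card) hUNne
      have hpI := hUNmem p hpUN
      have hLi : ∃ r ∈ insert i0 I1, r ≠ p ∧ L i ⊆ B r := by
        rcases Nat.eq_zero_or_pos i with h0 | h0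
        · subst h0
          refine ⟨i0, Finset.mem_insert_self _ _, ?_, ?_⟩
          · rintro rfl; exact hi0 hpI.1
          · rw [hC.L0]; simpa using hv
        · have := hC.mem i h0 le_rfl
          exact ⟨q i, Finset.mem_insert_of_mem this.1, hpI.2 i h0 le_rfl, this.2⟩
      obtain ⟨r, hr, hrp, hLr⟩ := hLi
      have hnw : ((τ/2) * (L i).card : ℝ) ≤ (nw p).card := by
        have e1 := hexp r hr p hpI.1 hrp (L i) hLr hlt.le
        have e2 := hinv p hpI.1 hpI.2
        have e3 := Finset.le_card_sdiff (nb G ((Finset.range i).biUnion L) (B p)) (nb G (L i) (B p))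
        have e4 : ((nb G (L i) (B p)).card : ℝ) ≤ (nw p).card +
            (nb G ((Finset.range i).biUnion L) (B p)).card := by
          exact_mod_cast (by simp only [nw]; omega : (nb G (L i) (B p)).card ≤ (nw p).card +
            (nb G ((Finset.range i).biUnion L) (B p)).card)
        have e5 : (0:ℝ) ≤ (L i).card := Nat.cast_nonneg _
        nlinarith
      obtain ⟨L', hL'⟩ : ∃ L', L' = Function.update L (i+1) (nw p) := ⟨_, rfl⟩
      obtain ⟨q', hq'⟩ : ∃ q', q' = Function.update q (i+1) p := ⟨_, rfl⟩
      have hL1 : L' (i+1) = nw p := by rw [hL']; simp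
      have hL2 : ∀ a, a ≤ i → L' a = L a := fun a ha => by
        rw [hL', Function.update_of_ne]; omega
      have hq1 : q' (i+1) = p := by rw [hq']; simp
      have hq2 : ∀ a, a ≤ i → q' a = q a := fun a ha => by
        rw [hq', Function.update_of_ne]; omega
      refine ⟨L', q', ⟨?_, ?_, ?_, ?_, ?_⟩, ?_, ?_⟩
      · rw [hL2 0 (by omega)]; exact hC.L0
      · intro a h1 h2
        rcases Nat.lt_or_ge i a with h | h
        · have : a = i + 1 := by omega
          subst this
          rw [hL1, hq1]
          exact ⟨hpI.1, Finset.sdiff_subset.trans (nb_subset _ _)⟩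
        · rw [hL2 a h, hq2 a h]; exact hC.mem a h1 h
      · intro a b ha1 ha2 hb1 hb2 hab
        rcases Nat.lt_or_ge i a with h | h <;> rcases Nat.lt_or_ge i b with h' | h'
        · omega
        · have : a = i + 1 := by omega
          subst this
          rw [hq1, hq2 b h'] at hab
          exact absurd hab.symm (hpI.2 b hb1 h')
        · have : b = i + 1 := by omega
          subst this
          rw [hq1, hq2 a h] at hab
          exact absurd hab (hpI.2 a ha1 h)
        · rw [hq2 a h, hq2 b h'] at hab
          exact hC.inj a b ha1 h hb1 h' hab
      · intro a ha y hy
        rcases Nat.lt_or_ge a i with h | h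
        · rw [hL2 _ (by omega)] at hy ⊢
          exact hC.cov a h y hy
        · have : a = i := by omega
          subst this
          rw [hL1] at hy
          rw [hL2 a le_rfl]
          exact (mem_nb.1 (Finset.mem_sdiff.1 hy).1).2
      · intro a b hab hb x hx y hy hxy
        rcases Nat.lt_or_ge i b with h | h
        · have : b = i + 1 := by omega
          subst this
          rw [hL1] at hy
          rw [hL2 a (by omega)] at hx
          have hy' := Finset.mem_sdiff.1 hy
          exact hy'.2 (mem_nb.2 ⟨(mem_nb.1 hy'.1).1, x,
            Finset.mem_biUnion.2 ⟨a, Finset.mem_range.2 (by omega), hx⟩, hxy⟩)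
        · rw [hL2 a (by omega)] at hx
          rw [hL2 b h] at hy
          exact hC.anti a b hab h x hx y hy hxy
      · rw [hL1, pow_succ]
        refine le_trans ?_ hnw
        rw [mul_comm]
        exact mul_le_mul_of_nonneg_left hsz (by linarith)
      · intro p' hp' hun
        have hp'UN : p' ∈ UN := by
          rw [hUN, Finset.mem_sdiff, Finset.mem_image]
          refine ⟨hp', ?_⟩
          rintro ⟨a, ha, rfl⟩
          rw [Finset.mem_Icc] at ha
          exact hun a ha.1 (by omega) (hq2 a ha.2)
        have e1 := hpmax p' hp'UN
        have e2 := hinv p' hp' (hUNmem p' hp'UN).2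
        have e3 : nb G ((Finset.range (i+1)).biUnion L') (B p') ⊆
            nb G ((Finset.range i).biUnion L) (B p') ∪ nw p' := by
          intro z hz
          obtain ⟨h1, x, hx, hxz⟩ := mem_nb.1 hz
          rw [Finset.mem_union]
          by_cases hz2 : z ∈ nb G ((Finset.range i).biUnion L) (B p')
          · exact Or.inl hz2
          · right
            obtain ⟨a, ha, hxa⟩ := Finset.mem_biUnion.1 hx
            rw [Finset.mem_range] at ha
            rw [hL2 a (by omega)] at hxa
            refine Finset.mem_sdiff.2 ⟨mem_nb.2 ⟨h1, x, ?_, hxz⟩, hz2⟩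
            rcases Nat.lt_or_ge a i with h | h
            · exact absurd (mem_nb.2 ⟨h1, x, Finset.mem_biUnion.2 ⟨a, Finset.mem_range.2 h, hxa⟩, hxz⟩) hz2
            · have : a = i := by omega
              rwa [← this]
        have e4 := (Finset.card_le_card e3).trans (Finset.card_union_le _ _)
        have e5 : ((nb G ((Finset.range (i+1)).biUnion L') (B p')).card : ℝ) ≤
            (nb G ((Finset.range i).biUnion L) (B p')).card + (nw p').card := by exact_mod_cast e4
        have e6 : ((nw p').card : ℝ) ≤ (nw p).card := by exact_mod_cast e1
        have e7 : (0:ℝ) ≤ (L i).card := Nat.cast_nonneg _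
        rw [hL1]
        nlinarith
  obtain ⟨L, q, hC, hsz, -⟩ := key R le_rfl
  exact hno ⟨R, L, q, hR1, le_rfl, hC, hτm.trans hsz⟩

lemma chain_hit {L : ℕ → Finset V} {k R : ℕ} (hk : k ≤ R) (A : Finset V) (m : ℝ)
    (hm : m * (R + 2) ≤ A.card) (hcoh : ((A.card : ℝ) - m) ≤ (nb G (L k) A).card) :
    ∃ i ≤ k, ∃ T ⊆ A, (A.card : ℝ) ≤ (R + 2) * T.card ∧ (∀ t ∈ T, ∃ x ∈ L i, G.Adj x t) ∧
      ∀ h < i, ∀ x ∈ L h, ∀ t ∈ T, ¬ G.Adj x t := by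
  let Pr : ℕ → Prop := fun i => ((i:ℝ) + 1) * A.card ≤ (R + 2) * (nb G ((Finset.range (i+1)).biUnion L) A).card
  have hk1 : Pr k := by
    have h1 : ((nb G (L k) A).card : ℝ) ≤ (nb G ((Finset.range (k+1)).biUnion L) A).card := by
      exact_mod_cast Finset.card_le_card (nb_mono (Finset.subset_biUnion_of_mem L (by simp)) subset_rfl)
    have hkR : (k:ℝ) ≤ R := by exact_mod_cast hk
    have h0 : (0:ℝ) ≤ A.card := Nat.cast_nonneg _
    simp only [Pr]
    have h2 : ((R:ℝ) + 2) * ((A.card : ℝ) - m) ≤ (R + 2) * (nb G ((Finset.range (k+1)).biUnion L) A).card :=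
      mul_le_mul_of_nonneg_left (hcoh.trans h1) (by positivity)
    nlinarith
  have hex : ∃ i, Pr i := ⟨k, hk1⟩
  obtain ⟨i, hi⟩ : ∃ i, i = Nat.find hex := ⟨_, rfl⟩
  have hPi : Pr i := hi ▸ Nat.find_spec hex
  have hik : i ≤ k := hi ▸ Nat.find_min' hex hk1
  refine ⟨i, hik, nb G (L i) A \ nb G ((Finset.range i).biUnion L) A,
    Finset.sdiff_subset.trans (nb_subset _ _), ?_, ?_, ?_⟩
  · have e1 : ((R:ℝ) + 2) * (nb G ((Finset.range i).biUnion L) A).card ≤ i * A.card := by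
      rcases Nat.eq_zero_or_pos i with h0 | h0
      · rw [h0]; simp [nb]
      · have := Nat.find_min hex (m := i - 1) (by omega)
        simp only [Pr, not_le] at this
        have e : i - 1 + 1 = i := by omega
        rw [e] at this
        have e2 : (((i - 1 : ℕ) : ℝ) + 1) = i := by exact_mod_cast e
        rw [e2] at this
        exact this.le
    have e3 : nb G ((Finset.range (i+1)).biUnion L) A ⊆ nb G ((Finset.range i).biUnion L) A ∪
        (nb G (L i) A \ nb G ((Finset.range i).biUnion L) A) := by
      rw [Finset.union_sdiff_self_eq_union, ← nb_union]
      apply nb_mono _ subset_rfl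
      rw [Finset.range_add_one, Finset.biUnion_insert, Finset.union_comm]
    have e4 := (Finset.card_le_card e3).trans (Finset.card_union_le _ _)
    have e5 : ((nb G ((Finset.range (i+1)).biUnion L) A).card : ℝ) ≤
      (nb G ((Finset.range i).biUnion L) A).card +
      (nb G (L i) A \ nb G ((Finset.range i).biUnion L) A).card := by exact_mod_cast e4
    simp only [Pr] at hPi
    have : (0:ℝ) < (R:ℝ) + 2 := by positivity
    nlinarith
  · intro t ht
    exact (mem_nb.1 (Finset.mem_sdiff.1 ht).1).2
  · intro h hh x hx t ht hxt
    have ht' := Finset.mem_sdiff.1 ht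
    exact ht'.2 (mem_nb.2 ⟨(mem_nb.1 ht'.1).1, x,
      Finset.mem_biUnion.2 ⟨h, Finset.mem_range.2 hh, hx⟩, hxt⟩)

end Aux5

section Aux6
open scoped Classical
open Filter

variable {V : Type} {G : SimpleGraph V}

/-- labelled induced path of length `l`, interior vertices in distinct blocks from `U` -/
structure LPath (G : SimpleGraph V) (A : ℕ → Finset V) (U : Finset ℕ) (l : ℕ) (p : ℕ → V)
    (κ : ℕ → ℕ) : Prop where
  adj : ∀ a < l, G.Adj (p a) (p (a+1))
  ind : ∀ a b, a + 1 < b → b ≤ l → ¬ G.Adj (p a) (p b)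
  lab : ∀ a, 0 < a → a < l → κ a ∈ U ∧ p a ∈ A (κ a)
  inj : ∀ a b, 0 < a → a < l → 0 < b → b < l → κ a = κ b → a = b

def Tent (G : SimpleGraph V) (A : ℕ → Finset V) (r : V) (l : ℕ) (U J : Finset ℕ)
    (C : ℕ → Finset V) : Prop :=
  ∀ j ∈ J, ∀ t ∈ C j, ∃ p κ, LPath G A U l p κ ∧ p 0 = t ∧ p l = r ∧
    ∀ a, 0 < a → a ≤ l → ∀ i ∈ J, i ≠ j → ∀ s ∈ C i, ¬ G.Adj (p a) s

lemma Tent.mono {A C C' : ℕ → Finset V} {r : V} {l : ℕ} {U J J' : Finset ℕ}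
    (h : Tent G A r l U J C) (hJ : J' ⊆ J) (hC : ∀ j ∈ J', C' j ⊆ C j) : Tent G A r l U J' C' := by
  intro j hj t ht
  obtain ⟨p, κ, h1, h2, h3, h4⟩ := h j (hJ hj) t (hC j hj ht)
  exact ⟨p, κ, h1, h2, h3, fun a ha hal i hi hij s hs => h4 a ha hal i (hJ hi) hij s (hC i hi hs)⟩

lemma chain_path {B : ℕ → Finset V} {v : V} {I1 : Finset ℕ} {L : ℕ → Finset V} {q : ℕ → ℕ} {k : ℕ}
    (hC : Chain G B v I1 L q k) (i : ℕ) : i ≤ k → ∀ y ∈ L i, ∃ p : ℕ → V, p 0 = y ∧ p i = v ∧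
      (∀ a ≤ i, p a ∈ L (i - a)) ∧ ∀ a < i, G.Adj (p a) (p (a+1)) := by
  induction i with
  | zero =>
    intro _ y hy
    rw [hC.L0, Finset.mem_singleton] at hy
    subst hy
    refine ⟨fun _ => y, rfl, rfl, ?_, by simp⟩
    intro a _
    simp [hC.L0]
  | succ i ih =>
    intro hi y hy
    obtain ⟨x, hx, hxy⟩ := hC.cov i (by omega) y hy
    obtain ⟨p, hp0, hpi, hpL, hpa⟩ := ih (by omega) x hx
    refine ⟨fun a => if a = 0 then y else p (a-1), by simp, by simpa using hpi, ?_, ?_⟩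
    · intro a ha
      rcases Nat.eq_zero_or_pos a with h0 | h0
      · subst h0; simpa using hy
      · have h1 : a ≠ 0 := by omega
        simp only [h1, if_false]
        have := hpL (a-1) (by omega)
        have e : i - (a - 1) = i + 1 - a := by omega
        rwa [e] at this
    · intro a ha
      rcases Nat.eq_zero_or_pos a with h0 | h0
      · subst h0; simpa [hp0] using hxy.symm
      · have h1 : a ≠ 0 := by omega
        have h2 : a + 1 ≠ 0 := by omega
        simp only [h1, h2, if_false]
        have := hpa (a-1) (by omega)
        have e : a - 1 + 1 = a + 1 - 1 := by omega
        rwa [e] at this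

lemma chain_tent {A B : ℕ → Finset V} {v : V} {I1 : Finset ℕ} {L : ℕ → Finset V} {q : ℕ → ℕ} {k i : ℕ}
    (hC : Chain G B v I1 L q k) (hik : i ≤ k) (hBA : ∀ a ∈ I1, B a ⊆ A a)
    {J : Finset ℕ} {C : ℕ → Finset V} {Y : ℕ → Finset V}
    (hY : ∀ j ∈ J, Y j ⊆ L i) (hcov : ∀ j ∈ J, ∀ t ∈ C j, ∃ y ∈ Y j, G.Adj y t)
    (hYa : ∀ j ∈ J, ∀ i ∈ J, i ≠ j → ∀ t ∈ C i, ∀ y ∈ Y j, ¬ G.Adj y t)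
    (hLa : ∀ h < i, ∀ x ∈ L h, ∀ j ∈ J, ∀ t ∈ C j, ¬ G.Adj x t) :
    Tent G A v (i+1) I1 J C := by
  intro j hj t ht
  obtain ⟨y, hy, hyt⟩ := hcov j hj t ht
  obtain ⟨p, hp0, hpi, hpL, hpa⟩ := chain_path hC i hik y (hY j hj hy)
  obtain ⟨P, hP⟩ : ∃ P : ℕ → V, P = fun a => if a = 0 then t else p (a-1) := ⟨_, rfl⟩
  have hP0 : P 0 = t := by rw [hP]; simp
  have hP1 : ∀ a, P (a+1) = p a := fun a => by rw [hP]; simp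
  have hPL : ∀ a, 0 < a → a ≤ i + 1 → P a ∈ L (i + 1 - a) := by
    intro a ha hai
    obtain ⟨b, rfl⟩ : ∃ b, a = b + 1 := ⟨a - 1, by omega⟩
    rw [hP1]
    have := hpL b (by omega)
    have e : i + 1 - (b + 1) = i - b := by omega
    rwa [e]
  have hP1y : P 1 = y := by have := hP1 0; rw [hp0] at this; exact this
  refine ⟨P, fun a => q (i + 1 - a), ⟨?_, ?_, ?_, ?_⟩, hP0, ?_, ?_⟩
  · intro a ha
    rcases Nat.eq_zero_or_pos a with h0 | h0
    · subst h0; rw [hP0, zero_add, hP1y]; exact hyt.symm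
    · obtain ⟨b, rfl⟩ : ∃ b, a = b + 1 := ⟨a - 1, by omega⟩
      rw [hP1, hP1]; exact hpa b (by omega)
  · intro a b hab hb hadj
    rcases Nat.eq_zero_or_pos a with h0 | h0
    · subst h0
      rw [hP0] at hadj
      exact hLa (i + 1 - b) (by omega) (P b) (hPL b (by omega) hb) j hj t ht hadj.symm
    · exact hC.anti (i+1-b) (i+1-a) (by omega) (by omega) _ (hPL b (by omega) hb) _
        (hPL a h0 (by omega)) hadj.symm
  · intro a ha hai
    have := hC.mem (i+1-a) (by omega) (by omega)
    exact ⟨this.1, hBA _ this.1 (this.2 (hPL a ha (by omega)))⟩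
  · intro a b ha hai hb hbi hab
    have := hC.inj _ _ (by omega) (by omega) (by omega) (by omega) hab
    omega
  · rw [hP1]; exact hpi
  · intro a ha hai i' hi' hij s hs hadj
    rcases Nat.lt_or_ge 1 a with h1 | h1
    · exact hLa (i+1-a) (by omega) _ (hPL a ha hai) i' hi' s hs hadj
    · have : a = 1 := by omega
      subst this
      rw [hP1y] at hadj
      exact hYa j hj i' hi' hij s hs y hy hadj

lemma BK.coh_nb {n c σ lam : ℝ} {I : Finset ℕ} {A : ℕ → Finset V} (h : BK G n c I A σ lam)
    {i j : ℕ} (hi : i ∈ I) (hj : j ∈ I) (hij : i ≠ j) {X T : Finset V} (hX : X ⊆ A i) (hT : T ⊆ A j)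
    (hm : n ^ (1 - c) ≤ (X.card : ℝ)) : (T.card : ℝ) - n ^ (1 - c) ≤ (nb G X T).card := by
  by_contra hlt
  push Not at hlt
  have e1 := Finset.le_card_sdiff (nb G X T) T
  have e2 : (T.card : ℝ) ≤ (T \ nb G X T).card + (nb G X T).card := by
    exact_mod_cast (by omega : T.card ≤ (T \ nb G X T).card + (nb G X T).card)
  obtain ⟨x, hx, z, hz, hxz⟩ := h.coh i hi j hj hij X hX (T \ nb G X T)
    (Finset.sdiff_subset.trans hT) hm (by linarith)
  rw [Finset.mem_sdiff] at hz
  exact hz.2 (mem_nb.2 ⟨hz.1, x, hx, hxz⟩)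

set_option maxHeartbeats 1600000 in
lemma mk_tents (R K' : ℕ) (c σ Δ lam' : ℝ) (hR : 1 ≤ R) (hc : c < 1) (hσ : 1 - c < R * (c - σ))
    (hΔ : 0 < Δ) (hlam' : 0 < lam') :
    ∃ (K : ℕ) (lam : ℝ), 0 < lam ∧ ∀ᶠ n : ℝ in atTop,
    ∀ ⦃V : Type⦄ (G : SimpleGraph V) (I : Finset ℕ) (A : ℕ → Finset V),
      BK G n c I A σ lam → K ≤ I.card →
      ∃ i0 ∈ I, ∃ v ∈ A i0, ∃ U : Fin 2 → Finset ℕ, (∀ a, U a ⊆ I) ∧ (∀ a, i0 ∉ U a) ∧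
        Disjoint (U 0) (U 1) ∧ ∃ J ⊆ I, i0 ∉ J ∧ (∀ a, Disjoint (U a) J) ∧ K' ≤ J.card ∧
        ∃ C : ℕ → Finset V, (∀ j ∈ J, C j ⊆ A j) ∧ BK G n c J C (σ + Δ) lam' ∧
        ∀ a, ∃ l, 1 ≤ l ∧ l ≤ R + 1 ∧ Tent G A v l (U a) J C := by
  have hR0 : (0:ℝ) < R := by exact_mod_cast hR
  have hcσ : 0 < c - σ := by
    by_contra h
    push Not at h
    nlinarith
  obtain ⟨K1, lam1, hlam1, hland⟩ := land 2 K' (Δ/2) lam' (half_pos hΔ) hlam'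
  obtain ⟨θ, hθ⟩ : ∃ θ : ℝ, θ = 1 / ((R+2)*(R+2)) := ⟨_, rfl⟩
  have hθ0 : 0 < θ := by rw [hθ]; positivity
  refine ⟨(1 + 2 * R) + (R+1)^2 * K1, lam1 * θ, by positivity, ?_⟩
  filter_upwards [hland, ev_small hθ0 (half_pos hΔ), eventually_gt_atTop 1,
    ev_large (θ := 32) hcσ, ev_large (θ := 2 * (1 + 2 * R)) hcσ, ev_large (θ := (R+2)*(R+2)) hcσ,
    ev_large (θ := 4) hcσ,
    ev_large (θ := 16 ^ R) (sub_pos.2 hσ)] with n hland hn1 hn2 hn3 hn4 hn5 hn5' hn6 V G I A hBK hI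
  have hn0 : 0 < n := by linarith
  obtain ⟨m, hm⟩ : ∃ m : ℝ, m = n ^ (1 - c) := ⟨_, rfl⟩
  obtain ⟨w, hw⟩ : ∃ w : ℝ, w = n ^ (1 - σ) := ⟨_, rfl⟩
  have hwm : w = n ^ (c - σ) * m := by
    rw [hw, hm, ← Real.rpow_add hn0]; congr 1; ring
  have hm1 : 1 < m := by rw [hm]; exact Real.one_lt_rpow hn2 (by linarith)
  have hm0 : 0 < m := by linarith
  -- choose indices
  obtain ⟨i0, hi0⟩ : I.Nonempty := Finset.card_pos.1 (by omega)
  have hce : (I.erase i0).card = I.card - 1 := Finset.card_erase_of_mem hi0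
  obtain ⟨U0, hU0, hU0c⟩ := Finset.exists_subset_card_eq (s := I.erase i0) (n := R) (by omega)
  have hce1 : (I.erase i0 \ U0).card = I.card - 1 - R := by
    rw [Finset.card_sdiff_of_subset hU0, hce, hU0c]
  obtain ⟨U1, hU1, hU1c⟩ := Finset.exists_subset_card_eq (s := I.erase i0 \ U0) (n := R) (by omega)
  obtain ⟨U, hU⟩ : ∃ U : Fin 2 → Finset ℕ, U = ![U0, U1] := ⟨_, rfl⟩
  have hUs : ∀ a, U a ⊆ I.erase i0 := by
    intro a; rw [hU]; fin_cases a
    · exact hU0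
    · exact hU1.trans Finset.sdiff_subset
  have hUc : ∀ a, (U a).card = R := by
    intro a; rw [hU]; fin_cases a
    · exact hU0c
    · exact hU1c
  have hUd : Disjoint (U 0) (U 1) := by
    rw [hU]
    exact Finset.disjoint_of_subset_right hU1 Finset.disjoint_sdiff
  have hi0U : ∀ a, i0 ∉ U a := fun a h => Finset.notMem_erase i0 I (hUs a h)
  have hUI : ∀ a, U a ⊆ I := fun a => (hUs a).trans (Finset.erase_subset _ _)
  obtain ⟨I0, hI0⟩ : ∃ I0, I0 = insert i0 (U 0 ∪ U 1) := ⟨_, rfl⟩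
  have hI0I : I0 ⊆ I := by
    rw [hI0]; exact Finset.insert_subset hi0 (Finset.union_subset (hUI 0) (hUI 1))
  have hI0c : I0.card = 1 + 2 * R := by
    rw [hI0, Finset.card_insert_of_notMem, Finset.card_union_of_disjoint hUd, hUc, hUc]
    · omega
    · rw [Finset.mem_union]; rintro (h | h)
      · exact hi0U 0 h
      · exact hi0U 1 h
  have hUI0 : ∀ a, insert i0 (U a) ⊆ I0 := by
    intro a; rw [hI0]; apply Finset.insert_subset_insert
    fin_cases a
    · exact Finset.subset_union_left
    · exact Finset.subset_union_right
  obtain ⟨J0, hJ0⟩ : ∃ J0, J0 = I \ I0 := ⟨_, rfl⟩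
  have hJ0c : (R+1)^2 * K1 ≤ J0.card := by
    rw [hJ0, Finset.card_sdiff_of_subset hI0I, hI0c]; omega
  -- core
  obtain ⟨τ, hτ⟩ : ∃ τ : ℝ, τ = n ^ (c - σ) / 8 := ⟨_, rfl⟩
  obtain ⟨B, hBA, hBc, hexp⟩ := core (G := G) I0 A w m τ hm0.le (by rw [hτ]; positivity)
    (fun i hi => by rw [hw]; exact hBK.low i (hI0I hi))
    (fun i hi j hj hij X hX Z hZ hXm hZm => hBK.coh i (hI0I hi) j (hI0I hj) hij X hX Z hZ
      (hm ▸ hXm) (hm ▸ hZm))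
    (by rw [hI0c, hwm]; push_cast; nlinarith)
    (by rw [hτ, hwm]; nlinarith)
    (by rw [hwm]; nlinarith)
  have hi0I0 : i0 ∈ I0 := by rw [hI0]; exact Finset.mem_insert_self _ _
  obtain ⟨v, hv⟩ : (B i0).Nonempty := by
    apply Finset.card_pos.1
    have h1 := hBc i0 hi0I0
    have h2 : w ≤ (A i0).card := by rw [hw]; exact hBK.low i0 hi0
    have h3 : (I0.card : ℝ) * m ≤ w / 2 := by rw [hI0c, hwm]; push_cast; nlinarith
    have h4 : 0 < w := by rw [hw]; positivity
    have : (0:ℝ) < (B i0).card := by linarith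
    exact_mod_cast this
  have hch : ∀ a, ∃ k L q, 1 ≤ k ∧ k ≤ R ∧ Chain G B v (U a) L q k ∧ m ≤ ((L k).card : ℝ) := by
    intro a
    refine chain (τ := τ) hv (hi0U a) (hUc a).ge hR hm1 (by rw [hτ]; linarith) ?_ ?_
    · have e : (1 - c) + (R * (c - σ) - (1 - c)) = (c - σ) * R := by ring
      have e1 : n ^ (c - σ) / 8 / 2 = n ^ (c - σ) / 16 := by ring
      rw [hm, hτ, e1, div_pow, le_div_iff₀ (by positivity), ← Real.rpow_mul_natCast hn0.le, ← e,
        Real.rpow_add hn0]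
      exact mul_le_mul_of_nonneg_left hn6 (by positivity)
    · intro i hi j hj hij X hX hXm
      exact hexp i (hUI0 a hi) j (hUI0 a (Finset.mem_insert_of_mem hj)) hij X hX hXm
  choose k L q hk1 hkR hC hLm using hch
  have hBAU : ∀ a, ∀ b ∈ U a, B b ⊆ A b := fun a b hb => hBA b (hUI0 a (Finset.mem_insert_of_mem hb))
  have hqI0 : ∀ a i, 1 ≤ i → i ≤ k a → q a i ∈ I0 := fun a i h1 h2 =>
    hUI0 a (Finset.mem_insert_of_mem ((hC a).mem i h1 h2).1)
  have hLA : ∀ a i, 1 ≤ i → i ≤ k a → L a i ⊆ A (q a i) := fun a i h1 h2 =>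
    ((hC a).mem i h1 h2).2.trans (hBA _ (hqI0 a i h1 h2))
  have hLA' : ∀ a i, i ≤ k a → ∃ b ∈ I0, L a i ⊆ A b := by
    intro a i hi
    rcases Nat.eq_zero_or_pos i with h0 | h0
    · subst h0
      refine ⟨i0, hi0I0, ?_⟩
      rw [(hC a).L0]; simpa using hBA i0 hi0I0 hv
    · exact ⟨_, hqI0 a i h0 hi, hLA a i h0 hi⟩
  -- hitting
  have hhit : ∀ j ∈ J0, ∀ a, ∀ T ⊆ A j, m * (R + 2) ≤ T.card → ∃ i ≤ k a, ∃ T' ⊆ T,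
      (T.card : ℝ) ≤ (R + 2) * T'.card ∧ (∀ t ∈ T', ∃ x ∈ L a i, G.Adj x t) ∧
      ∀ h < i, ∀ x ∈ L a h, ∀ t ∈ T', ¬ G.Adj x t := by
    intro j hj a T hT hTm
    rw [hJ0, Finset.mem_sdiff] at hj
    refine chain_hit (hkR a) T m hTm ?_
    rw [hm]
    refine hBK.coh_nb (hI0I (hqI0 a (k a) (hk1 a) le_rfl)) hj.1 ?_ (hLA a (k a) (hk1 a) le_rfl) hT
      (hm ▸ hLm a)
    intro he
    exact hj.2 (he ▸ hqI0 a (k a) (hk1 a) le_rfl)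
  have hhit2 : ∀ j ∈ J0, ∃ (f : Fin 2 → Fin (R+1)) (T : Finset V), T ⊆ A j ∧ θ * (A j).card ≤ T.card ∧
      (∀ a, (f a : ℕ) ≤ k a) ∧ (∀ a, ∀ t ∈ T, ∃ x ∈ L a (f a), G.Adj x t) ∧
      ∀ a, ∀ h < (f a : ℕ), ∀ x ∈ L a h, ∀ t ∈ T, ¬ G.Adj x t := by
    intro j hj
    have hjI : j ∈ I := by rw [hJ0, Finset.mem_sdiff] at hj; exact hj.1
    have hAw : w ≤ (A j).card := by rw [hw]; exact hBK.low j hjI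
    have hmw : m * ((R+2) * (R+2)) ≤ w := by rw [hwm]; nlinarith
    have hR2 : (1:ℝ) ≤ R + 2 := by linarith
    obtain ⟨f0, hf0, T0, hT0, hT0c, hT0cov, hT0a⟩ := hhit j hj 0 (A j) subset_rfl (by nlinarith)
    obtain ⟨f1, hf1, T1, hT1, hT1c, hT1cov, hT1a⟩ := hhit j hj 1 T0 hT0 (by
      have hR20 : (0:ℝ) < R + 2 := by linarith
      have : (R + 2) * (m * (R + 2)) ≤ (R + 2) * (T0.card : ℝ) := by nlinarith
      exact le_of_mul_le_mul_left this hR20)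
    have hk0 := hkR 0
    have hk1 := hkR 1
    refine ⟨![⟨f0, by omega⟩, ⟨f1, by omega⟩], T1, hT1.trans hT0, ?_, ?_, ?_, ?_⟩
    · rw [hθ, one_div, inv_mul_le_iff₀ (by positivity)]
      have hR20 : (0:ℝ) < R + 2 := by linarith
      nlinarith
    · intro a; fin_cases a
      · exact hf0
      · exact hf1
    · intro a t ht; fin_cases a
      · exact hT0cov t (hT1 ht)
      · exact hT1cov t ht
    · intro a; fin_cases a
      · intro h hh x hx t ht; exact hT0a h hh x hx t (hT1 ht)
      · exact hT1a
  choose! f T hTA hTc hfk hTcov hTa using hhit2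
  obtain ⟨g, hg⟩ := pigeon J0 f
  obtain ⟨J1, hJ1⟩ : ∃ J1, J1 = J0.filter (fun j => f j = g) := ⟨_, rfl⟩
  have hJ1c : K1 ≤ J1.card := by
    have hcard : Fintype.card (Fin 2 → Fin (R+1)) = (R+1)^2 := by simp
    rw [hcard] at hg
    have : (R+1)^2 * K1 ≤ (R+1)^2 * J1.card := by
      refine hJ0c.trans (le_trans hg (le_of_eq ?_))
      rw [hJ1]; congr!
    exact Nat.le_of_mul_le_mul_left this (by positivity)
  have hJ1m : ∀ j ∈ J1, j ∈ J0 ∧ f j = g := fun j hj => by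
    rw [hJ1] at hj; exact Finset.mem_filter.1 hj
  have hJ0m : ∀ j ∈ J0, j ∈ I ∧ j ∉ I0 := fun j hj => by
    rw [hJ0] at hj; exact Finset.mem_sdiff.1 hj
  have hJ1I : J1 ⊆ I := fun j hj => (hJ0m j (hJ1m j hj).1).1
  by_cases hJ1e : J1 = ∅
  · -- trivial case
    have hK10 : K1 = 0 := by rw [hJ1e] at hJ1c; simpa using hJ1c
    obtain ⟨J', hJ', hJ'c, T', hT', hBK', -⟩ := hland G c σ ∅ A (fun _ => ∅)
      (hBK.sub (Finset.empty_subset _) (by simp) (by simp) (by simp)) (by simp [hK10])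
      (by intro a; simpa using hn0.le) (by simp) (by simp)
    have hJ'e : J' = ∅ := Finset.subset_empty.1 hJ'
    refine ⟨i0, hi0, v, hBA i0 hi0I0 hv, U, hUI, hi0U, hUd, ∅, Finset.empty_subset _, by simp,
      by simp, by simpa [hJ'e] using hJ'c, T', by simp, ?_, fun a => ⟨1, le_rfl, by omega, ?_⟩⟩
    · exact hBK.sub (Finset.empty_subset _) (by simp) (by simp) (by simp)
    · intro j hj; simp at hj
  have hBK1 : BK G n c J1 T (σ + Δ/2) lam1 := by
    have := hBK.shrink (I' := J1) (A' := T) hn0 hθ0 (by positivity) hn1 hJ1I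
      (fun j hj => hTA j (hJ1m j hj).1) (fun j hj => hTc j (hJ1m j hj).1)
    rwa [mul_div_cancel_right₀ _ hθ0.ne'] at this
  have hgk : ∀ a, (g a : ℕ) ≤ k a := by
    obtain ⟨j, hj⟩ := Finset.nonempty_iff_ne_empty.2 hJ1e
    intro a
    have := hfk j (hJ1m j hj).1 a
    rwa [(hJ1m j hj).2] at this
  obtain ⟨J', hJ', hJ'c, T', hT', hBK', Y, hY1, hY2, hY3⟩ := hland G c (σ + Δ/2) J1 T
    (fun a => L a (g a)) hBK1 hJ1c
    (by
      intro a
      obtain ⟨b, hb, hLb⟩ := hLA' a (g a) (hgk a)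
      exact le_trans (by exact_mod_cast Finset.card_le_card hLb) (hBK.up b (hI0I hb)))
    (by
      intro a x hx j hj
      obtain ⟨b, hb, hLb⟩ := hLA' a (g a) (hgk a)
      have hj0 := (hJ1m j hj).1
      have := dg_shrink (G := G) (x := x) hθ0 (by positivity) (hTA j hj0) (hTc j hj0)
        (hBK.link b (hI0I hb) j (hJ1I hj) (by rintro rfl; exact (hJ0m b hj0).2 hb) x (hLb hx))
      rwa [mul_div_cancel_right₀ _ hθ0.ne'] at this)
    (by
      intro a j hj t ht
      have := hTcov j (hJ1m j hj).1 a t ht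
      rwa [(hJ1m j hj).2] at this)
  refine ⟨i0, hi0, v, hBA i0 hi0I0 hv, U, hUI, hi0U, hUd, J', hJ'.trans hJ1I, ?_, ?_, hJ'c, T',
    fun j hj => (hT' j hj).trans (hTA j (hJ1m j (hJ' hj)).1), ?_, fun a => ⟨g a + 1, by omega, ?_, ?_⟩⟩
  · intro h; exact (hJ0m _ (hJ1m _ (hJ' h)).1).2 hi0I0
  · intro a
    rw [Finset.disjoint_right]
    intro j hj hja
    exact (hJ0m _ (hJ1m _ (hJ' hj)).1).2 (hUI0 a (Finset.mem_insert_of_mem hja))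
  · have e : σ + Δ/2 + Δ/2 = σ + Δ := by ring
    rwa [e] at hBK'
  · have := hgk a; have := hkR a; omega
  · refine chain_tent (hC a) (hgk a) (hBAU a) (Y := Y a) (fun j hj => hY1 a j hj) (hY2 a) (hY3 a) ?_
    intro h hh x hx j hj t ht
    have := hTa j (hJ1m j (hJ' hj)).1 a h
    rw [(hJ1m j (hJ' hj)).2] at this
    exact this hh x hx t (hT' j hj ht)

end Aux6

section Aux7
open scoped Classical
open Filter

variable {V : Type} {G : SimpleGraph V}

lemma LPath.mono {A A' : ℕ → Finset V} {U U' : Finset ℕ} {l : ℕ} {p : ℕ → V} {κ : ℕ → ℕ}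
    (h : LPath G A U l p κ) (hU : U ⊆ U') (hA : ∀ u ∈ U, A u ⊆ A' u) : LPath G A' U' l p κ where
  adj := h.adj
  ind := h.ind
  lab a h0 h1 := ⟨hU (h.lab a h0 h1).1, hA _ (h.lab a h0 h1).1 (h.lab a h0 h1).2⟩
  inj := h.inj

/-- a shortest walk inside a set is an induced path -/
lemma short_path (S : Set V) (w : ℕ → V) (L : ℕ) (hw : ∀ a ≤ L, w a ∈ S)
    (hadj : ∀ a < L, G.Adj (w a) (w (a+1))) (hne : w 0 ≠ w L) :
    ∃ (l : ℕ) (p : ℕ → V), 1 ≤ l ∧ l ≤ L ∧ p 0 = w 0 ∧ p l = w L ∧ (∀ a ≤ l, p a ∈ S) ∧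
      (∀ a < l, G.Adj (p a) (p (a+1))) ∧ (∀ a b, a + 1 < b → b ≤ l → ¬ G.Adj (p a) (p b)) ∧
      ∀ a b, a < b → b ≤ l → p a ≠ p b := by
  obtain ⟨Q, hQ⟩ : ∃ Q : ℕ → Prop, Q = fun l => ∃ p : ℕ → V, p 0 = w 0 ∧ p l = w L ∧ (∀ a ≤ l, p a ∈ S) ∧
      (∀ a < l, G.Adj (p a) (p (a+1))) := ⟨_, rfl⟩
  have hex : ∃ l, Q l := ⟨L, by rw [hQ]; exact ⟨w, rfl, rfl, hw, hadj⟩⟩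
  obtain ⟨l, hl⟩ : ∃ l, l = Nat.find hex := ⟨_, rfl⟩
  have hQl : Q l := by rw [hl]; exact Nat.find_spec hex
  have hmin : ∀ k, Q k → l ≤ k := fun k hk => by rw [hl]; exact Nat.find_min' hex hk
  have hlL : l ≤ L := hmin L (by rw [hQ]; exact ⟨w, rfl, rfl, hw, hadj⟩)
  rw [hQ] at hQl
  obtain ⟨p, hp0, hpl, hpS, hpa⟩ := hQl
  have h1 : 1 ≤ l := by
    rcases Nat.eq_zero_or_pos l with h | h
    · subst h; exact absurd (hp0.symm.trans hpl) hne
    · exact h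
  refine ⟨l, p, h1, hlL, hp0, hpl, hpS, hpa, ?_, ?_⟩
  · intro a b hab hb hadj
    -- shortcut
    have : Q (l - (b - a - 1)) := by
      rw [hQ]
      refine ⟨fun x => if x ≤ a then p x else p (x + (b - a - 1)), by simpa using hp0, ?_, ?_, ?_⟩
      · have e : ¬ (l - (b - a - 1) ≤ a) := by omega
        have e2 : l - (b - a - 1) + (b - a - 1) = l := by omega
        simp only [e, if_false, e2]; exact hpl
      · intro x hx
        by_cases hxa : x ≤ a
        · simp only [hxa, if_true]; exact hpS x (by omega)
        · simp only [hxa, if_false]; exact hpS _ (by omega)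
      · intro x hx
        rcases lt_trichotomy x a with h | h | h
        · have e1 : x ≤ a := h.le
          have e2 : x + 1 ≤ a := h
          simp only [e1, e2, if_true]; exact hpa x (by omega)
        · subst h
          have e2 : ¬ (x + 1 ≤ x) := by omega
          have e3 : x + 1 + (b - x - 1) = b := by omega
          simp only [le_refl, if_true, e2, if_false, e3]; exact hadj
        · have e1 : ¬ x ≤ a := by omega
          have e2 : ¬ x + 1 ≤ a := by omega
          have e3 : x + 1 + (b - a - 1) = x + (b - a - 1) + 1 := by omega
          simp only [e1, e2, if_false, e3]; exact hpa _ (by omega)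
    have := hmin _ this
    omega
  · intro a b hab hb heq
    have : Q (l - (b - a)) := by
      rw [hQ]
      refine ⟨fun x => if x ≤ a then p x else p (x + (b - a)), by simpa using hp0, ?_, ?_, ?_⟩
      · by_cases e : l - (b - a) ≤ a
        · have e2 : l - (b - a) = a := by omega
          have e3 : b = l := by omega
          simp only [e2, le_refl, if_true]; rw [heq, e3]; exact hpl
        · have e2 : l - (b - a) + (b - a) = l := by omega
          simp only [e, if_false, e2]; exact hpl
      · intro x hx
        by_cases hxa : x ≤ a
        · simp only [hxa, if_true]; exact hpS x (by omega)
        · simp only [hxa, if_false]; exact hpS _ (by omega)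
      · intro x hx
        rcases lt_trichotomy x a with h | h | h
        · have e1 : x ≤ a := h.le
          have e2 : x + 1 ≤ a := h
          simp only [e1, e2, if_true]; exact hpa x (by omega)
        · subst h
          have e2 : ¬ (x + 1 ≤ x) := by omega
          have e3 : x + 1 + (b - x) = b + 1 := by omega
          simp only [le_refl, if_true, e2, if_false, e3]; rw [heq]; exact hpa b (by omega)
        · have e1 : ¬ x ≤ a := by omega
          have e2 : ¬ x + 1 ≤ a := by omega
          have e3 : x + 1 + (b - a) = x + (b - a) + 1 := by omega
          simp only [e1, e2, if_false, e3]; exact hpa _ (by omega)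
    have := hmin _ this
    omega

lemma fpath {A : ℕ → Finset V} {U0 U1 : Finset ℕ} {i0 : ℕ} {v t r : V} {Q P : ℕ → V} {κ1 κ2 : ℕ → ℕ}
    {l1 l2 : ℕ} (hQ : LPath G A U0 l1 Q κ1) (hP : LPath G A U1 l2 P κ2) (hQ0 : Q 0 = t) (hQl : Q l1 = v)
    (hP0 : P 0 = r) (hPl : P l2 = v) (hv : v ∈ A i0) (h0 : i0 ∉ U0) (h1 : i0 ∉ U1)
    (hd : Disjoint U0 U1) (htr : t ≠ r) :
    ∃ l p κ, 1 ≤ l ∧ l ≤ l1 + l2 ∧ LPath G A (insert i0 (U0 ∪ U1)) l p κ ∧ p 0 = t ∧ p l = r ∧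
      ∀ a, 0 < a → a < l → (∃ b, 0 < b ∧ b ≤ l1 ∧ p a = Q b) ∨ (∃ b, 0 < b ∧ b ≤ l2 ∧ p a = P b) := by
  obtain ⟨w, hw⟩ : ∃ w : ℕ → V, w = fun a => if a ≤ l1 then Q a else P (l1 + l2 - a) := ⟨_, rfl⟩
  obtain ⟨S, hS⟩ : ∃ S : Set V, S = {u | (∃ b ≤ l1, u = Q b) ∨ ∃ b ≤ l2, u = P b} := ⟨_, rfl⟩
  have hw0 : w 0 = t := by rw [hw]; simpa using hQ0
  have hwL : w (l1 + l2) = r := by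
    rw [hw]
    by_cases h : l1 + l2 ≤ l1
    · have : l2 = 0 := by omega
      subst this
      simp only [add_zero, le_refl, if_true]
      rw [hQl, ← hPl, hP0]
    · simp only [h, if_false, Nat.sub_self]; exact hP0
  have hwS : ∀ a ≤ l1 + l2, w a ∈ S := by
    intro a ha
    rw [hw, hS]
    by_cases h : a ≤ l1
    · left; exact ⟨a, h, by simp [h]⟩
    · right; exact ⟨l1 + l2 - a, by omega, by simp [h]⟩
  have hwa : ∀ a < l1 + l2, G.Adj (w a) (w (a+1)) := by
    intro a ha
    rw [hw]
    rcases lt_trichotomy a l1 with h | h | h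
    · have e1 : a ≤ l1 := h.le
      have e2 : a + 1 ≤ l1 := h
      simp only [e1, e2, if_true]; exact hQ.adj a h
    · subst h
      have e2 : ¬ (a + 1 ≤ a) := by omega
      simp only [le_refl, if_true, e2, if_false]
      rw [hQl, ← hPl]
      have := hP.adj (a + l2 - (a + 1)) (by omega)
      have e3 : a + l2 - (a + 1) + 1 = l2 := by omega
      rw [e3] at this
      exact this.symm
    · have e1 : ¬ a ≤ l1 := by omega
      have e2 : ¬ a + 1 ≤ l1 := by omega
      simp only [e1, e2, if_false]
      have := hP.adj (l1 + l2 - (a + 1)) (by omega)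
      have e3 : l1 + l2 - (a + 1) + 1 = l1 + l2 - a := by omega
      rw [e3] at this
      exact this.symm
  obtain ⟨l, p, hl1, hlL, hp0, hpl, hpS, hpa, hpi, hpne⟩ := short_path S w (l1 + l2) hwS hwa
    (by rw [hw0, hwL]; exact htr)
  rw [hw0] at hp0
  rw [hwL] at hpl
  -- interior structure
  obtain ⟨Rl, hRl⟩ : ∃ Rl : V → ℕ → Prop, Rl = fun u i => (i = i0 ∧ u = v) ∨
    (∃ b, 0 < b ∧ b < l1 ∧ u = Q b ∧ i = κ1 b) ∨ (∃ b, 0 < b ∧ b < l2 ∧ u = P b ∧ i = κ2 b) := ⟨_, rfl⟩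
  have hinner : ∀ a, 0 < a → a < l → (∃ b, 0 < b ∧ b ≤ l1 ∧ p a = Q b) ∨ (∃ b, 0 < b ∧ b ≤ l2 ∧ p a = P b) := by
    intro a ha hal
    have hat : p a ≠ t := by rw [← hp0]; exact (hpne 0 a ha hal.le).symm
    have har : p a ≠ r := by rw [← hpl]; exact hpne a l hal le_rfl
    have := hpS a hal.le
    rw [hS] at this
    rcases this with ⟨b, hb, hpb⟩ | ⟨b, hb, hpb⟩
    · left; refine ⟨b, ?_, hb, hpb⟩
      rcases Nat.eq_zero_or_pos b with h | h
      · subst h; exact absurd (hpb.trans hQ0) hat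
      · exact h
    · right; refine ⟨b, ?_, hb, hpb⟩
      rcases Nat.eq_zero_or_pos b with h | h
      · subst h; exact absurd (hpb.trans hP0) har
      · exact h
  have hlab : ∀ a, ∃ i, 0 < a → a < l → Rl (p a) i := by
    intro a
    by_cases ha : 0 < a ∧ a < l
    · rcases hinner a ha.1 ha.2 with ⟨b, hb, hbl, hpb⟩ | ⟨b, hb, hbl, hpb⟩
      · rcases hbl.lt_or_eq with h | h
        · refine ⟨κ1 b, fun _ _ => ?_⟩; rw [hRl]; right; left; exact ⟨b, hb, h, hpb, rfl⟩
        · refine ⟨i0, fun _ _ => ?_⟩; rw [hRl]; left; exact ⟨rfl, by rw [hpb, h, hQl]⟩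
      · rcases hbl.lt_or_eq with h | h
        · refine ⟨κ2 b, fun _ _ => ?_⟩; rw [hRl]; right; right; exact ⟨b, hb, h, hpb, rfl⟩
        · refine ⟨i0, fun _ _ => ?_⟩; rw [hRl]; left; exact ⟨rfl, by rw [hpb, h, hPl]⟩
    · exact ⟨0, fun h h' => absurd ⟨h, h'⟩ ha⟩
  choose κ hκ using hlab
  refine ⟨l, p, κ, hl1, hlL, ⟨hpa, hpi, ?_, ?_⟩, hp0, hpl, hinner⟩
  · intro a ha hal
    have := hκ a ha hal
    rw [hRl] at this
    rcases this with ⟨h, h'⟩ | ⟨b, hb, hbl, h, h'⟩ | ⟨b, hb, hbl, h, h'⟩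
    · rw [h, h']; exact ⟨Finset.mem_insert_self _ _, hv⟩
    · rw [h, h']; exact ⟨Finset.mem_insert_of_mem (Finset.mem_union_left _ (hQ.lab b hb hbl).1),
        (hQ.lab b hb hbl).2⟩
    · rw [h, h']; exact ⟨Finset.mem_insert_of_mem (Finset.mem_union_right _ (hP.lab b hb hbl).1),
        (hP.lab b hb hbl).2⟩
  · intro a b ha hal hb hbl hab
    have hpp : p a = p b := by
      have e1 := hκ a ha hal
      have e2 := hκ b hb hbl
      rw [← hab] at e2
      rw [hRl] at e1 e2
      rcases e1 with ⟨h, h'⟩ | ⟨x, hx, hxl, h, h'⟩ | ⟨x, hx, hxl, h, h'⟩ <;>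
        rcases e2 with ⟨g, g'⟩ | ⟨y, hy, hyl, g, g'⟩ | ⟨y, hy, hyl, g, g'⟩
      · rw [h', g']
      · exact absurd ((h.symm.trans g') ▸ (hQ.lab y hy hyl).1) h0
      · exact absurd ((h.symm.trans g') ▸ (hP.lab y hy hyl).1) h1
      · exact absurd ((g.symm.trans h') ▸ (hQ.lab x hx hxl).1) h0
      · rw [h, g, hQ.inj x y hx hxl hy hyl (h'.symm.trans g')]
      · exact absurd ((h'.symm.trans g') ▸ (hP.lab y hy hyl).1)
          (Finset.disjoint_left.1 hd (hQ.lab x hx hxl).1)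
      · exact absurd ((g.symm.trans h') ▸ (hP.lab x hx hxl).1) h1
      · exact absurd ((g'.symm.trans h') ▸ (hP.lab x hx hxl).1)
          (Finset.disjoint_left.1 hd (hQ.lab y hy hyl).1)
      · rw [h, g, hP.inj x y hx hxl hy hyl (h'.symm.trans g')]
    rcases lt_trichotomy a b with h | h | h
    · exact absurd hpp (hpne a b h hbl.le)
    · exact h
    · exact absurd hpp.symm (hpne b a h hal.le)

lemma concat {A : ℕ → Finset V} {U1 U2 : Finset ℕ} {b0 : ℕ} {r t s : V} {F M : ℕ → V} {κ1 κ2 : ℕ → ℕ}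
    {f m : ℕ} (hF : LPath G A U1 f F κ1) (hM : LPath G A U2 m M κ2) (hF0 : F 0 = t) (hFf : F f = r)
    (hM0 : M 0 = s) (hMm : M m = r) (hr : r ∈ A b0) (h1 : b0 ∉ U1) (h2 : b0 ∉ U2) (hd : Disjoint U1 U2)
    (hf : 1 ≤ f) (hm : 1 ≤ m) (hna : ∀ a < f, ∀ b < m, ¬ G.Adj (F a) (M b)) :
    ∃ p κ, LPath G A (insert b0 (U1 ∪ U2)) (f + m) p κ ∧ p 0 = t ∧ p (f + m) = s ∧
      ∀ a, 0 < a → a < f + m → (0 < a ∧ a < f ∧ p a = F a) ∨ (∃ b, 0 < b ∧ b ≤ m ∧ p a = M b) := by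
  obtain ⟨p, hp⟩ : ∃ p : ℕ → V, p = fun a => if a < f then F a else M (f + m - a) := ⟨_, rfl⟩
  obtain ⟨κ, hκ⟩ : ∃ κ : ℕ → ℕ, κ = fun a => if a < f then κ1 a else if a = f then b0 else
    κ2 (f + m - a) := ⟨_, rfl⟩
  have p1 : ∀ a, a < f → p a = F a := fun a ha => by rw [hp]; simp [ha]
  have p2 : ∀ a, f ≤ a → p a = M (f + m - a) := fun a ha => by
    rw [hp]; simp [not_lt.2 ha]
  have pf : p f = r := by rw [p2 f le_rfl, Nat.add_sub_cancel_left, hMm]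
  have k1 : ∀ a, a < f → κ a = κ1 a := fun a ha => by rw [hκ]; simp [ha]
  have k2 : κ f = b0 := by rw [hκ]; simp
  have k3 : ∀ a, f < a → κ a = κ2 (f + m - a) := fun a ha => by
    rw [hκ]; simp [not_lt.2 ha.le, ha.ne']
  have kc : ∀ a, 0 < a → a < f + m → (a < f ∧ κ a ∈ U1) ∨ (a = f ∧ κ a = b0) ∨ (f < a ∧ κ a ∈ U2) := by
    intro a ha hal
    rcases lt_trichotomy a f with h | h | h
    · left; rw [k1 a h]; exact ⟨h, (hF.lab a ha h).1⟩
    · right; left; rw [h, k2]; simp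
    · right; right; rw [k3 a h]; exact ⟨h, (hM.lab _ (by omega) (by omega)).1⟩
  refine ⟨p, κ, ⟨?_, ?_, ?_, ?_⟩, by rw [p1 0 hf, hF0], ?_, ?_⟩
  · intro a ha
    rcases lt_trichotomy (a+1) f with h | h | h
    · rw [p1 a (by omega), p1 _ h]; exact hF.adj a (by omega)
    · rw [h, pf, p1 a (by omega), ← hFf, ← h]; exact hF.adj a (by omega)
    · rw [p2 a (by omega), p2 _ (by omega)]
      have := hM.adj (f + m - (a+1)) (by omega)
      have e : f + m - (a + 1) + 1 = f + m - a := by omega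
      rw [e] at this; exact this.symm
  · intro a b hab hb hadj
    rcases lt_trichotomy b f with h | h | h
    · rw [p1 a (by omega), p1 b h] at hadj; exact hF.ind a b hab h.le hadj
    · rw [h, pf, p1 a (by omega), ← hFf] at hadj; exact hF.ind a f (by omega) le_rfl hadj
    · rw [p2 b h.le] at hadj
      rcases Nat.lt_or_ge a f with ha | ha
      · rw [p1 a ha] at hadj; exact hna a ha _ (by omega) hadj
      · rw [p2 a ha] at hadj; exact hM.ind _ _ (by omega) (by omega) hadj.symm
  · intro a ha hal
    rcases lt_trichotomy a f with h | h | h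
    · rw [k1 a h, p1 a h]
      exact ⟨Finset.mem_insert_of_mem (Finset.mem_union_left _ (hF.lab a ha h).1), (hF.lab a ha h).2⟩
    · rw [h, k2, pf]; exact ⟨Finset.mem_insert_self _ _, hr⟩
    · rw [k3 a h, p2 a h.le]
      have := hM.lab (f + m - a) (by omega) (by omega)
      exact ⟨Finset.mem_insert_of_mem (Finset.mem_union_right _ this.1), this.2⟩
  · intro a b ha hal hb hbl hab
    rcases kc a ha hal with ⟨h, h'⟩ | ⟨h, h'⟩ | ⟨h, h'⟩ <;>
      rcases kc b hb hbl with ⟨g, g'⟩ | ⟨g, g'⟩ | ⟨g, g'⟩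
    · rw [k1 a h, k1 b g] at hab; exact hF.inj a b ha h hb g hab
    · rw [hab, g'] at h'; exact absurd h' h1
    · rw [← hab] at g'; exact absurd g' (Finset.disjoint_left.1 hd h')
    · rw [← hab, h'] at g'; exact absurd g' h1
    · rw [h, g]
    · rw [← hab, h'] at g'; exact absurd g' h2
    · rw [hab] at h'; exact absurd h' (Finset.disjoint_left.1 hd g')
    · rw [hab, g'] at h'; exact absurd h' h2
    · rw [k3 a h, k3 b g] at hab
      have := hM.inj _ _ (by omega) (by omega) (by omega) (by omega) hab
      omega
  · rw [p2 _ (by omega), Nat.sub_self, hM0]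
  · intro a ha hal
    rcases Nat.lt_or_ge a f with h | h
    · left; exact ⟨ha, h, p1 a h⟩
    · right; exact ⟨f + m - a, by omega, by omega, p2 a h⟩

end Aux7

section Aux8
open scoped Classical
open Filter

/-- landing on the neighbourhood of one block -/
lemma nbland (K' : ℕ) (c σ Δ lam' : ℝ) (hcσ : σ < c) (hΔ : 0 < Δ) (hlam' : 0 < lam') :
    ∃ (K : ℕ) (lam : ℝ), 0 < lam ∧ ∀ᶠ n : ℝ in atTop,
    ∀ ⦃V : Type⦄ (G : SimpleGraph V) (J : Finset ℕ) (C : ℕ → Finset V),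
      BK G n c J C σ lam → K ≤ J.card →
      ∃ b ∈ J, ∃ J' ⊆ J, b ∉ J' ∧ K' ≤ J'.card ∧ ∃ C' : ℕ → Finset V, (∀ j ∈ J', C' j ⊆ C j) ∧
        BK G n c J' C' (σ + Δ) lam' ∧ ∃ Y : ℕ → Finset V, (∀ j ∈ J', Y j ⊆ C b) ∧
        (∀ j ∈ J', ∀ t ∈ C' j, ∃ y ∈ Y j, G.Adj y t) ∧
        (∀ j ∈ J', ∀ i ∈ J', i ≠ j → ∀ t ∈ C' i, ∀ y ∈ Y j, ¬ G.Adj y t) := by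
  obtain ⟨K1, lam1, hlam1, hland⟩ := land 1 K' (Δ/2) lam' (half_pos hΔ) hlam'
  refine ⟨K1 + 1, lam1 / 2, by positivity, ?_⟩
  filter_upwards [hland, ev_small (θ := 1/2) (by norm_num) (half_pos hΔ), eventually_gt_atTop 1,
    ev_large (θ := 2) (sub_pos.2 hcσ)] with n hland hn1 hn2 hn3 V G J C hBK hJ
  have hn0 : 0 < n := by linarith
  obtain ⟨b, hb⟩ : J.Nonempty := Finset.card_pos.1 (by omega)
  have hce : (J.erase b).card = J.card - 1 := Finset.card_erase_of_mem hb
  obtain ⟨T, hT⟩ : ∃ T : ℕ → Finset V, T = fun j => nb G (C b) (C j) := ⟨_, rfl⟩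
  have hJ1 : ∀ j ∈ J.erase b, j ∈ J ∧ b ≠ j := fun j hj =>
    ⟨Finset.mem_of_mem_erase hj, (Finset.ne_of_mem_erase hj).symm⟩
  have hw : n ^ (1 - σ) = n ^ (c - σ) * n ^ (1 - c) := by
    rw [← Real.rpow_add hn0]; congr 1; ring
  have hm0 : 0 < n ^ (1 - c) := by positivity
  have hTC : ∀ j, T j ⊆ C j := fun j => by rw [hT]; exact nb_subset _ _
  have hTc : ∀ j ∈ J.erase b, (1/2 : ℝ) * (C j).card ≤ (T j).card := by
    intro j hj
    have h1 := hBK.low j (hJ1 j hj).1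
    have h2 := hBK.low b hb
    rw [hw] at h1 h2
    have := hBK.coh_nb hb (hJ1 j hj).1 (hJ1 j hj).2 subset_rfl subset_rfl (by nlinarith)
    rw [hT]
    nlinarith
  have hBK1 : BK G n c (J.erase b) T (σ + Δ/2) lam1 := by
    have := hBK.shrink (I' := J.erase b) (A' := T) hn0 (by norm_num) (by positivity) hn1
      (Finset.erase_subset _ _) (fun j _ => hTC j) hTc
    have e : lam1 / 2 / (1/2) = lam1 := by ring
    rwa [e] at this
  obtain ⟨J', hJ', hJ'c, T', hT', hBK', Y, hY1, hY2, hY3⟩ := hland G c (σ + Δ/2) (J.erase b) T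
    (fun _ => C b) hBK1 (by omega) (fun _ => hBK.up b hb)
    (by
      intro a x hx j hj
      have := dg_shrink (G := G) (x := x) (by norm_num) (by positivity) (hTC j) (hTc j hj)
        (hBK.link b hb j (hJ1 j hj).1 (hJ1 j hj).2 x hx)
      have e : lam1 / 2 / (1/2) = lam1 := by ring
      rwa [e] at this)
    (by
      intro a j hj t ht
      rw [hT] at ht
      exact (mem_nb.1 ht).2)
  refine ⟨b, hb, J', hJ'.trans (Finset.erase_subset _ _), fun h => Finset.notMem_erase b J (hJ' h),
    hJ'c, T', fun j hj => (hT' j hj).trans (hTC j), ?_, Y 0, hY1 0, hY2 0, hY3 0⟩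
  have e : σ + Δ/2 + Δ/2 = σ + Δ := by ring
  rwa [e] at hBK'

lemma ext_tent {V : Type} {G : SimpleGraph V} {A C C' : ℕ → Finset V} {r : V} {l b : ℕ} {U J J' : Finset ℕ}
    {Y : ℕ → Finset V} (hl : 1 ≤ l) (h : Tent G A r l U J C) (hUJ : Disjoint U J) (hCA : ∀ j ∈ J, C j ⊆ A j)
    (hb : b ∈ J) (hJ' : J' ⊆ J) (hbJ : b ∉ J') (hC' : ∀ j ∈ J', C' j ⊆ C j)
    (hY : ∀ j ∈ J', Y j ⊆ C b) (hcov : ∀ j ∈ J', ∀ t ∈ C' j, ∃ y ∈ Y j, G.Adj y t)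
    (hYa : ∀ j ∈ J', ∀ i ∈ J', i ≠ j → ∀ t ∈ C' i, ∀ y ∈ Y j, ¬ G.Adj y t) :
    Tent G A r (l+1) (insert b U) J' C' := by
  intro j hj t ht
  obtain ⟨y, hy, hyt⟩ := hcov j hj t ht
  obtain ⟨p, κ, hp, hp0, hpl, hpa⟩ := h b hb y (hY j hj hy)
  have hbU : b ∉ U := fun h => Finset.disjoint_left.1 hUJ h hb
  obtain ⟨P, hP⟩ : ∃ P : ℕ → V, P = fun a => if a = 0 then t else p (a-1) := ⟨_, rfl⟩
  have hP0 : P 0 = t := by rw [hP]; simp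
  have hP1 : ∀ a, P (a+1) = p a := fun a => by rw [hP]; simp
  obtain ⟨K, hK⟩ : ∃ K : ℕ → ℕ, K = fun a => if a = 1 then b else κ (a-1) := ⟨_, rfl⟩
  have hK0 : K 1 = b := by rw [hK]; simp
  have hK1 : ∀ a, K (a+2) = κ (a+1) := fun a => by rw [hK]; simp
  have hbne : ∀ i ∈ J', i ≠ b := fun i hi he => hbJ (he ▸ hi)
  have hKc : ∀ a, 0 < a → a < l + 1 → (a = 1 ∧ K a = b) ∨ (1 < a ∧ K a = κ (a-1) ∧ κ (a-1) ∈ U) := by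
    intro a ha hal
    rcases Nat.lt_or_ge 1 a with h | h
    · right
      obtain ⟨x, rfl⟩ : ∃ x, a = x + 2 := ⟨a - 2, by omega⟩
      exact ⟨h, hK1 x, (hp.lab (x+1) (by omega) (by omega)).1⟩
    · left; have : a = 1 := by omega
      subst this; exact ⟨rfl, hK0⟩
  refine ⟨P, K, ⟨?_, ?_, ?_, ?_⟩, hP0, by rw [hP1, hpl], ?_⟩
  · intro a ha
    rcases Nat.eq_zero_or_pos a with h0 | h0
    · subst h0; rw [hP0, zero_add, show (1:ℕ) = 0 + 1 from rfl, hP1, hp0]; exact hyt.symm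
    · obtain ⟨x, rfl⟩ : ∃ x, a = x + 1 := ⟨a - 1, by omega⟩
      rw [hP1, hP1]; exact hp.adj x (by omega)
  · intro a d had hd hadj
    obtain ⟨z, rfl⟩ : ∃ z, d = z + 1 := ⟨d - 1, by omega⟩
    rw [hP1] at hadj
    rcases Nat.eq_zero_or_pos a with h0 | h0
    · subst h0
      rw [hP0] at hadj
      exact hpa z (by omega) (by omega) j (hJ' hj) (hbne j hj) t (hC' j hj ht) hadj.symm
    · obtain ⟨x, rfl⟩ : ∃ x, a = x + 1 := ⟨a - 1, by omega⟩
      rw [hP1] at hadj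
      exact hp.ind x z (by omega) (by omega) hadj
  · intro a ha hal
    obtain ⟨x, rfl⟩ : ∃ x, a = x + 1 := ⟨a - 1, by omega⟩
    rw [hP1]
    rcases hKc _ ha hal with ⟨h1, h2⟩ | ⟨h1, h2, h3⟩
    · have : x = 0 := by omega
      subst this
      rw [h2, hp0]; exact ⟨Finset.mem_insert_self _ _, hCA b hb (hY j hj hy)⟩
    · rw [h2]
      simp only [Nat.add_sub_cancel] at h3 ⊢
      exact ⟨Finset.mem_insert_of_mem h3, (hp.lab x (by omega) (by omega)).2⟩
  · intro a d ha hal hd hdl had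
    rcases hKc a ha hal with ⟨h1, h2⟩ | ⟨h1, h2, h3⟩ <;> rcases hKc d hd hdl with ⟨g1, g2⟩ | ⟨g1, g2, g3⟩
    · omega
    · rw [h2, g2] at had; exact absurd (had ▸ g3) hbU
    · rw [h2, g2] at had; exact absurd (had ▸ h3) hbU
    · rw [h2, g2] at had
      have := hp.inj _ _ (by omega) (by omega) (by omega) (by omega) had
      omega
  · intro a ha hal i hi hij s hs hadj
    obtain ⟨x, rfl⟩ : ∃ x, a = x + 1 := ⟨a - 1, by omega⟩
    rw [hP1] at hadj
    rcases Nat.eq_zero_or_pos x with h0 | h0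
    · subst h0; rw [hp0] at hadj
      exact hYa j hj i hi hij s hs y hy hadj
    · exact hpa x h0 (by omega) i (hJ' hi) (hbne i hi) s (hC' i hi hs) hadj

lemma ext_tents (E : ℕ) : ∀ (K' : ℕ) (c σ Δ lam' : ℝ), σ + Δ < c → 0 < Δ → 0 < lam' →
    ∃ (K : ℕ) (lam : ℝ), 0 < lam ∧ ∀ᶠ n : ℝ in atTop,
    ∀ ⦃V : Type⦄ (G : SimpleGraph V) (A : ℕ → Finset V) (r : V) (l : ℕ) (U J : Finset ℕ) (C : ℕ → Finset V),
      BK G n c J C σ lam → K ≤ J.card → 1 ≤ l → Tent G A r l U J C → Disjoint U J → (∀ j ∈ J, C j ⊆ A j) →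
      ∀ e ≤ E, ∃ U' ⊆ U ∪ J, ∃ J' ⊆ J, Disjoint U' J' ∧ K' ≤ J'.card ∧
        ∃ C' : ℕ → Finset V, (∀ j ∈ J', C' j ⊆ C j) ∧
        BK G n c J' C' (σ + Δ) lam' ∧ Tent G A r (l + e) U' J' C' := by
  induction E with
  | zero =>
    intro K' c σ Δ lam' hσ hΔ hlam'
    refine ⟨K', lam', hlam', ?_⟩
    filter_upwards [eventually_ge_atTop 1] with n hn V G A r l U J C hBK hJ hl hT hUJ hCA e he
    have : e = 0 := by omega
    subst this
    exact ⟨U, Finset.subset_union_left, J, subset_rfl, hUJ, hJ, C, fun _ _ => subset_rfl,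
      hBK.mono subset_rfl hn (by linarith) le_rfl, hT⟩
  | succ E ih =>
    intro K' c σ Δ lam' hσ hΔ hlam'
    obtain ⟨K1, lam1, hlam1, h1⟩ := ih K' c (σ + Δ/2) (Δ/2) lam' (by linarith) (half_pos hΔ) hlam'
    obtain ⟨K2, lam2, hlam2, h2⟩ := nbland K1 c σ (Δ/2) lam1 (by linarith) (half_pos hΔ) hlam1
    refine ⟨max K2 K', min lam2 lam', lt_min hlam2 hlam', ?_⟩
    filter_upwards [eventually_ge_atTop 1, h1, h2] with n hn h1 h2 V G A r l U J C hBK hJ hl hT hUJ hCA e he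
    rcases Nat.eq_zero_or_pos e with h0 | h0
    · subst h0
      exact ⟨U, Finset.subset_union_left, J, subset_rfl, hUJ, (le_max_right _ _).trans hJ, C,
        fun _ _ => subset_rfl, hBK.mono subset_rfl hn (by linarith) (min_le_right _ _), hT⟩
    · obtain ⟨e', rfl⟩ : ∃ e', e = e' + 1 := ⟨e - 1, by omega⟩
      obtain ⟨b, hb, J1, hJ1, hbJ1, hJ1c, C1, hC1, hBK1, Y, hY1, hY2, hY3⟩ := h2 G J C
        (hBK.mono subset_rfl hn le_rfl (min_le_left _ _)) ((le_max_left _ _).trans hJ)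
      have hT1 := ext_tent hl hT hUJ hCA hb hJ1 hbJ1 hC1 hY1 hY2 hY3
      obtain ⟨U', hU', J', hJ', hd, hc, C', hC', hBK', hT'⟩ := h1 G A r (l+1) (insert b U) J1 C1 hBK1 hJ1c
        (by omega) hT1 (by
          rw [Finset.disjoint_insert_left]
          exact ⟨hbJ1, Finset.disjoint_of_subset_right hJ1 hUJ⟩)
        (fun j hj => (hC1 j hj).trans (hCA j (hJ1 hj))) e' (by omega)
      refine ⟨U', ?_, J', hJ'.trans hJ1, hd, hc, C', fun j hj => (hC' j hj).trans (hC1 j (hJ' hj)), ?_, ?_⟩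
      · refine hU'.trans ?_
        intro x hx
        rw [Finset.mem_union, Finset.mem_insert] at hx
        rw [Finset.mem_union]
        rcases hx with (h | h) | h
        · right; rw [h]; exact hb
        · left; exact h
        · right; exact hJ1 h
      · have e : σ + Δ/2 + Δ/2 = σ + Δ := by ring
        rwa [e] at hBK'
      · have e : l + 1 + e' = l + (e' + 1) := by omega
        rwa [e] at hT'

set_option maxHeartbeats 1600000 in
lemma linker (R ℓ K' : ℕ) (c σ Δ lam' : ℝ) (hR : 1 ≤ R) (hc : c < 1)
    (hσ : 1 - c < R * (c - (σ + Δ))) (hℓ : 3 * R + 3 ≤ ℓ) (hΔ : 0 < Δ) (hlam' : 0 < lam') :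
    ∃ (K : ℕ) (lam : ℝ), 0 < lam ∧ ∀ᶠ n : ℝ in atTop,
    ∀ ⦃V : Type⦄ (G : SimpleGraph V) (I : Finset ℕ) (A : ℕ → Finset V),
      BK G n c I A σ lam → K ≤ I.card →
      ∃ U ⊆ I, ∃ J ⊆ I, Disjoint U J ∧ K' ≤ J.card ∧
        ∃ C : ℕ → Finset V, (∀ j ∈ J, C j ⊆ A j) ∧ BK G n c J C (σ + Δ) lam' ∧
        ∀ i ∈ J, ∀ j ∈ J, i ≠ j → ∀ t ∈ C i, ∀ s ∈ C j, ¬ G.Adj t s →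
          ∃ p κ, LPath G A U ℓ p κ ∧ p 0 = t ∧ p ℓ = s ∧
            ∀ a, 0 < a → a < ℓ → ∀ b ∈ J, b ≠ i → b ≠ j → ∀ x ∈ C b, ¬ G.Adj (p a) x := by
  have hR0 : (0:ℝ) < R := by exact_mod_cast hR
  have hcσ : 0 < c - (σ + Δ) := by
    by_contra h
    push Not at h
    nlinarith
  obtain ⟨K4, lam4, hlam4, h4⟩ := ext_tents ℓ K' c (σ + Δ/4 + Δ/4 + Δ/4) (Δ/4) lam' (by linarith)
    (by linarith) hlam'
  obtain ⟨θ, hθ⟩ : ∃ θ : ℝ, θ = 1 / (2 * R + 3) := ⟨_, rfl⟩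
  have hθ0 : 0 < θ := by rw [hθ]; positivity
  obtain ⟨K3, lam3, hlam3, h3⟩ := mk_tents R ((2*R+3) * K4) c (σ + Δ/4) (Δ/4) (lam4 * θ) hR hc (by nlinarith)
    (by linarith) (by positivity)
  obtain ⟨K2, lam2, hlam2, h2⟩ := mk_tents R K3 c σ (Δ/4) lam3 hR hc (by nlinarith) (by linarith) hlam3
  refine ⟨K2, lam2, hlam2, ?_⟩
  filter_upwards [eventually_gt_atTop 1, h2, h3, h4, ev_small hθ0 (by linarith : 0 < Δ/4)] with
    n hn h2 h3 h4 hnθ V G I A hBK hI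
  have hn0 : 0 < n := by linarith
  obtain ⟨i0, hi0, v, hv, U, hUI, hi0U, hUd, J3, hJ3I, hi0J3, hUJ3, hJ3c, C3, hC3A, hBK3, hT3⟩ := h2 G I A hBK hI
  obtain ⟨l1, hl1, hl1R, hT1⟩ := hT3 0
  obtain ⟨l2, hl2, hl2R, hT2⟩ := hT3 1
  obtain ⟨a0, ha0, r, hr, U', hU'J3, ha0U', -, J4, hJ4J3, ha0J4, hU'J4, hJ4c, C4, hC4C3, hBK4, hT4⟩ :=
    h3 G J3 C3 hBK3 hJ3c
  obtain ⟨lM, hlM, hlMR, hTM⟩ := hT4 0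
  obtain ⟨P, κP, hP, hP0, hPl, hPa⟩ := hT2 a0 ha0 r hr
  -- F paths
  have hFex : ∀ j t, ∃ f : Fin (2*R+3), j ∈ J4 → t ∈ C4 j → 1 ≤ (f : ℕ) ∧ ∃ p κ,
      LPath G A (insert i0 (U 0 ∪ U 1)) f p κ ∧ p 0 = t ∧ p f = r ∧
      ∀ a, 0 < a → a < (f : ℕ) → ∀ x ∈ J3, x ≠ j → x ≠ a0 → ∀ s ∈ C3 x, ¬ G.Adj (p a) s := by
    intro j t
    by_cases h : j ∈ J4 ∧ t ∈ C4 j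
    swap
    · exact ⟨0, fun h1 h2 => absurd ⟨h1, h2⟩ h⟩
    obtain ⟨hj, ht⟩ := h
    have ht3 := hC4C3 j hj ht
    obtain ⟨Q, κQ, hQ, hQ0, hQl, hQa⟩ := hT1 j (hJ4J3 hj) t ht3
    have htr : t ≠ r := by
      rintro rfl
      exact Finset.disjoint_left.1 (hBK3.disj j (hJ4J3 hj) a0 ha0 (fun e => ha0J4 (e ▸ hj))) ht3 hr
    obtain ⟨l, p, κ, hl, hlL, hp, hp0, hpl, hinner⟩ := fpath hQ hP hQ0 hQl hP0 hPl hv (hi0U 0) (hi0U 1) hUd htr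
    refine ⟨⟨l, by omega⟩, fun _ _ => ⟨hl, p, κ, hp, hp0, hpl, ?_⟩⟩
    intro a ha hal x hx hxj hxa s hs hadj
    rcases hinner a ha hal with ⟨b, hb, hbl, e⟩ | ⟨b, hb, hbl, e⟩
    · rw [e] at hadj; exact hQa b hb hbl x hx hxj s hs hadj
    · rw [e] at hadj; exact hPa b hb hbl x hx hxa s hs hadj
  choose fF hF using hFex
  obtain ⟨g, J5, hJ5J4, hJ5c, hJ5f⟩ := majority J4 C4 fF
  rw [Fintype.card_fin] at hJ5c hJ5f
  obtain ⟨C5, hC5⟩ : ∃ C5 : ℕ → Finset V, C5 = fun j => (C4 j).filter (fun t => fF j t = g) := ⟨_, rfl⟩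
  have hC5C4 : ∀ j, C5 j ⊆ C4 j := fun j => by rw [hC5]; exact Finset.filter_subset _ _
  have hC5g : ∀ j, ∀ t ∈ C5 j, fF j t = g := fun j t ht => by
    rw [hC5] at ht; exact (Finset.mem_filter.1 ht).2
  have hC5c : ∀ j ∈ J5, θ * (C4 j).card ≤ (C5 j).card := by
    intro j hj
    have h1 : (C4 j).card ≤ (2*R+3) * (C5 j).card := by
      rw [hC5]; exact (hJ5f j hj).trans (le_of_eq (by congr!))
    rw [hθ, one_div, inv_mul_le_iff₀ (by positivity)]
    exact_mod_cast h1
  have hBK5 : BK G n c J5 C5 (σ + Δ/4 + Δ/4 + Δ/4) lam4 := by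
    have := hBK4.shrink hn0 hθ0 (by positivity) hnθ hJ5J4 (fun j _ => hC5C4 j) hC5c
    rwa [mul_div_cancel_right₀ _ hθ0.ne'] at this
  have hJ5c' : K4 ≤ J5.card := by
    have : (2*R+3) * K4 ≤ (2*R+3) * J5.card := hJ4c.trans hJ5c
    exact Nat.le_of_mul_le_mul_left this (by omega)
  have hgR : (g : ℕ) ≤ 2 * R + 2 := by have := g.2; omega
  obtain ⟨UM, hUM, J, hJ, hUMJ, hJc, C, hCC5, hBKf, hTf⟩ := h4 G C3 r lM (U' 0) J5 C5 hBK5 hJ5c' hlM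
    (hTM.mono hJ5J4 (fun j _ => hC5C4 j)) (Finset.disjoint_of_subset_right hJ5J4 (hU'J4 0))
    (fun j hj => (hC5C4 j).trans (hC4C3 j (hJ5J4 hj))) (ℓ - g - lM) (by omega)
  have hJJ3 : J ⊆ J3 := hJ.trans (hJ5J4.trans hJ4J3)
  have hUMJ3 : UM ⊆ J3 := hUM.trans (Finset.union_subset (hU'J3 0) (hJ5J4.trans hJ4J3))
  have ha0UM : a0 ∉ UM := by
    intro h
    rcases Finset.mem_union.1 (hUM h) with h | h
    · exact ha0U' 0 h
    · exact ha0J4 (hJ5J4 h)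
  have ha0J : a0 ∉ J := fun h => ha0J4 (hJ5J4 (hJ h))
  have hCC3 : ∀ j ∈ J, C j ⊆ C3 j := fun j hj =>
    (hCC5 j hj).trans ((hC5C4 j).trans (hC4C3 j (hJ5J4 (hJ hj))))
  obtain ⟨UF, hUF⟩ : ∃ UF, UF = insert i0 (U 0 ∪ U 1) := ⟨_, rfl⟩
  have hUFJ3 : Disjoint UF J3 := by
    rw [hUF, Finset.disjoint_insert_left, Finset.disjoint_union_left]
    exact ⟨hi0J3, hUJ3 0, hUJ3 1⟩
  have hUFI : UF ⊆ I := by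
    rw [hUF]; exact Finset.insert_subset hi0 (Finset.union_subset (hUI 0) (hUI 1))
  refine ⟨insert a0 (UF ∪ UM), Finset.insert_subset (hJ3I ha0) (Finset.union_subset hUFI (hUMJ3.trans hJ3I)),
    J, hJJ3.trans hJ3I, ?_, hJc, C, fun j hj => (hCC3 j hj).trans (hC3A j (hJJ3 hj)), ?_, ?_⟩
  · rw [Finset.disjoint_insert_left, Finset.disjoint_union_left]
    exact ⟨ha0J, Finset.disjoint_of_subset_right hJJ3 hUFJ3, hUMJ⟩
  · have e : σ + Δ/4 + Δ/4 + Δ/4 + Δ/4 = σ + Δ := by ring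
    rwa [e] at hBKf
  intro i hi j hj hij t ht s hs hts
  have ht5 := hCC5 i hi ht
  obtain ⟨hg1, F, κF, hFp, hF0, hFf, hFa⟩ := hF i t (hJ5J4 (hJ hi)) (hC5C4 i ht5)
  rw [hC5g i t ht5] at hg1 hFp hFf hFa
  rw [← hUF] at hFp
  obtain ⟨M, κM, hMp, hM0, hMl, hMa⟩ := hTf j hj s hs
  have elen : (g : ℕ) + (lM + (ℓ - g - lM)) = ℓ := by omega
  obtain ⟨p, κ, hp, hp0, hpl, hpint⟩ := concat hFp (hMp.mono subset_rfl (fun u hu => hC3A u (hUMJ3 hu)))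
    hF0 hFf hM0 hMl (hC3A a0 ha0 hr) (fun h => Finset.disjoint_left.1 hUFJ3 h ha0) ha0UM
    (Finset.disjoint_of_subset_right hUMJ3 hUFJ3) hg1 (by omega) (by
      intro a ha b hb hadj
      rcases Nat.eq_zero_or_pos a with h0 | h0
      · subst h0
        rw [hF0] at hadj
        rcases Nat.eq_zero_or_pos b with g0 | g0
        · subst g0; rw [hM0] at hadj; exact hts hadj
        · exact hMa b g0 hb.le i hi hij t ht hadj.symm
      · rcases Nat.eq_zero_or_pos b with g0 | g0
        · subst g0; rw [hM0] at hadj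
          exact hFa a h0 ha j (hJJ3 hj) hij.symm (fun e => ha0J (e ▸ hj)) s (hCC3 j hj hs) hadj
        · have hl := hMp.lab b g0 hb
          exact hFa a h0 ha _ (hUMJ3 hl.1) (fun e => Finset.disjoint_left.1 hUMJ hl.1 (e ▸ hi))
            (fun e => ha0UM (e ▸ hl.1)) _ hl.2 hadj)
  rw [elen] at hp hpl hpint
  refine ⟨p, κ, hp, hp0, hpl, ?_⟩
  intro a ha hal b hb hbi hbj x hx hadj
  rcases hpint a ha hal with ⟨-, h, e⟩ | ⟨d, hd, hdl, e⟩
  · rw [e] at hadj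
    exact hFa a ha h b (hJJ3 hb) hbi (fun e => ha0J (e ▸ hb)) x (hCC3 b hb hx) hadj
  · rw [e] at hadj
    exact hMa d hd hdl b hb hbj x hx hadj

end Aux8

section Aux9
open scoped Classical
open Filter

variable {W : Type}

def Emb (H : SimpleGraph W) (S : Set W) {V : Type} (G : SimpleGraph V) (I : Finset ℕ) (A : ℕ → Finset V)
    (f : W → V) (q : W → ℕ) : Prop :=
  (∀ a ∈ S, ∀ b ∈ S, q a = q b → a = b) ∧ (∀ w ∈ S, q w ∈ I ∧ f w ∈ A (q w)) ∧
    ∀ a ∈ S, ∀ b ∈ S, G.Adj (f a) (f b) ↔ H.Adj a b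

def PP (H : SimpleGraph W) (R : ℕ) (c : ℝ) (S : Set W) : Prop :=
  ∀ σ : ℝ, 1 - c < R * (c - σ) → ∃ (K : ℕ) (lam : ℝ), 0 < lam ∧ ∀ᶠ n : ℝ in atTop,
    ∀ ⦃V : Type⦄ (G : SimpleGraph V) (I : Finset ℕ) (A : ℕ → Finset V),
      BK G n c I A σ lam → K ≤ I.card → ∃ f q, Emb H S G I A f q

lemma exists_room {R : ℕ} {c σ : ℝ} (hR : 1 ≤ R) (h : 1 - c < R * (c - σ)) :
    ∃ Δ : ℝ, 0 < Δ ∧ 1 - c < R * (c - (σ + Δ)) := by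
  have hR0 : (0:ℝ) < R := by exact_mod_cast hR
  refine ⟨(R * (c - σ) - (1 - c)) / (2 * R), div_pos (by linarith) (by linarith), ?_⟩
  have : R * (c - (σ + (R * (c - σ) - (1 - c)) / (2 * R))) = R * (c - σ) - (R * (c - σ) - (1 - c)) / 2 := by
    field_simp; ring
  rw [this]; linarith

lemma PP_empty (H : SimpleGraph W) (R : ℕ) (c : ℝ) : PP H R c ∅ := by
  intro σ _
  refine ⟨1, 1, one_pos, ?_⟩
  filter_upwards [eventually_gt_atTop 0] with n hn V G I A hBK hI
  obtain ⟨i, hi⟩ : I.Nonempty := Finset.card_pos.1 (by omega)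
  obtain ⟨v, _⟩ := Finset.card_pos.1 (hBK.pos hn hi)
  exact ⟨fun _ => v, fun _ => 0, by simp [Emb]⟩

lemma PP_leaf [Finite W] (H : SimpleGraph W) (R : ℕ) (c : ℝ) (hR : 1 ≤ R) (hc : c < 1) (S : Set W) (v : W) (hv : v ∉ S)
    (hdeg : (S ∩ H.neighborSet v).ncard ≤ 1) (ih : PP H R c S) : PP H R c (insert v S) := by
  intro σ hσ
  obtain ⟨Δ, hΔ, hσΔ⟩ := exists_room hR hσ
  obtain ⟨K1, lam1, hlam1, h1⟩ := ih (σ + Δ) hσΔ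
  have hR0 : (0:ℝ) < R := by exact_mod_cast hR
  have hcσ : σ < c := by
    by_contra h
    push Not at h
    nlinarith
  obtain ⟨K2, lam2, hlam2, h2⟩ := nbland (K1+1) c σ Δ lam1 hcσ hΔ hlam1
  refine ⟨K2, lam2, hlam2, ?_⟩
  filter_upwards [eventually_ge_atTop 1, h1, h2] with n hn h1 h2 V G I A hBK hI
  obtain ⟨b, hb, J, hJ, hbJ, hJc, C, hCA, hBK', Y, hY1, hY2, hY3⟩ := h2 G I A hBK hI
  -- it suffices to find x
  have key : ∀ (f : W → V) (q : W → ℕ) (x : V), Emb H S G J C f q → x ∈ A b →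
      (∀ w ∈ S, G.Adj x (f w) ↔ H.Adj v w) → ∃ f q, Emb H (insert v S) G I A f q := by
    intro f q x ⟨e1, e2, e3⟩ hx hxa
    refine ⟨fun w => if w = v then x else f w, fun w => if w = v then b else q w, ?_, ?_, ?_⟩
    · intro a ha d hd had
      have hne : ∀ w ∈ S, w ≠ v := fun w hw e => hv (e ▸ hw)
      rcases ha with rfl | ha <;> rcases hd with rfl | hd
      · rfl
      · simp only [if_true, hne d hd, if_false] at had
        exact absurd (had ▸ (e2 d hd).1) hbJ
      · simp only [if_true, hne a ha, if_false] at had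
        exact absurd (had ▸ (e2 a ha).1) hbJ
      · simp only [hne a ha, hne d hd, if_false] at had
        exact e1 a ha d hd had
    · intro w hw
      have hne : ∀ w ∈ S, w ≠ v := fun w hw e => hv (e ▸ hw)
      rcases hw with rfl | hw
      · simp only [if_true]; exact ⟨hb, hx⟩
      · simp only [hne w hw, if_false]
        exact ⟨hJ (e2 w hw).1, hCA _ (e2 w hw).1 (e2 w hw).2⟩
    · intro a ha d hd
      have hne : ∀ w ∈ S, w ≠ v := fun w hw e => hv (e ▸ hw)
      rcases ha with rfl | ha <;> rcases hd with rfl | hd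
      · simp
      · simp only [if_true, hne d hd, if_false]; exact hxa d hd
      · simp only [if_true, hne a ha, if_false]
        rw [G.adj_comm, H.adj_comm]; exact hxa a ha
      · simp only [hne a ha, hne d hd, if_false]; exact e3 a ha d hd
  by_cases hu : ∃ u ∈ S, H.Adj v u
  · obtain ⟨u, huS, huv⟩ := hu
    have huniq : ∀ w ∈ S, H.Adj v w → w = u := by
      intro w hw hvw
      exact (Set.ncard_le_one (Set.toFinite _)).1 hdeg w ⟨hw, hvw⟩ u ⟨huS, huv⟩
    obtain ⟨f, q, hE⟩ := h1 G J C hBK' (by omega)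
    obtain ⟨e1, e2, e3⟩ := hE
    obtain ⟨x, hx, hxa⟩ := hY2 (q u) (e2 u huS).1 (f u) (e2 u huS).2
    refine key f q x ⟨e1, e2, e3⟩ (hY1 _ (e2 u huS).1 hx) ?_
    intro w hw
    by_cases hwu : w = u
    · subst hwu; exact ⟨fun _ => huv, fun _ => hxa⟩
    · refine ⟨fun h => ?_, fun h => absurd (huniq w hw h) hwu⟩
      exact absurd h (hY3 (q u) (e2 u huS).1 (q w) (e2 w hw).1 (fun e => hwu (e1 w hw u huS e)) _
        (e2 w hw).2 x hx)
  · push Not at hu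
    obtain ⟨j0, hj0⟩ : J.Nonempty := Finset.card_pos.1 (by omega)
    have hce : (J.erase j0).card = J.card - 1 := Finset.card_erase_of_mem hj0
    obtain ⟨f, q, e1, e2, e3⟩ := h1 G (J.erase j0) C (hBK'.mono (Finset.erase_subset _ _) hn le_rfl le_rfl) (by omega)
    obtain ⟨t, ht⟩ := Finset.card_pos.1 (hBK'.pos (by linarith) hj0)
    obtain ⟨x, hx, -⟩ := hY2 j0 hj0 t ht
    refine key f q x ⟨e1, fun w hw => ⟨Finset.mem_of_mem_erase (e2 w hw).1, (e2 w hw).2⟩, e3⟩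
      (hY1 _ hj0 hx) ?_
    intro w hw
    refine ⟨fun h => ?_, fun h => absurd h (hu w hw)⟩
    exact absurd h (hY3 j0 hj0 (q w) (Finset.mem_of_mem_erase (e2 w hw).1)
      (Finset.ne_of_mem_erase (e2 w hw).1) _ (e2 w hw).2 x hx)

lemma path_adj_iff {V : Type} {G : SimpleGraph V} {P : ℕ → V} {l : ℕ} (h1 : ∀ a < l, G.Adj (P a) (P (a+1)))
    (h2 : ∀ a b, a + 1 < b → b ≤ l → ¬ G.Adj (P a) (P b)) {a b : ℕ} (ha : a ≤ l) (hb : b ≤ l) :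
    G.Adj (P a) (P b) ↔ (a + 1 = b ∨ b + 1 = a) := by
  constructor
  · intro h
    by_contra hn
    rcases lt_trichotomy a b with hh | hh | hh
    · exact h2 a b (by omega) hb h
    · subst hh; exact G.loopless.irrefl _ h
    · exact h2 b a (by omega) ha h.symm
  · rintro (rfl | rfl)
    · exact h1 a (by omega)
    · exact (h1 b (by omega)).symm

lemma PP_handle (H : SimpleGraph W) (R : ℕ) (c : ℝ) (hR : 1 ≤ R) (hc : c < 1) (S : Set W) (ℓ : ℕ) (p : ℕ → W)
    (hh : IsHandle H S ℓ p) (hℓ : 3 * R + 3 ≤ ℓ) (ih : PP H R c S) :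
    PP H R c (S ∪ {w | ∃ j ≤ ℓ, w = p j}) := by
  obtain ⟨h2ℓ, hinj, hp0, hpl, hinner, hadj, hind, hdeg⟩ := hh
  intro σ hσ
  obtain ⟨Δ, hΔ, hσΔ⟩ := exists_room hR hσ
  obtain ⟨K1, lam1, hlam1, h1⟩ := ih (σ + Δ) hσΔ
  obtain ⟨K2, lam2, hlam2, h2⟩ := linker R ℓ K1 c σ Δ lam1 hR hc hσΔ hℓ hΔ hlam1
  refine ⟨K2, lam2, hlam2, ?_⟩
  filter_upwards [eventually_ge_atTop 1, h1, h2] with n hn h1 h2 V G I A hBK hI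
  obtain ⟨U, hUI, J, hJI, hUJ, hJc, C, hCA, hBK', hlink⟩ := h2 G I A hBK hI
  obtain ⟨f, q, e1, e2, e3⟩ := h1 G J C hBK' hJc
  have hne : p 0 ≠ p ℓ := fun e => by have := hinj 0 (by omega) ℓ le_rfl e; omega
  obtain ⟨P, κ, hP, hP0, hPl, hPa⟩ := hlink (q (p 0)) (e2 _ hp0).1 (q (p ℓ)) (e2 _ hpl).1
    (fun e => hne (e1 _ hp0 _ hpl e)) (f (p 0)) (e2 _ hp0).2 (f (p ℓ)) (e2 _ hpl).2
    (fun h => hind 0 ℓ (by omega) le_rfl ((e3 _ hp0 _ hpl).1 h))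
  have hex : ∃ idx : W → ℕ, ∀ a ≤ ℓ, idx (p a) = a := by
    refine ⟨fun w => if h : ∃ a ≤ ℓ, p a = w then h.choose else 0, fun a ha => ?_⟩
    have h : ∃ b ≤ ℓ, p b = p a := ⟨a, ha, rfl⟩
    simp only [h, dif_pos]
    exact hinj _ h.choose_spec.1 a ha h.choose_spec.2
  obtain ⟨idx, hidx⟩ := hex
  obtain ⟨F, hF⟩ : ∃ F : W → V, F = fun w => if w ∈ S then f w else P (idx w) := ⟨_, rfl⟩
  obtain ⟨Q, hQ⟩ : ∃ Q : W → ℕ, Q = fun w => if w ∈ S then q w else κ (idx w) := ⟨_, rfl⟩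
  have FS : ∀ w ∈ S, F w = f w := fun w hw => by rw [hF]; simp [hw]
  have QS : ∀ w ∈ S, Q w = q w := fun w hw => by rw [hQ]; simp [hw]
  have Fp : ∀ a, 0 < a → a < ℓ → F (p a) = P a := fun a ha hal => by
    rw [hF]; simp [hinner a ha hal, hidx a hal.le]
  have Qp : ∀ a, 0 < a → a < ℓ → Q (p a) = κ a := fun a ha hal => by
    rw [hQ]; simp [hinner a ha hal, hidx a hal.le]
  have hcase : ∀ w ∈ S ∪ {w | ∃ j ≤ ℓ, w = p j}, w ∈ S ∨ ∃ a, 0 < a ∧ a < ℓ ∧ w = p a := by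
    rintro w (hw | ⟨a, ha, rfl⟩)
    · exact Or.inl hw
    · rcases Nat.eq_zero_or_pos a with h0 | h0
      · subst h0; exact Or.inl hp0
      · rcases ha.lt_or_eq with h | h
        · exact Or.inr ⟨a, h0, h, rfl⟩
        · rw [h]; exact Or.inl hpl
  have hmix : ∀ w ∈ S, ∀ a, 0 < a → a < ℓ → (G.Adj (P a) (f w) ↔ H.Adj (p a) w) := by
    intro w hw a ha hal
    by_cases w0 : w = p 0
    · subst w0
      rw [← hP0, path_adj_iff hP.adj hP.ind hal.le (Nat.zero_le _), path_adj_iff hadj hind hal.le (Nat.zero_le _)]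
    by_cases wl : w = p ℓ
    · subst wl
      rw [← hPl, path_adj_iff hP.adj hP.ind hal.le le_rfl, path_adj_iff hadj hind hal.le le_rfl]
    refine ⟨fun h => ?_, fun h => ?_⟩
    · exact absurd h (hPa a ha hal (q w) (e2 w hw).1 (fun e => w0 (e1 _ hw _ hp0 e))
        (fun e => wl (e1 _ hw _ hpl e)) _ (e2 w hw).2)
    · exfalso
      rcases hdeg a ha hal w (Or.inl hw) h with e | e
      · rcases Nat.eq_zero_or_pos (a-1) with h0 | h0
        · rw [h0] at e; exact w0 e
        · exact hinner (a-1) h0 (by omega) (e ▸ hw)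
      · rcases Nat.lt_or_ge (a+1) ℓ with h0 | h0
        · exact hinner (a+1) (by omega) h0 (e ▸ hw)
        · have : a + 1 = ℓ := by omega
          rw [this] at e; exact wl e
  refine ⟨F, Q, ?_, ?_, ?_⟩
  · intro w hw z hz hwz
    rcases hcase w hw with hw | ⟨a, ha, hal, rfl⟩ <;> rcases hcase z hz with hz | ⟨b, hb, hbl, rfl⟩
    · rw [QS w hw, QS z hz] at hwz; exact e1 w hw z hz hwz
    · rw [QS w hw, Qp b hb hbl] at hwz
      exact absurd (hwz ▸ (e2 w hw).1) (Finset.disjoint_left.1 hUJ (hP.lab b hb hbl).1)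
    · rw [QS z hz, Qp a ha hal] at hwz
      exact absurd (hwz ▸ (e2 z hz).1) (Finset.disjoint_left.1 hUJ (hP.lab a ha hal).1)
    · rw [Qp a ha hal, Qp b hb hbl] at hwz
      rw [hP.inj a b ha hal hb hbl hwz]
  · intro w hw
    rcases hcase w hw with hw | ⟨a, ha, hal, rfl⟩
    · rw [QS w hw, FS w hw]; exact ⟨hJI (e2 w hw).1, hCA _ (e2 w hw).1 (e2 w hw).2⟩
    · rw [Qp a ha hal, Fp a ha hal]; exact ⟨hUI (hP.lab a ha hal).1, (hP.lab a ha hal).2⟩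
  · intro w hw z hz
    rcases hcase w hw with hw | ⟨a, ha, hal, rfl⟩ <;> rcases hcase z hz with hz | ⟨b, hb, hbl, rfl⟩
    · rw [FS w hw, FS z hz]; exact e3 w hw z hz
    · rw [FS w hw, Fp b hb hbl, G.adj_comm, H.adj_comm]; exact hmix w hw b hb hbl
    · rw [FS z hz, Fp a ha hal]; exact hmix z hz a ha hal
    · rw [Fp a ha hal, Fp b hb hbl, path_adj_iff hP.adj hP.ind hal.le hbl.le, path_adj_iff hadj hind hal.le hbl.le]

lemma PP_of_buildable [Finite W] (H : SimpleGraph W) (R : ℕ) (c : ℝ) (hR : 1 ≤ R) (hc : c < 1) (S : Set W)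
    (h : WeaklyBuildableOn H (3 * R + 3) S) : PP H R c S := by
  induction h with
  | empty => exact PP_empty H R c
  | subleaf S v hv hdeg hS ih => exact PP_leaf H R c hR hc S v hv hdeg ih
  | handle S n p hS hh hn ih => exact PP_handle H R c hR hc S n p hh hn ih

end Aux9

section Aux10
open scoped Classical
open Filter

lemma exists_blocks (V : Type) [Fintype V] (K s : ℕ) (hs : K * s ≤ Fintype.card V) :
    ∃ A : ℕ → Finset V, (∀ i < K, (A i).card = s) ∧ ∀ i < K, ∀ j < K, i ≠ j → Disjoint (A i) (A j) := by
  rcases Nat.eq_zero_or_pos (Fintype.card V) with h0 | h0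
  · refine ⟨fun _ => ∅, fun i hi => ?_, by simp⟩
    rw [h0] at hs
    have : K * s = 0 := by omega
    rcases Nat.mul_eq_zero.1 this with h | h
    · omega
    · simp [h]
  obtain ⟨v0⟩ := Fintype.card_pos_iff.1 h0
  obtain ⟨g, hg⟩ : ∃ g : ℕ → V, ∀ a < Fintype.card V, ∀ b < Fintype.card V, g a = g b → a = b := by
    refine ⟨fun k => if h : k < Fintype.card V then (Fintype.equivFin V).symm ⟨k, h⟩ else v0, ?_⟩
    intro a ha b hb hab
    simp only [ha, hb, dif_pos] at hab
    simpa using hab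
  have hlt : ∀ i < K, ∀ k ∈ Finset.Ico (i*s) (i*s+s), k < Fintype.card V := by
    intro i hi k hk
    have h1 : (i+1) * s ≤ K * s := Nat.mul_le_mul_right _ hi
    rw [Finset.mem_Ico] at hk
    rw [add_mul] at h1
    omega
  refine ⟨fun i => (Finset.Ico (i*s) (i*s+s)).image g, ?_, ?_⟩
  · intro i hi
    rw [Finset.card_image_of_injOn, Nat.card_Ico]
    · omega
    · intro a ha b hb hab
      exact hg a (hlt i hi a ha) b (hlt i hi b hb) hab
  · intro i hi j hj hij
    rw [Finset.disjoint_left]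
    intro x hx hy
    rw [Finset.mem_image] at hx hy
    obtain ⟨a, ha, rfl⟩ := hx
    obtain ⟨b, hb, hab⟩ := hy
    have := hg b (hlt j hj b hb) a (hlt i hi a ha) hab
    subst this
    rw [Finset.mem_Ico] at ha hb
    rcases lt_or_gt_of_ne hij with h | h
    · have h1 : (i+1) * s ≤ j * s := Nat.mul_le_mul_right _ h
      rw [add_mul] at h1; omega
    · have h1 : (j+1) * s ≤ i * s := Nat.mul_le_mul_right _ h
      rw [add_mul] at h1; omega

/-- a sparse coherent graph with two nonadjacent vertices is big -/
lemma two_nonadj {V : Type} [Fintype V] {G : SimpleGraph V} {γ : ℝ} (h : Coherent G γ γ) {x y : V}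
    (hxy : x ≠ y) (hn : ¬ G.Adj x y) : 1 < γ := by
  by_contra hγ
  push Not at hγ
  refine h ⟨{x}, {y}, by simpa using hxy, ?_, by simpa using hγ, by simpa using hγ⟩
  intro a ha b hb
  rw [Set.mem_singleton_iff] at ha hb
  subst ha; subst hb; exact hn

lemma exists_nonadj {V : Type} [Fintype V] {G : SimpleGraph V} (hV : 1 < Fintype.card V) {ε : ℝ}
    (hs : EpsSparse G ε) (hε : ε ≤ 1/2) : ∃ x y : V, x ≠ y ∧ ¬ G.Adj x y := by
  obtain ⟨x⟩ := Fintype.card_pos_iff.1 (by omega : 0 < Fintype.card V)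
  refine ⟨x, ?_⟩
  by_contra hcon
  push Not at hcon
  have h1 : ({x}ᶜ : Set V) ⊆ G.neighborSet x := by
    intro y hy
    exact hcon y (fun e => hy (by rw [e]; rfl))
  have h2 := Set.ncard_le_ncard h1 (Set.toFinite _)
  have h3 := Set.ncard_add_ncard_compl ({x} : Set V)
  rw [Set.ncard_singleton, Nat.card_eq_fintype_card] at h3
  have h4 := hs x
  have h5 : (Fintype.card V : ℝ) - 1 ≤ (G.neighborSet x).ncard := by
    have : Fintype.card V ≤ (G.neighborSet x).ncard + 1 := by omega
    have : (Fintype.card V : ℝ) ≤ (G.neighborSet x).ncard + 1 := by exact_mod_cast this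
    linarith
  have h6 : (2:ℝ) ≤ Fintype.card V := by exact_mod_cast hV
  nlinarith

variable {W : Type}

lemma finish_ge (c : ℝ) (hc : 1 ≤ c) (H : SimpleGraph W) :
    ∃ ε : ℝ, 0 < ε ∧ ∀ {V : Type} [Fintype V] (G : SimpleGraph V),
      1 < Fintype.card V → EpsSparse G ε →
      Coherent G (ε * (Fintype.card V : ℝ) ^ (1 - c))
        (ε * (Fintype.card V : ℝ) ^ (1 - c)) →
      Contains G H := by
  refine ⟨1/2, by norm_num, ?_⟩
  intro V _ G hV hs hco
  exfalso
  obtain ⟨x, y, hxy, hn⟩ := exists_nonadj hV hs le_rfl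
  have h1 := two_nonadj hco hxy hn
  have h2 : (1:ℝ) ≤ Fintype.card V := by exact_mod_cast hV.le
  have h3 := Real.rpow_le_one_of_one_le_of_nonpos h2 (by linarith : 1 - c ≤ 0)
  linarith

set_option maxHeartbeats 800000 in
lemma finish_lt (c : ℝ) (hc0 : 0 < c) (hc : c < 1) (H : SimpleGraph W) (R : ℕ) (hR : 1 ≤ R)
    (hRc : 1 - c < R * c) (hPP : PP H R c Set.univ) :
    ∃ ε : ℝ, 0 < ε ∧ ∀ {V : Type} [Fintype V] (G : SimpleGraph V),
      1 < Fintype.card V → EpsSparse G ε →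
      Coherent G (ε * (Fintype.card V : ℝ) ^ (1 - c))
        (ε * (Fintype.card V : ℝ) ^ (1 - c)) →
      Contains G H := by
  obtain ⟨σ, hσ0, hσ⟩ := exists_room (σ := 0) hR (by simpa using hRc)
  rw [zero_add] at hσ
  obtain ⟨K, lam, hlam, hev⟩ := hPP σ hσ
  obtain ⟨N, hN⟩ := eventually_atTop.1 (hev.and (ev_large (θ := 2 * ((K:ℝ) + 1)) hσ0))
  have hK0 : (0:ℝ) < 2 * ((K:ℝ) + 1) := by positivity
  have hK1 : (0:ℝ) ≤ (K:ℝ) := by positivity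
  obtain ⟨ε, hε⟩ : ∃ ε : ℝ, ε = min (min (1/2) (1 / (2 * ((K:ℝ) + 1)))) (min (lam / (2 * ((K:ℝ) + 1))) (1 / max N 1)) :=
    ⟨_, rfl⟩
  have hN0 : 0 < max N 1 := lt_max_of_lt_right one_pos
  have hε0 : 0 < ε := by
    rw [hε]; exact lt_min (lt_min (by norm_num) (by positivity)) (lt_min (by positivity) (by positivity))
  have hε1 : ε ≤ 1/2 := by rw [hε]; exact (min_le_left _ _).trans (min_le_left _ _)
  have hε2 : ε * (2 * ((K:ℝ) + 1)) ≤ 1 := by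
    rw [← le_div_iff₀ hK0, hε]; exact (min_le_left _ _).trans (min_le_right _ _)
  have hε3 : ε * (2 * ((K:ℝ) + 1)) ≤ lam := by
    rw [← le_div_iff₀ hK0, hε]; exact (min_le_right _ _).trans (min_le_left _ _)
  have hε4 : ε * max N 1 ≤ 1 := by
    rw [← le_div_iff₀ hN0, hε]; exact (min_le_right _ _).trans (min_le_right _ _)
  refine ⟨ε, hε0, ?_⟩
  intro V _ G hV hs hco
  obtain ⟨n, hn⟩ : ∃ n : ℝ, n = (Fintype.card V : ℝ) := ⟨_, rfl⟩
  have hn1 : 1 ≤ n := by rw [hn]; exact_mod_cast hV.le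
  have hn0 : 0 < n := by linarith
  have hpow : n ^ (1 - c) ≤ n := by
    calc n ^ (1 - c) ≤ n ^ (1:ℝ) := Real.rpow_le_rpow_of_exponent_le hn1 (by linarith)
      _ = n := Real.rpow_one n
  rw [← hn] at hco
  have hbig : 1 < ε * n := by
    obtain ⟨x, y, hxy, hna⟩ := exists_nonadj hV hs hε1
    have := two_nonadj hco hxy hna
    nlinarith
  have hnN : N ≤ n := by
    have h1 : ε * max N 1 ≤ ε * n := by linarith
    exact (le_max_left N 1).trans (le_of_mul_le_mul_left h1 hε0)
  have hnK : 2 * ((K:ℝ) + 1) ≤ n := by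
    have h1 : ε * (2 * ((K:ℝ) + 1)) ≤ ε * n := by linarith
    exact le_of_mul_le_mul_left h1 hε0
  obtain ⟨hev', hlarge⟩ := hN n hnN
  obtain ⟨s, hs'⟩ : ∃ s, s = Fintype.card V / (K+1) := ⟨_, rfl⟩
  have hsK : (K+1) * s ≤ Fintype.card V := by rw [hs']; exact Nat.mul_div_le _ _
  have hsn : n ≤ 2 * ((K:ℝ) + 1) * s := by
    have h1 := Nat.lt_mul_div_succ (Fintype.card V) (by omega : 0 < K + 1)
    rw [← hs'] at h1
    have h2 : (Fintype.card V : ℝ) < ((K:ℝ) + 1) * (s + 1) := by exact_mod_cast h1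
    rw [← hn] at h2
    nlinarith
  have hsn' : (s:ℝ) ≤ n := by
    have h1 : ((K:ℝ) + 1) * s ≤ n := by rw [hn]; exact_mod_cast hsK
    have : (0:ℝ) ≤ s := by positivity
    nlinarith
  obtain ⟨A, hAc, hAd⟩ := exists_blocks V (K+1) s hsK
  have hBK : BK G n c (Finset.range (K+1)) A σ lam := by
    refine ⟨?_, ?_, ?_, ?_, ?_⟩
    · intro i hi j hj hij
      exact hAd i (Finset.mem_range.1 hi) j (Finset.mem_range.1 hj) hij
    · intro i hi
      rw [hAc i (Finset.mem_range.1 hi)]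
      have e : n = n ^ σ * n ^ (1 - σ) := by
        rw [← Real.rpow_add hn0]; simp
      have h1 : 2 * ((K:ℝ) + 1) * n ^ (1 - σ) ≤ 2 * ((K:ℝ) + 1) * s := by
        refine le_trans ?_ hsn
        calc 2 * ((K:ℝ) + 1) * n ^ (1 - σ) ≤ n ^ σ * n ^ (1 - σ) :=
              mul_le_mul_of_nonneg_right hlarge (by positivity)
          _ = n := e.symm
      exact le_of_mul_le_mul_left h1 hK0
    · intro i hi
      rw [hAc i (Finset.mem_range.1 hi)]; exact hsn'
    · intro i hi j hj hij t ht
      rw [hAc j (Finset.mem_range.1 hj)]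
      have h1 : dg G t (A j) ≤ (G.neighborSet t).ncard := by
        rw [dg, ← Set.ncard_coe_finset]
        refine Set.ncard_le_ncard ?_ (Set.toFinite _)
        intro z hz
        simp at hz
        exact hz.2
      have h2 : (dg G t (A j) : ℝ) ≤ (G.neighborSet t).ncard := by exact_mod_cast h1
      have h3 := hs t
      rw [← hn] at h3
      have h4 : (0:ℝ) ≤ s := by positivity
      nlinarith [mul_le_mul_of_nonneg_left hsn hε0.le, mul_le_mul_of_nonneg_right hε3 h4]
    · intro i hi j hj hij X hX Z hZ hXc hZc
      by_contra hcon
      push Not at hcon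
      have hle : ε * n ^ (1 - c) ≤ n ^ (1 - c) := by
        have : 0 ≤ n ^ (1 - c) := by positivity
        nlinarith
      refine hco ⟨(X : Set V), (Z : Set V), ?_, fun a ha b hb => hcon a ha b hb, ?_, ?_⟩
      · rw [Finset.disjoint_coe]
        exact Finset.disjoint_of_subset_left hX (Finset.disjoint_of_subset_right hZ
          (hAd i (Finset.mem_range.1 hi) j (Finset.mem_range.1 hj) hij))
      · rw [Set.ncard_coe_finset]; linarith
      · rw [Set.ncard_coe_finset]; linarith
  obtain ⟨f, q, e1, e2, e3⟩ := hev' G (Finset.range (K+1)) A hBK (by simp)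
  refine ⟨⟨⟨f, ?_⟩, ?_⟩⟩
  · intro a b hab
    by_contra hne
    have hq : q a ≠ q b := fun h => hne (e1 a trivial b trivial h)
    have h1 := hBK.disj (q a) (e2 a trivial).1 (q b) (e2 b trivial).1 hq
    exact Finset.disjoint_left.1 h1 (e2 a trivial).2 (hab ▸ (e2 b trivial).2)
  · intro a b
    exact e3 a trivial b trivial

end Aux10

section Aux11
open scoped Classical

variable {W : Type} {H : SimpleGraph W}

lemma two_le_dg {Z : Finset W} {v u w : W} (hu : u ∈ Z) (hw : w ∈ Z) (huw : u ≠ w) (h1 : H.Adj v u)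
    (h2 : H.Adj v w) : 2 ≤ dg H v Z := by
  rw [dg, ← Finset.card_pair huw]
  apply Finset.card_le_card
  intro x hx
  rw [Finset.mem_insert, Finset.mem_singleton] at hx
  rw [Finset.mem_filter]
  rcases hx with rfl | rfl
  · exact ⟨hu, h1⟩
  · exact ⟨hw, h2⟩

lemma only_two {Z : Finset W} {v u w x : W} (hd : dg H v Z = 2) (hu : u ∈ Z) (hw : w ∈ Z) (huw : u ≠ w)
    (h1 : H.Adj v u) (h2 : H.Adj v w) (hx : x ∈ Z) (h3 : H.Adj v x) : x = u ∨ x = w := by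
  have : ({u, w} : Finset W) = Z.filter (fun z => H.Adj v z) := by
    apply Finset.eq_of_subset_of_card_le
    · intro x hx
      rw [Finset.mem_insert, Finset.mem_singleton] at hx
      rw [Finset.mem_filter]
      rcases hx with rfl | rfl
      · exact ⟨hu, h1⟩
      · exact ⟨hw, h2⟩
    · rw [Finset.card_pair huw]; exact hd.le
  have hx' : x ∈ ({u, w} : Finset W) := by rw [this, Finset.mem_filter]; exact ⟨hx, h3⟩
  simpa using hx'

def CongB (H : SimpleGraph W) (κ : ℝ) : Prop := ∀ S : Finset W, (∃ v ∈ S, 0 < dg H v S) →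
  ((∑ v ∈ S, dg H v S : ℕ) : ℝ) / 2 - S.card + 1 ≤ κ * (((∑ v ∈ S, dg H v S : ℕ) : ℝ) / 2)

lemma congB_of [Fintype W] {κ : ℝ} (h : congestion H ≤ κ) : CongB H κ := by
  intro S ⟨v, hv, hpos⟩
  obtain ⟨J, hJ⟩ : ∃ J : H.Subgraph, J = (⊤ : H.Subgraph).induce (S : Set W) := ⟨_, rfl⟩
  have hJv : J.verts.ncard = S.card := by rw [hJ]; simp
  have hJadj : ∀ a b, J.Adj a b ↔ a ∈ S ∧ b ∈ S ∧ H.Adj a b := by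
    intro a b; rw [hJ]; simp
  have hsum : (∑ v ∈ S, dg H v S) = 2 * J.edgeSet.ncard := by
    have h1 := J.spanningCoe.sum_degrees_eq_twice_card_edges
    have h2 : J.edgeSet.ncard = J.spanningCoe.edgeFinset.card := by
      rw [← Set.ncard_coe_finset, SimpleGraph.coe_edgeFinset, Subgraph.edgeSet_spanningCoe]
    rw [h2, ← h1]
    have h3 : ∀ v, J.spanningCoe.degree v = if v ∈ S then dg H v S else 0 := by
      intro v
      rw [← SimpleGraph.card_neighborFinset_eq_degree]
      split_ifs with hv
      · rw [dg]; congr 1; ext z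
        rw [SimpleGraph.mem_neighborFinset, Subgraph.spanningCoe_adj, hJadj, Finset.mem_filter]
        tauto
      · rw [Finset.card_eq_zero, Finset.eq_empty_iff_forall_notMem]
        intro z hz
        rw [SimpleGraph.mem_neighborFinset, Subgraph.spanningCoe_adj, hJadj] at hz
        exact hv hz.1
    rw [Finset.sum_congr rfl (fun v _ => h3 v), Finset.sum_ite_mem, Finset.univ_inter]
  have hE : J.edgeSet.Nonempty := by
    obtain ⟨w, hw⟩ := Finset.card_pos.1 hpos
    rw [Finset.mem_filter] at hw
    exact ⟨s(v, w), by rw [Subgraph.mem_edgeSet, hJadj]; exact ⟨hv, hw.1, hw.2⟩⟩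
  have hEpos : 0 < J.edgeSet.ncard := (Set.ncard_pos (Set.toFinite _)).2 hE
  have hle : 1 - ((J.verts.ncard : ℝ) - 1) / (J.edgeSet.ncard : ℝ) ≤ congestion H := by
    apply le_csSup
    · refine ⟨1, ?_⟩
      rintro x (hx | ⟨J', hJ', rfl⟩)
      · rw [Set.mem_singleton_iff] at hx; rw [hx]; norm_num
      · have : 0 < J'.verts.ncard := by
          obtain ⟨e, he⟩ := hJ'
          induction e using Sym2.ind with
          | _ a b => exact (Set.ncard_pos (Set.toFinite _)).2 ⟨a, J'.edge_vert he⟩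
        have h1 : (1:ℝ) ≤ J'.verts.ncard := by exact_mod_cast this
        have h2 : 0 ≤ ((J'.verts.ncard : ℝ) - 1) / (J'.edgeSet.ncard : ℝ) :=
          div_nonneg (by linarith) (by positivity)
        linarith
    · right; exact ⟨J, hE, rfl⟩
  have hle2 := hle.trans h
  rw [hsum]
  push_cast
  rw [hJv] at hle2
  have hEr : (0:ℝ) < J.edgeSet.ncard := by exact_mod_cast hEpos
  have : (1 - κ) * J.edgeSet.ncard ≤ (S.card : ℝ) - 1 := by
    rw [← le_div_iff₀ hEr]; linarith
  linarith

lemma thin {κ : ℝ} (hκ1 : κ ≤ 1) (h : CongB H κ) {Z : Finset W} (hZ : Z.Nonempty)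
    (hd : ∀ v ∈ Z, 2 ≤ dg H v Z) : 1 ≤ κ * Z.card := by
  obtain ⟨v, hv⟩ := hZ
  have h1 := h Z ⟨v, hv, by have := hd v hv; omega⟩
  have h2 : Z.card * 2 ≤ ∑ v ∈ Z, dg H v Z := by
    rw [← smul_eq_mul]; exact Finset.card_nsmul_le_sum _ _ _ hd
  have h3 : (Z.card : ℝ) * 2 ≤ ((∑ v ∈ Z, dg H v Z : ℕ) : ℝ) := by exact_mod_cast h2
  nlinarith

lemma girth_inj {κ : ℝ} (hκ0 : 0 ≤ κ) (hκ1 : κ ≤ 1) (h : CongB H κ) {β : ℕ} (hβ : κ * (β + 1) < 1) {p : ℕ → W}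
    (hadj : ∀ i, H.Adj (p i) (p (i+1))) (hnb : ∀ i, p i ≠ p (i+2)) :
    ∀ i j, i < j → j ≤ β → p i ≠ p j := by
  intro i0 j0 hij0 hj0 he0
  have hex : ∃ d, 0 < d ∧ ∃ i, i + d ≤ β ∧ p i = p (i + d) :=
    ⟨j0 - i0, by omega, i0, by omega, by rw [he0]; congr 1; omega⟩
  obtain ⟨d, hd⟩ : ∃ d, d = Nat.find hex := ⟨_, rfl⟩
  obtain ⟨hd0, i, hib, hpi⟩ := Nat.find_spec hex
  have hmin : ∀ e, 0 < e → e < d → ∀ i, i + e ≤ β → p i ≠ p (i + e) := by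
    intro e he hed i hi heq
    exact Nat.find_min hex (hd ▸ hed) ⟨he, i, hi, heq⟩
  rw [← hd] at hd0 hib hpi
  obtain ⟨Z, hZ⟩ : ∃ Z, Z = (Finset.range d).image (fun e => p (i + e)) := ⟨_, rfl⟩
  have hmem : ∀ e < d, p (i + e) ∈ Z := fun e he => by
    rw [hZ]; exact Finset.mem_image_of_mem _ (Finset.mem_range.2 he)
  have hd1 : d ≠ 1 := by rintro rfl; exact (hadj i).ne hpi
  have hd2 : d ≠ 2 := by rintro rfl; exact hnb i hpi
  have hdeg : ∀ v ∈ Z, 2 ≤ dg H v Z := by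
    intro v hv
    rw [hZ, Finset.mem_image] at hv
    obtain ⟨e, he, rfl⟩ := hv
    rw [Finset.mem_range] at he
    have hsucc : p (i + e + 1) ∈ Z := by
      rcases Nat.lt_or_ge (e+1) d with h | h
      · exact hmem _ h
      · have : i + e + 1 = i + d := by omega
        rw [this, ← hpi]; exact hmem 0 hd0
    rcases Nat.eq_zero_or_pos e with h0 | h0
    · subst h0
      refine two_le_dg hsucc (hmem (d-1) (by omega)) ?_ (hadj _) ?_
      · have := hmin (d-2) (by omega) (by omega) (i+1) (by omega)
        have e : i + 1 + (d - 2) = i + (d - 1) := by omega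
        rwa [e] at this
      · have := hadj (i + (d-1))
        have e : i + (d - 1) + 1 = i + d := by omega
        rw [e, ← hpi] at this
        exact this.symm
    · obtain ⟨e', rfl⟩ : ∃ e', e = e' + 1 := ⟨e - 1, by omega⟩
      refine two_le_dg hsucc (hmem e' (by omega)) (hnb (i + e')).symm (hadj _) (hadj _).symm
  have h1 := thin hκ1 h ⟨_, hmem 0 hd0⟩ hdeg
  have h2 : Z.card ≤ d := by rw [hZ]; exact Finset.card_image_le.trans (by simp)
  have h3 : (Z.card : ℝ) ≤ β + 1 := by exact_mod_cast (by omega : Z.card ≤ β + 1)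
  nlinarith

lemma girth_ind {κ : ℝ} (hκ0 : 0 ≤ κ) (hκ1 : κ ≤ 1) (h : CongB H κ) {β : ℕ} (hβ : κ * (β + 1) < 1) {p : ℕ → W}
    (hadj : ∀ i, H.Adj (p i) (p (i+1))) (hnb : ∀ i, p i ≠ p (i+2)) :
    ∀ i j, i + 1 < j → j ≤ β → ¬ H.Adj (p i) (p j) := by
  intro i j hij hj hc
  have hinj := girth_inj hκ0 hκ1 h hβ hadj hnb
  obtain ⟨Z, hZ⟩ : ∃ Z, Z = (Finset.Icc i j).image p := ⟨_, rfl⟩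
  have hmem : ∀ e, i ≤ e → e ≤ j → p e ∈ Z := fun e h1 h2 => by
    rw [hZ]; exact Finset.mem_image_of_mem _ (Finset.mem_Icc.2 ⟨h1, h2⟩)
  have hdeg : ∀ v ∈ Z, 2 ≤ dg H v Z := by
    intro v hv
    rw [hZ, Finset.mem_image] at hv
    obtain ⟨e, he, rfl⟩ := hv
    rw [Finset.mem_Icc] at he
    rcases he.1.lt_or_eq with h1 | h1
    · obtain ⟨x, rfl⟩ : ∃ x, e = x + 1 := ⟨e - 1, by omega⟩
      rcases he.2.lt_or_eq with h2 | h2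
      · exact two_le_dg (hmem x (by omega) (by omega)) (hmem (x+2) (by omega) (by omega)) (hnb x) (hadj x).symm (hadj _)
      · rw [h2]
        refine two_le_dg (hmem x (by omega) (by omega)) (hmem i (by omega) (by omega)) (hinj i x (by omega) (by omega)).symm ?_ hc.symm
        rw [← h2]; exact (hadj x).symm
    · subst h1
      exact two_le_dg (hmem (i+1) (by omega) (by omega)) (hmem j (by omega) le_rfl) (hinj _ _ hij hj) (hadj i) hc
  have h1 := thin hκ1 h ⟨_, hmem i le_rfl (by omega)⟩ hdeg
  have h2 : Z.card ≤ j + 1 - i := by rw [hZ]; exact Finset.card_image_le.trans (by simp)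
  have h3 : (Z.card : ℝ) ≤ β + 1 := by exact_mod_cast (by omega : Z.card ≤ β + 1)
  nlinarith

lemma exists_other {S : Finset W} (hmin : ∀ v ∈ S, 2 ≤ dg H v S) (a b : W) (hb : b ∈ S) :
    ∃ w ∈ S, H.Adj b w ∧ w ≠ a := by
  obtain ⟨w, hw, hne⟩ := Finset.exists_mem_ne (s := S.filter (fun z => H.Adj b z)) (hmin b hb) a
  rw [Finset.mem_filter] at hw
  exact ⟨w, hw.1, hw.2, hne⟩

lemma exists_walk {S : Finset W} (hmin : ∀ v ∈ S, 2 ≤ dg H v S) (a b : W) (ha : a ∈ S) (hb : b ∈ S)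
    (hab : H.Adj a b) : ∃ w : ℕ → W, w 0 = a ∧ w 1 = b ∧ (∀ k, w k ∈ S) ∧ (∀ k, H.Adj (w k) (w (k+1))) ∧
      ∀ k, w k ≠ w (k+2) := by
  have hno := fun a b hb => exists_other hmin a b hb
  choose! nxt h1 h2 h3 using hno
  obtain ⟨ψ, hψ⟩ : ∃ ψ : W × W → W × W, ψ = fun x => (x.2, nxt x.1 x.2) := ⟨_, rfl⟩
  obtain ⟨d, hd⟩ : ∃ d : ℕ → W × W, d = fun k => ψ^[k] (a, b) := ⟨_, rfl⟩
  have hs : ∀ k, d (k+1) = ((d k).2, nxt (d k).1 (d k).2) := by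
    intro k; rw [hd]; simp only [Function.iterate_succ', Function.comp]; rw [hψ]
  have hd0 : d 0 = (a, b) := by rw [hd]; rfl
  have hall : ∀ k, (d k).1 ∈ S ∧ (d k).2 ∈ S ∧ H.Adj (d k).1 (d k).2 := by
    intro k
    induction k with
    | zero => rw [hd0]; exact ⟨ha, hb, hab⟩
    | succ k ih => rw [hs]; exact ⟨ih.2.1, h1 _ _ ih.2.1, h2 _ _ ih.2.1⟩
  refine ⟨fun k => (d k).1, by simp [hd0], by simp [hs, hd0], fun k => (hall k).1, fun k => ?_, fun k => ?_⟩
  · have := (hall k).2.2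
    simpa [hs] using this
  · have := h3 (d k).1 (d k).2 (hall k).2.1
    simp only [hs]
    exact this.symm

set_option maxHeartbeats 800000 in
lemma exists_thread {κ : ℝ} (h : CongB H κ) {β : ℕ} (hβ2 : 2 ≤ β) (hκ : 3 * κ * (β - 1) ≤ 1) (hκ0 : 0 ≤ κ)
    {S : Finset W} (hS : S.Nonempty)
    (hmin : ∀ v ∈ S, 2 ≤ dg H v S) : ∃ p : ℕ → W, (∀ i, p i ∈ S) ∧ (∀ i, H.Adj (p i) (p (i+1))) ∧
      (∀ i, p i ≠ p (i+2)) ∧ ∀ i, 0 < i → i < β → dg H (p i) S = 2 := by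
  by_contra hcon
  have hk : ∀ a b, a ∈ S → b ∈ S → H.Adj a b → dg H a S = 2 → ∃ (w : ℕ → W) (k : ℕ), k < β - 2 ∧
      w 0 = a ∧ w 1 = b ∧ (∀ k, w k ∈ S) ∧ (∀ k, H.Adj (w k) (w (k+1))) ∧ (∀ k, w k ≠ w (k+2)) ∧
      (∀ i ≤ k, dg H (w i) S = 2) ∧ dg H (w (k+1)) S ≠ 2 := by
    intro a b ha hb hab hda
    obtain ⟨w, hw0, hw1, hwS, hwa, hwn⟩ := exists_walk hmin a b ha hb hab
    have hex : ∃ i, i < β - 1 ∧ dg H (w i) S ≠ 2 := by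
      by_contra hall
      push Not at hall
      obtain ⟨z, hz, hza, hzb⟩ := exists_other hmin b a ha
      refine hcon ⟨fun i => if i = 0 then z else w (i-1), ?_, ?_, ?_, ?_⟩
      · intro i; dsimp only; split_ifs
        · exact hz
        · exact hwS _
      · intro i
        rcases i with _ | i
        · simp [hw0]; exact hza.symm
        · simp; exact hwa i
      · intro i
        rcases i with _ | i
        · simp [hw1]; exact hzb
        · simp; exact hwn i
      · intro i hi hib
        obtain ⟨j, rfl⟩ : ∃ j, i = j + 1 := ⟨i - 1, by omega⟩
        simp; exact hall j (by omega)
    obtain ⟨hi1, hi2⟩ := Nat.find_spec hex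
    have hmn : ∀ j < Nat.find hex, dg H (w j) S = 2 := by
      intro j hj
      by_contra hne
      exact Nat.find_min hex hj ⟨by omega, hne⟩
    obtain ⟨m, hm⟩ : ∃ m, m = Nat.find hex := ⟨_, rfl⟩
    rw [← hm] at hi1 hi2 hmn
    have hm0 : m ≠ 0 := by
      intro h0; rw [h0, hw0] at hi2; exact hi2 hda
    obtain ⟨k, rfl⟩ : ∃ k, m = k + 1 := ⟨m - 1, by omega⟩
    exact ⟨w, k, by omega, hw0, hw1, hwS, hwa, hwn, fun i hi => hmn i (by omega), hi2⟩
  choose! w k hkb hw0 hw1 hwS hwa hwn hdeg hend using hk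
  obtain ⟨S2, hS2⟩ : ∃ S2, S2 = S.filter (fun v => dg H v S = 2) := ⟨_, rfl⟩
  obtain ⟨B, hB⟩ : ∃ B, B = S.filter (fun v => ¬ dg H v S = 2) := ⟨_, rfl⟩
  obtain ⟨N, hN⟩ : ∃ N : W → Finset W, N = fun v => S.filter (fun z => H.Adj v z) := ⟨_, rfl⟩
  have hNc : ∀ v, (N v).card = dg H v S := fun v => by rw [hN]; rfl
  have hNm : ∀ v z, z ∈ N v ↔ z ∈ S ∧ H.Adj v z := fun v z => by rw [hN]; exact Finset.mem_filter
  have hE2c : (S2.sigma (fun v => N v)).card = ∑ v ∈ S2, dg H v S := by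
    rw [Finset.card_sigma]; exact Finset.sum_congr rfl (fun v _ => hNc v)
  have hYc : (B.sigma (fun v => N v)).card = ∑ v ∈ B, dg H v S := by
    rw [Finset.card_sigma]; exact Finset.sum_congr rfl (fun v _ => hNc v)
  have hE2m : ∀ x ∈ S2.sigma (fun v => N v), x.1 ∈ S ∧ x.2 ∈ S ∧ H.Adj x.1 x.2 ∧ dg H x.1 S = 2 := by
    intro x hx
    rw [Finset.mem_sigma, hNm, hS2, Finset.mem_filter] at hx
    exact ⟨hx.1.1, hx.2.1, hx.2.2, hx.1.2⟩
  have hcard : (S2.sigma (fun v => N v)).card ≤ (Finset.range (β-2) ×ˢ (B.sigma (fun v => N v))).card := by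
    refine Finset.card_le_card_of_injOn
      (fun x => (k x.1 x.2, (⟨w x.1 x.2 (k x.1 x.2 + 1), w x.1 x.2 (k x.1 x.2)⟩ : Σ _ : W, W))) ?_ ?_
    · intro x hx
      obtain ⟨m1, m2, m3, m4⟩ := hE2m x hx
      rw [Finset.mem_coe, Finset.mem_product, Finset.mem_range, Finset.mem_sigma, hNm, hB, Finset.mem_filter]
      exact ⟨hkb _ _ m1 m2 m3 m4, ⟨hwS _ _ m1 m2 m3 m4 _, hend _ _ m1 m2 m3 m4⟩, hwS _ _ m1 m2 m3 m4 _,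
        (hwa _ _ m1 m2 m3 m4 _).symm⟩
    · intro x hx y hy hxy
      obtain ⟨m1, m2, m3, m4⟩ := hE2m x hx
      obtain ⟨n1, n2, n3, n4⟩ := hE2m y hy
      have hxk := Prod.ext_iff.1 hxy
      obtain ⟨ek, es⟩ := hxk
      simp only at ek es
      have es1 := congrArg Sigma.fst es
      have es2 : w x.1 x.2 (k x.1 x.2) = w y.1 y.2 (k y.1 y.2) := by
        have := (Sigma.mk.inj_iff.1 es).2
        exact eq_of_heq this
      simp only at es1
      rw [← ek] at es1 es2
      have hback : ∀ i ≤ k x.1 x.2, w x.1 x.2 (k x.1 x.2 - i) = w y.1 y.2 (k x.1 x.2 - i) ∧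
          w x.1 x.2 (k x.1 x.2 - i + 1) = w y.1 y.2 (k x.1 x.2 - i + 1) := by
        intro i
        induction i with
        | zero => intro _; exact ⟨es2, es1⟩
        | succ i ih =>
          intro hi
          obtain ⟨i1, i2⟩ := ih (by omega)
          obtain ⟨j, hj⟩ : ∃ j, k x.1 x.2 - i = j + 1 := ⟨k x.1 x.2 - i - 1, by omega⟩
          have hj' : k x.1 x.2 - (i + 1) = j := by omega
          rw [hj] at i1 i2
          rw [hj']
          refine ⟨?_, i1⟩
          have a1 := hwa _ _ m1 m2 m3 m4 j
          have a2 := hwa _ _ m1 m2 m3 m4 (j+1)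
          have b1 := hwa _ _ n1 n2 n3 n4 j
          rw [← i1] at b1
          rcases only_two (hdeg _ _ m1 m2 m3 m4 (j+1) (by omega)) (hwS _ _ m1 m2 m3 m4 j)
            (hwS _ _ m1 m2 m3 m4 (j+2)) (hwn _ _ m1 m2 m3 m4 j) a1.symm a2
            (hwS _ _ n1 n2 n3 n4 j) b1.symm with e | e
          · exact e.symm
          · exfalso
            exact hwn _ _ n1 n2 n3 n4 j (e.trans i2)
      obtain ⟨f1, f2⟩ := hback (k x.1 x.2) le_rfl
      rw [Nat.sub_self] at f1 f2
      rw [hw0 _ _ m1 m2 m3 m4, hw0 _ _ n1 n2 n3 n4] at f1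
      rw [zero_add, hw1 _ _ m1 m2 m3 m4, hw1 _ _ n1 n2 n3 n4] at f2
      obtain ⟨x1, x2⟩ := x
      obtain ⟨y1, y2⟩ := y
      simp only at f1 f2
      rw [f1, f2]
  rw [Finset.card_product, Finset.card_range, hE2c, hYc] at hcard
  have hsumS : ∑ v ∈ S, dg H v S = ∑ v ∈ S2, dg H v S + ∑ v ∈ B, dg H v S := by
    rw [hS2, hB]; exact (Finset.sum_filter_add_sum_filter_not _ _ _).symm
  have hcardS : S.card = S2.card + B.card := by
    rw [hS2, hB]; exact (Finset.card_filter_add_card_filter_not _).symm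
  have hs2 : ∑ v ∈ S2, dg H v S = S2.card * 2 := by
    rw [← smul_eq_mul]; apply Finset.sum_eq_card_nsmul
    intro v hv; rw [hS2, Finset.mem_filter] at hv; exact hv.2
  have hsB : B.card * 3 ≤ ∑ v ∈ B, dg H v S := by
    rw [← smul_eq_mul]; apply Finset.card_nsmul_le_sum
    intro v hv; rw [hB, Finset.mem_filter] at hv
    have := hmin v hv.1
    have := hv.2
    omega
  obtain ⟨v, hv⟩ := hS
  have hmain := h S ⟨v, hv, by have := hmin v hv; omega⟩
  rw [hsumS, hs2] at hmain
  rw [hs2] at hcard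
  obtain ⟨D, hD⟩ : ∃ D, D = ∑ v ∈ B, dg H v S := ⟨_, rfl⟩
  rw [← hD] at hmain hcard hsB
  rw [hcardS] at hmain
  push_cast at hmain
  have r1 : (S2.card : ℝ) * 2 ≤ ((β:ℝ) - 2) * D := by
    have : ((S2.card * 2 : ℕ) : ℝ) ≤ (((β - 2) * D : ℕ) : ℝ) := by exact_mod_cast hcard
    rw [Nat.cast_mul, Nat.cast_mul, Nat.cast_sub hβ2] at this
    exact_mod_cast this
  have r2 : (B.card : ℝ) * 3 ≤ D := by exact_mod_cast hsB
  have hD0 : (0:ℝ) ≤ D := by positivity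
  nlinarith [mul_le_mul_of_nonneg_left r1 hκ0, mul_le_mul_of_nonneg_right hκ hD0]

lemma buildable {κ : ℝ} (h : CongB H κ) (hκ0 : 0 ≤ κ) (hκ1 : κ ≤ 1) {β : ℕ} (hβ2 : 2 ≤ β)
    (hκ : 3 * κ * (β - 1) ≤ 1) (hβ : κ * (β + 1) < 1) [Finite W] (m : ℕ) :
    ∀ S : Finset W, S.card = m → WeaklyBuildableOn H β (S : Set W) := by
  induction m using Nat.strong_induction_on with
  | _ m ih =>
  intro S hSm
  rcases S.eq_empty_or_nonempty with rfl | hS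
  · rw [Finset.coe_empty]; exact WeaklyBuildableOn.empty
  by_cases hmin : ∀ v ∈ S, 2 ≤ dg H v S
  · obtain ⟨p, hpS, hpa, hpn, hpd⟩ := exists_thread h hβ2 hκ hκ0 hS hmin
    have hinj := girth_inj hκ0 hκ1 h hβ hpa hpn
    have hind := girth_ind hκ0 hκ1 h hβ hpa hpn
    obtain ⟨Q, hQ⟩ : ∃ Q, Q = (Finset.Ioo 0 β).image p := ⟨_, rfl⟩
    have hQm : ∀ x, x ∈ Q ↔ ∃ a, (0 < a ∧ a < β) ∧ p a = x := by
      intro x; rw [hQ, Finset.mem_image]; simp only [Finset.mem_Ioo]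
    have hlt : (S \ Q).card < m := by
      rw [← hSm]
      apply Finset.card_lt_card
      refine ⟨Finset.sdiff_subset, fun hsub => ?_⟩
      have := hsub (hpS 1)
      rw [Finset.mem_sdiff, hQm] at this
      exact this.2 ⟨1, ⟨by omega, by omega⟩, rfl⟩
    have hWB := ih _ hlt (S \ Q) rfl
    have hne : ∀ i ≤ β, ∀ j ≤ β, p i = p j → i = j := by
      intro i hi j hj hij
      rcases lt_trichotomy i j with h | h | h
      · exact absurd hij (hinj i j h hj)
      · exact h
      · exact absurd hij.symm (hinj j i h hi)
    have hh : IsHandle H ((S \ Q : Finset W) : Set W) β p := by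
      refine ⟨hβ2, hne, ?_, ?_, ?_, fun i _ => hpa i, hind, ?_⟩
      · rw [Finset.mem_coe, Finset.mem_sdiff, hQm]
        refine ⟨hpS 0, ?_⟩
        rintro ⟨a, ⟨ha, hab⟩, e⟩
        have := hne a hab.le 0 (by omega) e; omega
      · rw [Finset.mem_coe, Finset.mem_sdiff, hQm]
        refine ⟨hpS β, ?_⟩
        rintro ⟨a, ⟨ha, hab⟩, e⟩
        have := hne a hab.le β le_rfl e; omega
      · intro i hi hib hmem
        rw [Finset.mem_coe, Finset.mem_sdiff, hQm] at hmem
        exact hmem.2 ⟨i, ⟨hi, hib⟩, rfl⟩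
      · intro i hi hib w hw hadj
        have hwS : w ∈ S := by
          rcases hw with hw | ⟨j, _, rfl⟩
          · rw [Finset.mem_coe, Finset.mem_sdiff] at hw; exact hw.1
          · exact hpS j
        obtain ⟨j, rfl⟩ : ∃ j, i = j + 1 := ⟨i - 1, by omega⟩
        exact only_two (hpd (j+1) hi hib) (hpS j) (hpS (j+2)) (hpn j) (hpa j).symm (hpa _) hwS hadj
    have hres := WeaklyBuildableOn.handle _ β p hWB hh le_rfl
    have : ((S \ Q : Finset W) : Set W) ∪ {w | ∃ j ≤ β, w = p j} = (S : Set W) := by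
      ext x
      rw [Set.mem_union, Finset.mem_coe, Finset.mem_coe, Finset.mem_sdiff, hQm, Set.mem_setOf_eq]
      constructor
      · rintro (h | ⟨j, _, rfl⟩)
        · exact h.1
        · exact hpS j
      · intro hx
        by_cases hxQ : ∃ a, (0 < a ∧ a < β) ∧ p a = x
        · right; obtain ⟨a, ⟨_, hab⟩, rfl⟩ := hxQ; exact ⟨a, hab.le, rfl⟩
        · left; exact ⟨hx, hxQ⟩
    rwa [this] at hres
  · push Not at hmin
    obtain ⟨v, hv, hvd⟩ := hmin
    have hlt : (S.erase v).card < m := by rw [← hSm]; exact Finset.card_erase_lt_of_mem hv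
    have hWB := ih _ hlt (S.erase v) rfl
    have hres := WeaklyBuildableOn.subleaf _ v (by simp) (by
      have h1 : (((S.erase v : Finset W) : Set W) ∩ H.neighborSet v) ⊆
          ((S.filter (fun z => H.Adj v z) : Finset W) : Set W) := by
        intro x hx
        rw [Finset.coe_filter]
        exact ⟨Finset.mem_of_mem_erase hx.1, hx.2⟩
      have h2 := Set.ncard_le_ncard h1 (Set.toFinite _)
      rw [Set.ncard_coe_finset] at h2
      have h3 : (S.filter (fun z => H.Adj v z)).card = dg H v S := rfl
      omega) hWB
    have : insert v ((S.erase v : Finset W) : Set W) = (S : Set W) := by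
      rw [← Finset.coe_insert, Finset.insert_erase hv]
    rwa [this] at hres

lemma main_aux (c : ℝ) (hc : 0 < c) [Fintype W] (H : SimpleGraph W)
    (hcong : congestion H ≤ c / (9 + 15 * c)) :
    ∃ ε : ℝ, 0 < ε ∧ ∀ {V : Type} [Fintype V] (G : SimpleGraph V),
      1 < Fintype.card V → EpsSparse G ε →
      Coherent G (ε * (Fintype.card V : ℝ) ^ (1 - c))
        (ε * (Fintype.card V : ℝ) ^ (1 - c)) →
      Contains G H := by
  rcases le_or_gt 1 c with hc1 | hc1
  · exact finish_ge c hc1 H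
  obtain ⟨R, hRdef⟩ : ∃ R, R = ⌊1 / c⌋₊ := ⟨_, rfl⟩
  have hRc : (R:ℝ) * c ≤ 1 := by
    rw [← le_div_iff₀ hc, hRdef]; exact Nat.floor_le (by positivity)
  have hRc' : 1 < (R + 1) * c := by
    rw [← div_lt_iff₀ hc, hRdef]; exact Nat.lt_floor_add_one _
  have hR : 1 ≤ R := by
    rw [hRdef]; apply Nat.le_floor; rw [Nat.cast_one, le_div_iff₀ hc]; linarith
  have hden : 0 < 9 + 15 * c := by linarith
  obtain ⟨κ, hκ⟩ : ∃ κ, κ = c / (9 + 15 * c) := ⟨_, rfl⟩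
  have hκe : κ * (9 + 15 * c) = c := by rw [hκ]; field_simp
  have hκ0 : 0 ≤ κ := by rw [hκ]; positivity
  have hκ1 : κ ≤ 1 := by rw [hκ, div_le_one hden]; linarith
  rw [← hκ] at hcong
  have hβ1 : 3 * κ * (((3 * R + 3 : ℕ) : ℝ) - 1) ≤ 1 := by
    push_cast
    have : 3 * c * (3 * R + 3 - 1) ≤ 9 + 15 * c := by nlinarith
    have e : 3 * κ * (3 * R + 3 - 1) = 3 * c * (3 * R + 3 - 1) / (9 + 15 * c) := by rw [hκ]; ring
    rw [e, div_le_one hden]; exact this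
  have hβ2 : κ * (((3 * R + 3 : ℕ) : ℝ) + 1) < 1 := by
    push_cast
    have : c * (3 * R + 3 + 1) < 9 + 15 * c := by nlinarith
    have e : κ * (3 * R + 3 + 1) = c * (3 * R + 3 + 1) / (9 + 15 * c) := by rw [hκ]; ring
    rw [e, div_lt_one hden]; exact this
  have hWB := buildable (congB_of hcong) hκ0 hκ1 (by omega : 2 ≤ 3 * R + 3) hβ1 hβ2 _ Finset.univ rfl
  rw [Finset.coe_univ] at hWB
  exact finish_lt c hc hc1 H R hR (by nlinarith) (PP_of_buildable H R c hR hc1 _ hWB)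

end Aux11

/-- if `H` has congestion at most `c/(9+15c)`, then there is `ε > 0`
such that every `ε`-sparse `(ε|G|^{1-c}, ε|G|^{1-c})`-coherent graph `G` with
`|G| > 1` contains `H`. -/
theorem statement_3 (c : ℝ) (hc : 0 < c) {W : Type} [Fintype W] (H : SimpleGraph W)
    (hcong : congestion H ≤ c / (9 + 15 * c)) :
    ∃ ε : ℝ, 0 < ε ∧ ∀ {V : Type} [Fintype V] (G : SimpleGraph V),
      1 < Fintype.card V → EpsSparse G ε →
      Coherent G (ε * (Fintype.card V : ℝ) ^ (1 - c))
        (ε * (Fintype.card V : ℝ) ^ (1 - c)) →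
      Contains G H := by
  exact main_aux c hc H hcong

end PurePairs
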